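/- arXiv:2209.10659 — 5 statements merged into one kernel-verified Lean document; each statement's English description precedes it below -/
import Mathlib

section
/- Let k be a number field and G a finite abelian group. Then the rational number ϱ(k,G) := Σ_{g ∈ G, g ≠ 1} (ord g)/[k(μ_{ord g}) : k] is a non-negative integer (and it is positive when G is non-trivial). -/
theorem aux_finrank (k : Type*) [Field k] [NumberField k] (n : ℕ) (hn : n ≠ 0) :
    Module.finrank k
      ↥(IntermediateField.adjoin k {x : AlgebraicClosure k | x ^ n = 1}) ∣ n.totient ∧
    0 < Module.finrank k
      ↥(IntermediateField.adjoin k {x : AlgebraicClosure k | x ^ n = 1}) := by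
  have : NeZero n := ⟨hn⟩
  have hE := IntermediateField.isCyclotomicExtension_adjoin_of_exists_isPrimitiveRoot {n} k
    (AlgebraicClosure k) (by
      intro m hm hm0
      have : NeZero m := ⟨hm0⟩
      have : NeZero (m : AlgebraicClosure k) := ⟨Nat.cast_ne_zero.mpr hm0⟩
      exact HasEnoughRootsOfUnity.exists_primitiveRoot (AlgebraicClosure k) m)
  have hs : {b : AlgebraicClosure k | ∃ m ∈ ({n} : Set ℕ), m ≠ 0 ∧ b ^ m = 1} =
      {x : AlgebraicClosure k | x ^ n = 1} := by
    ext x; simp [hn]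
  rw [hs] at hE
  generalize IntermediateField.adjoin k {x : AlgebraicClosure k | x ^ n = 1} = E at hE
  have := IsCyclotomicExtension.finiteDimensional {n} k E
  have := IsCyclotomicExtension.isGalois {n} k E
  refine ⟨?_, Module.finrank_pos⟩
  rw [← IsGalois.card_aut_eq_finrank, ← ZMod.card_units_eq_totient, ← Nat.card_eq_fintype_card]
  exact Subgroup.card_dvd_of_injective _
    ((IsCyclotomicExtension.zeta_spec n k E).autToPow_injective k)

theorem aux_fiber (G : Type*) [CommGroup G] [Fintype G] [DecidableEq G]
    [DecidableEq (Subgroup G)] (g : G) :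
    (Finset.univ.filter (fun h : G => Subgroup.zpowers h = Subgroup.zpowers g)).card =
      (orderOf g).totient := by
  classical
  have h1 := IsCyclic.card_orderOf_eq_totient (α := Subgroup.zpowers g) (d := orderOf g)
    (by rw [← Nat.card_eq_fintype_card, Nat.card_zpowers])
  rw [← h1]
  symm
  refine Finset.card_bij (fun a _ => (a : G)) ?_ ?_ ?_
  · intro a ha
    simp only [Finset.mem_filter, Finset.mem_univ, true_and] at ha ⊢
    apply Subgroup.eq_of_le_of_card_ge
    · simp
    · rw [Nat.card_zpowers, Nat.card_zpowers, Subgroup.orderOf_coe, ha]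
  · intro a _ b _ h
    exact Subtype.ext h
  · intro b hb
    simp only [Finset.mem_filter, Finset.mem_univ, true_and] at hb
    refine ⟨⟨b, hb ▸ Subgroup.mem_zpowers b⟩, ?_, rfl⟩
    simp only [Finset.mem_filter, Finset.mem_univ, true_and, Subgroup.orderOf_mk]
    rw [← Nat.card_zpowers, hb, Nat.card_zpowers]

theorem aux_sum (G : Type*) [CommGroup G] [Fintype G] [DecidableEq G] (f : ℕ → ℚ)
    (hf : ∀ d, d ≠ 0 → ∃ m : ℕ, (d.totient : ℚ) * f d = m) :
    ∃ n : ℕ, ∑ g ∈ Finset.univ.filter (fun g : G => g ≠ 1), f (orderOf g) = (n : ℚ) := by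
  classical
  rw [← Finset.sum_fiberwise_of_maps_to
    (t := (Finset.univ.filter (fun g : G => g ≠ 1)).image Subgroup.zpowers)
    (g := Subgroup.zpowers) (fun x hx => Finset.mem_image_of_mem _ hx)]
  have key : ∀ H ∈ (Finset.univ.filter (fun g : G => g ≠ 1)).image Subgroup.zpowers,
      ∃ m : ℕ, ∑ g ∈ (Finset.univ.filter (fun g : G => g ≠ 1)) with Subgroup.zpowers g = H,
        f (orderOf g) = (m : ℚ) := by
    intro H hH
    obtain ⟨g, hg, rfl⟩ := Finset.mem_image.mp hH
    simp only [Finset.mem_filter, Finset.mem_univ, true_and] at hg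
    obtain ⟨m, hm⟩ := hf (orderOf g) (orderOf_pos g).ne'
    refine ⟨m, ?_⟩
    have e : (Finset.univ.filter (fun g : G => g ≠ 1)).filter
        (fun h => Subgroup.zpowers h = Subgroup.zpowers g) =
        Finset.univ.filter (fun h : G => Subgroup.zpowers h = Subgroup.zpowers g) := by
      ext h
      simp only [Finset.mem_filter, Finset.mem_univ, true_and, and_iff_right_iff_imp]
      rintro hh rfl
      rw [Subgroup.zpowers_one_eq_bot] at hh
      exact hg (Subgroup.zpowers_eq_bot.mp hh.symm)
    rw [e, ← hm, ← aux_fiber G g, ← nsmul_eq_mul]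
    apply Finset.sum_eq_card_nsmul
    intro h hh
    simp only [Finset.mem_filter, Finset.mem_univ, true_and] at hh
    rw [← Nat.card_zpowers, hh, Nat.card_zpowers]
  choose! c hc using key
  exact ⟨∑ H ∈ (Finset.univ.filter (fun g : G => g ≠ 1)).image Subgroup.zpowers, c H, by
    rw [Nat.cast_sum]; exact Finset.sum_congr rfl hc⟩


/-- For a number field `k` and a finite abelian group `G`, the quantity
`ϱ(k,G) = ∑_{g ∈ G, g ≠ 1} (ord g)/[k(μ_{ord g}) : k]` is a non-negative integer, positive
when `G` is non-trivial. Here `k(μ_n)` is the subfield of a fixed algebraic closure of `k`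
obtained by adjoining all `n`-th roots of unity. -/
theorem stmt_0 (k : Type*) [Field k] [NumberField k]
    (G : Type*) [CommGroup G] [Fintype G] [DecidableEq G] :
    ∃ n : ℕ,
      (∑ g ∈ Finset.univ.filter (fun g : G => g ≠ 1),
          (orderOf g : ℚ) /
            (Module.finrank k
              ↥(IntermediateField.adjoin k
                  {x : AlgebraicClosure k | x ^ (orderOf g) = 1}) : ℚ)) = (n : ℚ) ∧
      (Nontrivial G → 0 < n) := by
  obtain ⟨n, hn⟩ := aux_sum G (fun d => (d : ℚ) / (Module.finrank k
      ↥(IntermediateField.adjoin k {x : AlgebraicClosure k | x ^ d = 1}) : ℚ)) (by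
    intro d hd
    obtain ⟨⟨c, hc⟩, hpos⟩ := aux_finrank k d hd
    refine ⟨c * d, ?_⟩
    rw [hc]
    have : (Module.finrank k
      ↥(IntermediateField.adjoin k {x : AlgebraicClosure k | x ^ d = 1}) : ℚ) ≠ 0 :=
      Nat.cast_ne_zero.mpr hpos.ne'
    push_cast
    field_simp)
  refine ⟨n, hn, fun hG => ?_⟩
  rw [← Nat.cast_pos (α := ℚ), ← hn]
  obtain ⟨g, hg⟩ := exists_ne (1 : G)
  refine Finset.sum_pos (fun h _ => ?_) ⟨g, by simpa using hg⟩
  exact div_pos (Nat.cast_pos.mpr (orderOf_pos h))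
    (Nat.cast_pos.mpr (aux_finrank k _ (orderOf_pos h).ne').2)
end

section
/- Let k be a number field with a fixed algebraic closure k̄, let 𝒜 ⊆ k^× be a finitely generated subgroup, and for d ≥ 1 let k_d = k(μ_d, √[d]{𝒜}) ⊆ k̄. Let G be a non-trivial finite abelian group and let H be a proper subgroup of G. Then ϱ(k,H,𝒜) < ϱ(k,G,𝒜), where ϱ(k,G,𝒜) := Σ_{g ∈ G, g ≠ 1} (ord g)/[k_{ord g} : k]. -/
/-- The field `k_d = k(μ_d, √[d]{𝒜})`: the subfield of a fixed algebraic closure of `k`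
obtained by adjoining all `d`-th roots of unity and all `d`-th roots of all elements of the
subgroup `𝒜 ⊆ k^×`. -/
noncomputable def adjoinRootsOfSubgroup (k : Type*) [Field k] (𝒜 : Subgroup kˣ) (d : ℕ) :
    IntermediateField k (AlgebraicClosure k) :=
  IntermediateField.adjoin k
    ({x : AlgebraicClosure k | x ^ d = 1} ∪
      {x : AlgebraicClosure k | ∃ a ∈ 𝒜, x ^ d = algebraMap k (AlgebraicClosure k) (a : k)})

lemma finite_pow_eq_aux {K : Type*} [Field K] (d : ℕ) (hd : 0 < d) (c : K) :
    {x : K | x ^ d = c}.Finite := by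
  classical
  refine (Polynomial.nthRoots d c).toFinset.finite_toSet.subset ?_
  intro x hx
  simpa [Polynomial.mem_nthRoots hd] using hx

lemma finrank_pos_aux (k : Type*) [Field k] (𝒜 : Subgroup kˣ) (h𝒜 : 𝒜.FG) (d : ℕ) (hd : 0 < d) :
    0 < Module.finrank k ↥(adjoinRootsOfSubgroup k 𝒜 d) := by
  obtain ⟨S, hS⟩ := h𝒜
  set T : Set (AlgebraicClosure k) := {x | x ^ d = 1} ∪
    ⋃ a ∈ S, {x | x ^ d = algebraMap k (AlgebraicClosure k) (a : k)} with hT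
  have hTfin : T.Finite := (finite_pow_eq_aux d hd 1).union
    (S.finite_toSet.biUnion fun a _ => finite_pow_eq_aux d hd _)
  set F := IntermediateField.adjoin k T with hF
  have h1 : ∀ x : AlgebraicClosure k, x ^ d = 1 → x ∈ F := fun x hx =>
    IntermediateField.subset_adjoin k T (Or.inl hx)
  have key : ∀ a ∈ 𝒜, ∀ x : AlgebraicClosure k,
      x ^ d = algebraMap k (AlgebraicClosure k) (a : k) → x ∈ F := by
    intro a ha
    rw [← hS] at ha
    induction ha using Subgroup.closure_induction with
    | mem a ha =>
      intro x hx
      refine IntermediateField.subset_adjoin k T (Or.inr ?_)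
      simp only [Set.mem_iUnion]
      exact ⟨a, ha, hx⟩
    | one => intro x hx; exact h1 x (by simpa using hx)
    | mul a b _ _ iha ihb =>
      intro x hx
      obtain ⟨y, hy⟩ := IsAlgClosed.exists_pow_nat_eq
        (algebraMap k (AlgebraicClosure k) (a : k)) hd
      have ha0 : algebraMap k (AlgebraicClosure k) (a : k) ≠ 0 := by simp
      have hy0 : y ≠ 0 := by
        rintro rfl
        rw [zero_pow hd.ne'] at hy
        exact ha0 hy.symm
      have h2 : x / y ∈ F := ihb _ (by
        rw [div_pow, hx, hy, Units.val_mul, map_mul, mul_div_cancel_left₀ _ ha0])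
      have h3 := F.mul_mem h2 (iha y hy)
      rwa [div_mul_cancel₀ _ hy0] at h3
    | inv a _ iha =>
      intro x hx
      have := F.inv_mem (iha x⁻¹ (by simp [inv_pow, hx]))
      simpa using this
  have hle : adjoinRootsOfSubgroup k 𝒜 d ≤ F := by
    unfold adjoinRootsOfSubgroup
    rw [IntermediateField.adjoin_le_iff]
    rintro x (hx | ⟨a, ha, hx⟩)
    · exact h1 x hx
    · exact key a ha x hx
  haveI : Finite T := hTfin
  haveI : FiniteDimensional k F := IntermediateField.finiteDimensional_adjoin
    (fun x _ => Algebra.IsIntegral.isIntegral x)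
  haveI : FiniteDimensional k ↥(adjoinRootsOfSubgroup k 𝒜 d) :=
    FiniteDimensional.of_injective (IntermediateField.inclusion hle).toLinearMap
      (IntermediateField.inclusion hle).injective
  exact Module.finrank_pos

/-- Let `k` be a number field, `𝒜 ⊆ k^×` a finitely generated subgroup,
`G` a non-trivial finite abelian group and `H` a proper subgroup of `G`. Then
`ϱ(k,H,𝒜) < ϱ(k,G,𝒜)`, where `ϱ(k,G,𝒜) = ∑_{g ∈ G, g ≠ 1} (ord g)/[k_{ord g} : k]` and
`k_d = k(μ_d, √[d]{𝒜})`. -/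
theorem stmt_1 (k : Type*) [Field k] [NumberField k]
    (𝒜 : Subgroup kˣ) (h𝒜 : 𝒜.FG)
    (G : Type*) [CommGroup G] [Fintype G] [DecidableEq G] [Nontrivial G]
    (H : Subgroup G) [DecidablePred (· ∈ H)] (hH : H ≠ ⊤) :
    (∑ g ∈ Finset.univ.filter (fun g : G => g ∈ H ∧ g ≠ 1),
        (orderOf g : ℚ) /
          (Module.finrank k ↥(adjoinRootsOfSubgroup k 𝒜 (orderOf g)) : ℚ))
      <
    (∑ g ∈ Finset.univ.filter (fun g : G => g ≠ 1),
        (orderOf g : ℚ) /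
          (Module.finrank k ↥(adjoinRootsOfSubgroup k 𝒜 (orderOf g)) : ℚ)) := by
  have hpos : ∀ g : G, (0 : ℚ) < (orderOf g : ℚ) /
      (Module.finrank k ↥(adjoinRootsOfSubgroup k 𝒜 (orderOf g)) : ℚ) := fun g =>
    div_pos (by exact_mod_cast orderOf_pos g)
      (by exact_mod_cast finrank_pos_aux k 𝒜 h𝒜 _ (orderOf_pos g))
  obtain ⟨g, hg⟩ : ∃ g, g ∉ H := by
    by_contra! h
    exact hH ((Subgroup.eq_top_iff' H).2 h)
  have hg1 : g ≠ 1 := fun h => hg (h ▸ H.one_mem)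
  refine Finset.sum_lt_sum_of_subset (i := g) ?_ ?_ ?_ (hpos g) (fun j _ _ => (hpos j).le)
  · intro x hx
    simp only [Finset.mem_filter, Finset.mem_univ, true_and] at hx ⊢
    exact hx.2
  · simpa using hg1
  · simp [hg]
end

section
/- Let p be a prime, let F be a finite extension of ℚ_p, and let K/F be a finite Galois extension with abelian Galois group. Then the subgroup 𝒪_F^× ∩ N_{K/F}(K^×) has finite index in 𝒪_F^×, equal to the ramification index e(K/F). If moreover K/F is tamely ramified (i.e. p ∤ e(K/F)), then the quotient group 𝒪_F^×/(𝒪_F^× ∩ N_{K/F}(K^×)) is cyclic. -/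
/-- The unit group of the ring of integers (= integral closure of `ℤ_p`) of a `p`-adic field,
viewed as a subgroup of the unit group of the field: those units that are integral with
integral inverse. -/
def integerUnits (R F : Type*) [CommRing R] [Field F] [Algebra R F] : Subgroup Fˣ where
  carrier := {x : Fˣ | IsIntegral R ((x : Fˣ) : F) ∧ IsIntegral R (((x⁻¹ : Fˣ) : F))}
  one_mem' := by
    refine ⟨by simpa using isIntegral_one, ?_⟩
    simpa using (isIntegral_one : IsIntegral R (1 : F))
  mul_mem' := by
    rintro a b ⟨ha1, ha2⟩ ⟨hb1, hb2⟩
    constructor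
    · simpa using ha1.mul hb1
    · simpa [mul_comm] using ha2.mul hb2
  inv_mem' := by
    rintro a ⟨h1, h2⟩
    exact ⟨h2, by simpa using h1⟩

set_option linter.style.haveILetI false
set_option linter.unusedSectionVars false
namespace LCF
variable (p : ℕ) [Fact p.Prime]
section basic
variable (F : Type*) [Field F] [Algebra ℚ_[p] F] [FiniteDimensional ℚ_[p] F]

noncomputable def nv : F →*₀ ℝ where
  toFun x := spectralNorm ℚ_[p] F x
  map_zero' := spectralNorm_zero
  map_one' := spectralNorm_one
  map_mul' x y := by
    have := spectralAlgNorm_mul (K := ℚ_[p]) (L := F) x y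
    simpa [spectralAlgNorm_def] using this

variable {F}
lemma nv_def (x : F) : nv p F x = spectralNorm ℚ_[p] F x := rfl

lemma nv_nonneg (x : F) : 0 ≤ nv p F x := spectralNorm_nonneg x

lemma nv_add_le (x y : F) : nv p F (x + y) ≤ max (nv p F x) (nv p F y) :=
  isNonarchimedean_spectralNorm x y

lemma nv_neg (x : F) : nv p F (-x) = nv p F x :=
  spectralNorm_neg (Algebra.IsAlgebraic.isAlgebraic x)

lemma nv_sub_le (x y : F) : nv p F (x - y) ≤ max (nv p F x) (nv p F y) := by
  rw [sub_eq_add_neg, ← nv_neg p y]; exact nv_add_le p _ _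

lemma nv_sub_comm (x y : F) : nv p F (x - y) = nv p F (y - x) := by
  rw [← nv_neg, neg_sub]

lemma nv_pos {x : F} (hx : x ≠ 0) : 0 < nv p F x :=
  lt_of_le_of_ne (nv_nonneg p x) (Ne.symm ((map_ne_zero (nv p F)).2 hx))

lemma nv_units_pos (x : Fˣ) : 0 < nv p F (x : F) := nv_pos p x.ne_zero

lemma nv_sum_le {ι : Type*} (s : Finset ι) (f : ι → F) {c : ℝ} (hc : 0 ≤ c)
    (h : ∀ i ∈ s, nv p F (f i) ≤ c) : nv p F (∑ i ∈ s, f i) ≤ c := by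
  classical
  induction s using Finset.induction_on with
  | empty => simpa using hc
  | insert a s ha ih =>
    rw [Finset.sum_insert ha]
    refine (nv_add_le p _ _).trans (max_le (h _ (by simp)) (ih fun i hi => h i (by simp [hi])))

lemma nv_add_eq_left {x y : F} (h : nv p F y < nv p F x) : nv p F (x + y) = nv p F x := by
  apply le_antisymm
  · exact (nv_add_le p x y).trans (max_le le_rfl h.le)
  · by_contra hlt
    push Not at hlt
    have := nv_sub_le p (x + y) y
    rw [add_sub_cancel_right] at this
    rcases le_max_iff.1 this with h1 | h1 <;> linarith

lemma nv_algebraMap_base (x : ℚ_[p]) : nv p F (algebraMap ℚ_[p] F x) = ‖x‖ :=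
  spectralNorm_extends x

lemma nv_natCast_le (n : ℕ) : nv p F (n : F) ≤ 1 := by
  have := nv_algebraMap_base p (F := F) (n : ℚ_[p])
  rw [map_natCast] at this
  rw [this]
  exact_mod_cast Padic.norm_int_le_one (n : ℤ)

lemma nv_p : nv p F (p : F) = (p : ℝ)⁻¹ := by
  have := nv_algebraMap_base p (F := F) (p : ℚ_[p])
  rw [map_natCast] at this
  rw [this]; simp

lemma nv_p_lt : nv p F (p : F) < 1 := by
  rw [nv_p]
  have : (1 : ℝ) < p := by exact_mod_cast (Fact.out : p.Prime).one_lt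
  exact inv_lt_one_of_one_lt₀ this

lemma nv_p_pos : 0 < nv p F (p : F) := by
  rw [nv_p]
  have : (1 : ℝ) < p := by exact_mod_cast (Fact.out : p.Prime).one_lt
  positivity

lemma nv_natCast_eq_one {n : ℕ} (h : ¬ p ∣ n) : nv p F (n : F) = 1 := by
  have := nv_algebraMap_base p (F := F) (n : ℚ_[p])
  rw [map_natCast] at this
  rw [this]
  apply le_antisymm
  · exact_mod_cast Padic.norm_int_le_one (n : ℤ)
  · by_contra hlt
    push Not at hlt
    have h2 : ‖((n : ℤ) : ℚ_[p])‖ < 1 := by exact_mod_cast hlt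
    rw [Padic.norm_intCast_lt_one_iff] at h2
    exact h (by exact_mod_cast h2)

lemma nv_complete (a : ℕ → F) (C r : ℝ) (hC : 0 ≤ C) (hr0 : 0 ≤ r) (hr : r < 1)
    (h : ∀ k, nv p F (a (k+1) - a k) ≤ C * r ^ k) :
    ∃ l, ∀ k, nv p F (l - a k) ≤ C * r ^ k := by
  letI := spectralNorm.normedField ℚ_[p] F
  haveI : CompleteSpace F := spectralNorm.completeSpace ℚ_[p] F
  have hnorm : ∀ x : F, ‖x‖ = nv p F x := fun x => rfl
  have hcau : CauchySeq a := by
    refine cauchySeq_of_le_geometric r C hr (fun n => ?_)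
    rw [dist_comm, dist_eq_norm, hnorm]; exact h n
  obtain ⟨l, hl⟩ := cauchySeq_tendsto_of_complete hcau
  refine ⟨l, fun k => ?_⟩
  have hk : ∀ j, nv p F (a (k + j) - a k) ≤ C * r ^ k := by
    intro j
    induction j with
    | zero => simp; positivity
    | succ j ih =>
      have : a (k + (j+1)) - a k = (a (k + j + 1) - a (k+j)) + (a (k+j) - a k) := by
        rw [← add_assoc]; ring
      rw [this]
      refine (nv_add_le p _ _).trans (max_le ((h _).trans ?_) ih)
      gcongr ?_ * ?_
      exact pow_le_pow_of_le_one hr0 hr.le (by omega)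
  have h1 : Filter.Tendsto (fun j => ‖a (k + j) - a k‖) Filter.atTop (nhds ‖l - a k‖) := by
    refine (Filter.Tendsto.sub ?_ tendsto_const_nhds).norm
    have := (Filter.tendsto_add_atTop_iff_nat k).2 hl
    simpa [add_comm] using this
  exact le_of_tendsto h1 (Filter.Eventually.of_forall hk)

lemma nv_tb (c : ℝ) (hc : 0 < c) :
    ∃ S : Set F, S.Finite ∧ ∀ x, nv p F x ≤ 1 → ∃ s ∈ S, nv p F (x - s) < c := by
  letI := spectralNorm.normedField ℚ_[p] F
  letI : NormedSpace ℚ_[p] F := spectralNorm.normedSpace ℚ_[p] F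
  haveI : ProperSpace F := FiniteDimensional.proper ℚ_[p] F
  have hnorm : ∀ x : F, ‖x‖ = nv p F x := fun x => rfl
  have hcomp : IsCompact (Metric.closedBall (0 : F) 1) := isCompact_closedBall _ _
  obtain ⟨S, -, hS, hcov⟩ := hcomp.finite_cover_balls hc
  refine ⟨S, hS, fun x hx => ?_⟩
  have : x ∈ Metric.closedBall (0 : F) 1 := by simpa [hnorm] using hx
  obtain ⟨s, hs, hxs⟩ := by simpa using hcov this
  exact ⟨s, hs, by rwa [dist_eq_norm, hnorm] at hxs⟩

end basic

section tower
variable {F : Type*} [Field F] [Algebra ℚ_[p] F] [FiniteDimensional ℚ_[p] F]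
variable {K : Type*} [Field K] [Algebra ℚ_[p] K] [FiniteDimensional ℚ_[p] K]
variable [Algebra F K] [IsScalarTower ℚ_[p] F K]

lemma nv_algebraMap (x : F) : nv p K (algebraMap F K x) = nv p F x := by
  rw [nv_def, nv_def]
  unfold spectralNorm
  rw [minpoly.algebraMap_eq (algebraMap F K).injective]

lemma nv_aut (σ : K ≃ₐ[F] K) (x : K) : nv p K (σ x) = nv p K x := by
  have := spectralNorm_eq_of_equiv (K := ℚ_[p]) (L := K) (σ.restrictScalars ℚ_[p]) x
  rw [nv_def, nv_def]
  exact this.symm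
end tower

section integ
variable {F : Type*} [Field F] [Algebra ℚ_[p] F] [FiniteDimensional ℚ_[p] F]
    [Algebra ℤ_[p] F] [IsScalarTower ℤ_[p] ℚ_[p] F]

lemma isIntegral_iff (x : F) : IsIntegral ℤ_[p] x ↔ nv p F x ≤ 1 := by
  have hx : IsIntegral ℚ_[p] x := Algebra.IsIntegral.isIntegral x
  have hmon := minpoly.monic hx
  rw [nv_def, spectralNorm]
  constructor
  · intro h
    have := minpoly.isIntegrallyClosed_eq_field_fractions' ℚ_[p] h
    rw [spectralValue_le_one_iff hmon]
    intro n
    rw [this, Polynomial.coeff_map]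
    exact PadicInt.norm_le_one _
  · intro h
    rw [spectralValue_le_one_iff hmon] at h
    have hl : minpoly ℚ_[p] x ∈ Polynomial.lifts (algebraMap ℤ_[p] ℚ_[p]) := by
      rw [Polynomial.lifts_iff_coeff_lifts]
      intro n
      exact ⟨⟨_, h n⟩, rfl⟩
    obtain ⟨q, hq, -, hqm⟩ := Polynomial.lifts_and_natDegree_eq_and_monic hl hmon
    refine ⟨q, hqm, ?_⟩
    have := minpoly.aeval ℚ_[p] x
    rw [← hq, Polynomial.aeval_map_algebraMap] at this
    exact this
end integ
end LCF

set_option linter.style.haveILetI false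
set_option linter.unusedSectionVars false
namespace LCF
variable (p : ℕ) [Fact p.Prime]
section units
variable (F : Type*) [Field F] [Algebra ℚ_[p] F] [FiniteDimensional ℚ_[p] F]

noncomputable def nvU : Fˣ →* ℝˣ := Units.map (nv p F).toMonoidHom

noncomputable def uni : Subgroup Fˣ := (nvU p F).ker

noncomputable def gam : Subgroup ℝˣ := (nvU p F).range

variable {F}
@[simp] lemma nvU_val (x : Fˣ) : ((nvU p F x : ℝˣ) : ℝ) = nv p F (x : F) := rfl

lemma mem_uni {x : Fˣ} : x ∈ uni p F ↔ nv p F (x : F) = 1 := by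
  rw [uni, MonoidHom.mem_ker, ← Units.val_inj]; simp

lemma exists_unif : ∃ π : Fˣ, nv p F (π : F) < 1 ∧
    ∀ x : Fˣ, ∃ k : ℤ, nv p F (x : F) = nv p F (π : F) ^ k := by
  classical
  set c := nv p F (p : F) with hc
  have hc0 : 0 < c := nv_p_pos p
  have hc1 : c < 1 := nv_p_lt p
  obtain ⟨S, hS, hcov⟩ := nv_tb p (F := F) c hc0
  let Z : Set ℝ := {r | ∃ x : F, nv p F x = r ∧ c ≤ r ∧ r < 1}
  have hZf : Z.Finite := by
    refine (hS.image (nv p F)).subset ?_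
    rintro r ⟨x, hx, h1, h2⟩
    obtain ⟨s, hs, hxs⟩ := hcov x (by rw [hx]; exact h2.le)
    refine ⟨s, hs, ?_⟩
    have : nv p F (x + (s - x)) = nv p F x :=
      nv_add_eq_left p (by rw [nv_sub_comm, hx]; linarith)
    rw [← hx, ← this]; congr 1; ring
  have hZn : Z.Nonempty := ⟨c, (p : F), rfl, le_rfl, hc1⟩
  obtain ⟨r, ⟨x, hx, h1, h2⟩, hmax⟩ := hZf.exists_maximal hZn
  have hr0 : 0 < r := lt_of_lt_of_le hc0 h1
  have hx0 : x ≠ 0 := by rintro rfl; simp at hx; linarith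
  refine ⟨Units.mk0 x hx0, by simpa [hx] using h2, fun y => ?_⟩
  simp only [Units.val_mk0, hx]
  obtain ⟨n, hn1, hn2⟩ := exists_mem_Ico_zpow (nv_units_pos p y) (one_lt_inv_iff₀.2 ⟨hr0, h2⟩)
  refine ⟨-n, ?_⟩
  rw [inv_zpow'] at hn1 hn2
  by_contra hne
  have hlt : r ^ (-n) < nv p F (y : F) := lt_of_le_of_ne hn1 (Ne.symm hne)
  have key : nv p F ((y : F) * x ^ (n + 1)) = nv p F (y : F) * r ^ (n + 1) := by
    rw [map_mul, map_zpow₀, hx]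
  have hA : r < nv p F ((y : F) * x ^ (n + 1)) := by
    rw [key]
    have : r = r ^ (-n) * r ^ (n + 1) := by
      rw [← zpow_add₀ hr0.ne']; simp
    conv_lhs => rw [this]
    gcongr
  have hB : nv p F ((y : F) * x ^ (n + 1)) < 1 := by
    rw [key]
    have : (1 : ℝ) = r ^ (-(n+1)) * r ^ (n + 1) := by
      rw [← zpow_add₀ hr0.ne']; simp
    rw [this]
    gcongr
  have := hmax (y := nv p F ((y : F) * x ^ (n + 1))) ⟨_, rfl, by linarith, hB⟩ hA.le
  linarith

end units

section tower
variable (F : Type*) [Field F] [Algebra ℚ_[p] F] [FiniteDimensional ℚ_[p] F]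
variable (K : Type*) [Field K] [Algebra ℚ_[p] K] [FiniteDimensional ℚ_[p] K]
variable [Algebra F K] [IsScalarTower ℚ_[p] F K]

noncomputable def eI : ℕ := (gam p F).relIndex (gam p K)

/-- inclusion on units -/
noncomputable def inc : Fˣ →* Kˣ := Units.map (algebraMap F K).toMonoidHom

/-- norm on units -/
noncomputable def nm : Kˣ →* Fˣ := Units.map (Algebra.norm F : K →* F)

variable {F K}
omit [Fact p.Prime] in
@[simp] lemma inc_val (x : Fˣ) : ((inc F K x : Kˣ) : K) = algebraMap F K (x : F) := rfl
@[simp] lemma nm_val (x : Kˣ) : ((nm F K x : Fˣ) : F) = Algebra.norm F (x : K) := rfl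

variable (F K)
lemma gam_le : gam p F ≤ gam p K := by
  rintro _ ⟨x, rfl⟩
  exact ⟨inc F K x, by rw [← Units.val_inj]; simp [nv_algebraMap]⟩

lemma eI_mul (M : Type*) [Field M] [Algebra ℚ_[p] M] [FiniteDimensional ℚ_[p] M]
    [Algebra K M] [IsScalarTower ℚ_[p] K M] : eI p F K * eI p K M = eI p F M :=
  Subgroup.relIndex_mul_relIndex _ _ _ (gam_le p F K) (gam_le p K M)
variable {F K}

lemma inc_mem_uni {x : Fˣ} : inc F K x ∈ uni p K ↔ x ∈ uni p F := by
  simp [mem_uni, nv_algebraMap]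

variable [FiniteDimensional F K] [IsGalois F K]

lemma nv_norm (x : K) : nv p F (Algebra.norm F x) = nv p K x ^ Module.finrank F K := by
  rw [← nv_algebraMap p (K := K), Algebra.norm_eq_prod_automorphisms, map_prod]
  simp_rw [nv_aut]
  rw [Finset.prod_const, Finset.card_univ, ← Nat.card_eq_fintype_card, IsGalois.card_aut_eq_finrank]

lemma nm_mem_uni {x : Kˣ} : nm F K x ∈ uni p F ↔ x ∈ uni p K := by
  rw [mem_uni, mem_uni, nm_val, nv_norm]
  exact pow_eq_one_iff_of_nonneg (nv_nonneg p _) Module.finrank_pos.ne'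

variable (F K)
lemma eI_dvd : eI p F K ∣ Module.finrank F K := by
  obtain ⟨π, -, hπ⟩ := exists_unif p (F := K)
  have hc : IsCyclic (gam p K) := by
    refine ⟨⟨nvU p K π, ⟨π, rfl⟩⟩, ?_⟩
    rintro ⟨_, x, rfl⟩
    obtain ⟨k, hk⟩ := hπ x
    refine ⟨k, ?_⟩
    ext
    simp [hk]
  have : IsCyclic (gam p K ⧸ (gam p F).subgroupOf (gam p K)) :=
    isCyclic_of_surjective (QuotientGroup.mk' _) (QuotientGroup.mk'_surjective _)
  rw [eI, Subgroup.relIndex, Subgroup.index, ← IsCyclic.exponent_eq_card,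
    Monoid.exponent_dvd_iff_forall_pow_eq_one]
  intro q
  induction q using QuotientGroup.induction_on with
  | H z =>
    obtain ⟨_, x, rfl⟩ := z
    rw [← QuotientGroup.mk_pow, QuotientGroup.eq_one_iff, Subgroup.mem_subgroupOf]
    refine ⟨nm F K x, ?_⟩
    rw [← Units.val_inj]
    simp [nv_norm]

lemma eI_pos : 0 < eI p F K := Nat.pos_of_dvd_of_pos (eI_dvd p F K) Module.finrank_pos

lemma gam_eq_of_eI (h : eI p F K = 1) : gam p F = gam p K :=
  le_antisymm (gam_le p F K) (Subgroup.relIndex_eq_one.1 h)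
end tower

section approx
variable {K : Type*} [Field K] [Algebra ℚ_[p] K] [FiniteDimensional ℚ_[p] K]

structure AN (w : K → ℝ) : Prop where
  add : ∀ x y, w (x + y) ≤ max (w x) (w y)
  neg : ∀ x, w (-x) = w x
  mul : ∀ x y, w (x * y) ≤ w x * w y
  le : ∀ x, nv p K x ≤ w x
  bd : ∃ D, 0 ≤ D ∧ ∀ x, w x ≤ D * nv p K x

namespace AN
variable {p} {w : K → ℝ} (hw : AN p w)
include hw

lemma nonneg (x : K) : 0 ≤ w x := (nv_nonneg p x).trans (hw.le x)
lemma zero : w 0 = 0 := by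
  obtain ⟨D, -, hD⟩ := hw.bd
  exact le_antisymm (by simpa using hD 0) (hw.nonneg 0)

lemma sub (x y : K) : w (x - y) ≤ max (w x) (w y) := by
  rw [sub_eq_add_neg, ← hw.neg y]; exact hw.add _ _

lemma sum_le {ι : Type*} (s : Finset ι) (f : ι → K) {c : ℝ} (hc : 0 ≤ c)
    (h : ∀ i ∈ s, w (f i) ≤ c) : w (∑ i ∈ s, f i) ≤ c := by
  classical
  induction s using Finset.induction_on with
  | empty => simpa [hw.zero] using hc
  | insert a s ha ih =>
    rw [Finset.sum_insert ha]
    refine (hw.add _ _).trans (max_le (h _ (by simp)) (ih fun i hi => h i (by simp [hi])))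

lemma nv_eq_one {u : K} {ρ : ℝ} (hρ : ρ < 1) (h : w (u - 1) ≤ ρ) : nv p K u = 1 := by
  have := nv_add_eq_left p (x := (1 : K)) (y := u - 1)
    (by rw [map_one]; exact ((hw.le _).trans h).trans_lt hρ)
  simpa using this

lemma mul_mem {a b : K} {ρ : ℝ} (h0 : 0 ≤ ρ) (hρ : ρ < 1) (ha : w (a - 1) ≤ ρ)
    (hb : w (b - 1) ≤ ρ) : w (a * b - 1) ≤ ρ := by
  have : a * b - 1 = (a - 1) * (b - 1) + ((a - 1) + (b - 1)) := by ring
  rw [this]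
  refine (hw.add _ _).trans (max_le ((hw.mul _ _).trans ?_) ((hw.add _ _).trans (max_le ha hb)))
  have := hw.nonneg (a - 1)
  have := hw.nonneg (b - 1)
  nlinarith

lemma inv_mem {a : K} {ρ : ℝ} (hρ : ρ < 1) (ha : w (a - 1) ≤ ρ) : w (a⁻¹ - 1) ≤ ρ := by
  have h1 := hw.nv_eq_one hρ ha
  have ha0 : a ≠ 0 := by rintro rfl; simp at h1
  have : a⁻¹ - 1 = -((a - 1) * (a⁻¹ - 1)) - (a - 1) := by field_simp; ring
  have h2 : w (a⁻¹ - 1) ≤ max (w (a - 1) * w (a⁻¹ - 1)) (w (a - 1)) := by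
    conv_lhs => rw [this]
    refine (hw.sub _ _).trans (max_le_max ?_ le_rfl)
    rw [hw.neg]; exact hw.mul _ _
  rcases le_max_iff.1 h2 with h | h
  · have := hw.nonneg (a⁻¹ - 1)
    have := hw.nonneg (a - 1)
    nlinarith
  · linarith

lemma div_mem {a b : K} {ρ : ℝ} (h0 : 0 ≤ ρ) (hρ : ρ < 1) (ha : w (a - 1) ≤ ρ)
    (hb : w (b - 1) ≤ ρ) : w (a / b - 1) ≤ ρ := by
  rw [div_eq_mul_inv]; exact hw.mul_mem h0 hρ ha (hw.inv_mem hρ hb)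

lemma approx (h : Kˣ →* Kˣ) (S : Subgroup Kˣ) (hS : ∀ b, h b ∈ S) (ρ : ℝ) (h0 : 0 < ρ)
    (hρ : ρ < 1)
    (hpres : ∀ r, 0 < r → r ≤ ρ → ∀ u : Kˣ, w (u - 1) ≤ r → w (h u - 1) ≤ r)
    (step : ∀ r, 0 < r → r ≤ ρ → ∀ a ∈ S, w ((a : K) - 1) ≤ r →
      ∃ b : Kˣ, w (b - 1) ≤ r ∧ w (((a / h b : Kˣ) : K) - 1) ≤ r * ρ)
    (a : Kˣ) (ha : a ∈ S) (haw : w ((a : K) - 1) ≤ ρ) :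
    ∃ b : Kˣ, w ((b : K) - 1) ≤ ρ ∧ h b = a := by
  have hpos : ∀ k, 0 < ρ ^ (k + 1) := fun k => by positivity
  have hle : ∀ k, ρ ^ (k + 1) ≤ ρ := fun k =>
    (pow_le_pow_of_le_one h0.le hρ.le (by omega : 1 ≤ k + 1)).trans_eq (pow_one _)
  have step' : ∀ k : ℕ, ∀ a : Kˣ, ∃ b : Kˣ, (a ∈ S ∧ w ((a : K) - 1) ≤ ρ ^ (k + 1)) →
      (w (b - 1) ≤ ρ ^ (k + 1) ∧ w (((a / h b : Kˣ) : K) - 1) ≤ ρ ^ (k + 2)) := by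
    intro k a
    by_cases hh : a ∈ S ∧ w ((a : K) - 1) ≤ ρ ^ (k + 1)
    · obtain ⟨b, hb⟩ := step _ (hpos k) (hle k) a hh.1 hh.2
      exact ⟨b, fun _ => by simpa [pow_succ] using hb⟩
    · exact ⟨1, fun h => absurd h hh⟩
  choose B hB using step'
  obtain ⟨A, hA0, hAs⟩ : ∃ A : ℕ → Kˣ, A 0 = a ∧ ∀ k, A (k + 1) = A k / h (B k (A k)) :=
    ⟨fun k => Nat.rec a (fun k x => x / h (B k x)) k, rfl, fun k => rfl⟩
  have hA : ∀ k, A k ∈ S ∧ w (((A k : Kˣ) : K) - 1) ≤ ρ ^ (k + 1) := by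
    intro k
    induction k with
    | zero => exact ⟨hA0 ▸ ha, by simpa [hA0] using haw⟩
    | succ k ih =>
      rw [hAs]
      exact ⟨S.div_mem ih.1 (hS _), (hB k _ ih).2⟩
  let b : ℕ → Kˣ := fun k => B k (A k)
  have hb : ∀ k, w ((b k : K) - 1) ≤ ρ ^ (k + 1) := fun k => (hB k _ (hA k)).1
  obtain ⟨P, hP0, hPs⟩ : ∃ P : ℕ → Kˣ, P 0 = 1 ∧ ∀ k, P (k + 1) = P k * b k :=
    ⟨fun k => Nat.rec 1 (fun k x => x * b k) k, rfl, fun k => rfl⟩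
  have hPA : ∀ k, h (P k) * A k = a := by
    intro k
    induction k with
    | zero => simp [hP0, hA0]
    | succ k ih =>
      rw [hPs, hAs, map_mul, ← ih]
      simp [b, mul_assoc]
  have hPq : ∀ k j, w (((P (k + j) / P k : Kˣ) : K) - 1) ≤ ρ ^ (k + 1) := by
    intro k j
    induction j with
    | zero => simp [hw.zero]; exact (pow_pos h0 _).le
    | succ j ih =>
      rw [← add_assoc, hPs, mul_div_right_comm, Units.val_mul]
      refine hw.mul_mem (hpos _).le ((hle k).trans_lt hρ) ih ((hb _).trans ?_)
      exact pow_le_pow_of_le_one h0.le hρ.le (by omega)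
  have hP1 : ∀ k, nv p K (P k : K) = 1 := by
    intro k
    have := hPq 0 k
    simp only [zero_add, hP0, div_one, pow_one] at this
    exact hw.nv_eq_one hρ this
  obtain ⟨l, hl⟩ := nv_complete p (fun k => (P k : K)) ρ ρ h0.le h0.le hρ (by
    intro k
    have : ((P (k + 1) : Kˣ) : K) - P k = P k * ((b k : K) - 1) := by
      rw [hPs]; push_cast; ring
    rw [this, map_mul, hP1, one_mul]
    refine (hw.le _).trans ((hb k).trans_eq ?_)
    ring)
  have hl0 : l ≠ 0 := by
    rintro rfl
    have := hl 0
    simp [hP0, nv_neg] at this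
    linarith
  set L : Kˣ := Units.mk0 l hl0
  obtain ⟨D, hD0, hD⟩ := hw.bd
  have hQ : ∀ k, w (((L / P k : Kˣ) : K) - 1) ≤ ρ ^ (k + 1) := by
    intro k
    have ht : Filter.Tendsto (fun j : ℕ => D * (ρ * ρ ^ j)) Filter.atTop (nhds (D * (ρ * 0))) :=
      ((tendsto_pow_atTop_nhds_zero_of_lt_one h0.le hρ).const_mul ρ).const_mul D
    rw [mul_zero, mul_zero] at ht
    obtain ⟨j, hj1, hj2⟩ := ((ht.eventually_lt_const (hpos k)).and
      (Filter.eventually_ge_atTop k)).exists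
    obtain ⟨i, rfl⟩ := Nat.exists_eq_add_of_le hj2
    have e1 : L / P k = (L / P (k + i)) * (P (k + i) / P k) := by simp
    rw [e1, Units.val_mul]
    refine hw.mul_mem (hpos _).le ((hle k).trans_lt hρ) ?_ (hPq k i)
    refine (hD _).trans (le_trans ?_ hj1.le)
    gcongr
    have : (((L / P (k + i) : Kˣ) : K) - 1) = (l - P (k + i)) / (P (k + i) : K) := by
      rw [Units.val_div_eq_div_val, sub_div, div_self (Units.ne_zero _)]; rfl
    rw [this, map_div₀, hP1, div_one]
    exact hl _
  refine ⟨L, by simpa [hP0] using hQ 0, ?_⟩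
  have hfin : ∀ k, w (((a / h L : Kˣ) : K) - 1) ≤ ρ ^ (k + 1) := by
    intro k
    have e1 : a / h L = A k / h (L / P k) := by
      rw [map_div, ← hPA k, div_div_eq_mul_div, mul_comm]
    rw [e1, Units.val_div_eq_div_val]
    exact hw.div_mem (hpos _).le ((hle k).trans_lt hρ) (hA k).2
      (hpres _ (hpos k) (hle k) _ (hQ k))
  have hz : nv p K (((a / h L : Kˣ) : K) - 1) ≤ 0 := by
    refine ge_of_tendsto' ((tendsto_pow_atTop_nhds_zero_of_lt_one h0.le hρ).comp
      (Filter.tendsto_add_atTop_nat 1)) (fun k => (hw.le _).trans (hfin k))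
  have hz' : (((a / h L : Kˣ) : K) - 1) = 0 := by
    by_contra hne
    exact absurd hz (not_le.2 (nv_pos p hne))
  have : a / h L = 1 := Units.val_inj.1 (by simpa [sub_eq_zero] using hz')
  exact (div_eq_one.1 this).symm
end AN
end approx
end LCF

set_option linter.style.haveILetI false
set_option linter.unusedSectionVars false
namespace LCF
section grp
variable {G G' : Type*} [CommGroup G] [CommGroup G']

lemma relIndex_split (f : G →* G') {V U : Subgroup G} (h : V ≤ U) :
    V.relIndex U = (V.map f).relIndex (U.map f) * (V ⊓ f.ker).relIndex (U ⊓ f.ker) := by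
  rw [Subgroup.relIndex_map_map]
  have h1 : V ≤ V ⊔ (U ⊓ f.ker) := le_sup_left
  have h2 : V ⊔ (U ⊓ f.ker) ≤ U := sup_le h inf_le_left
  rw [← Subgroup.relIndex_mul_relIndex _ _ _ h1 h2, mul_comm]
  congr 1
  · have e1 : (V ⊔ f.ker).relIndex (U ⊔ f.ker) = (V ⊔ f.ker).relIndex U := by
      have : U ⊔ f.ker = (V ⊔ f.ker) ⊔ U := by
        rw [sup_comm V, sup_assoc, sup_eq_right.2 h, sup_comm]
      rw [this, Subgroup.relIndex_sup_left]
    rw [e1, ← Subgroup.inf_relIndex_right (V ⊔ f.ker) U]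
    congr 1
    rw [inf_comm U, sup_inf_assoc_of_le _ h]
  · rw [Subgroup.relIndex_sup_left, ← Subgroup.inf_relIndex_right V (U ⊓ f.ker)]
    congr 1
    rw [← inf_assoc, inf_eq_left.2 h]

lemma herbrand (f g : G →* G) (hfg : ∀ x, f (g x) = 1) (hgf : ∀ x, g (f x) = 1)
    {V U : Subgroup G} (h : V ≤ U) (hUf : U.map f ≤ U) (hUg : U.map g ≤ U)
    (hVf : V ⊓ f.ker = V.map g) (hVg : V ⊓ g.ker = V.map f) (h0 : V.relIndex U ≠ 0) :
    (U.map f).relIndex (U ⊓ g.ker) = (U.map g).relIndex (U ⊓ f.ker) ∧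
    (U.map g).relIndex (U ⊓ f.ker) ≠ 0 := by
  have ef := relIndex_split f h
  have eg := relIndex_split g h
  have a1 : V.map f ≤ U.map f := Subgroup.map_mono h
  have a2 : U.map f ≤ U ⊓ g.ker := by
    refine le_inf hUf ?_
    rintro _ ⟨x, -, rfl⟩; exact hgf x
  have b1 : V.map g ≤ U.map g := Subgroup.map_mono h
  have b2 : U.map g ≤ U ⊓ f.ker := by
    refine le_inf hUg ?_
    rintro _ ⟨x, -, rfl⟩; exact hfg x
  rw [hVf, ← Subgroup.relIndex_mul_relIndex _ _ _ b1 b2] at ef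
  rw [hVg, ← Subgroup.relIndex_mul_relIndex _ _ _ a1 a2] at eg
  rw [ef] at h0 eg
  have n1 := left_ne_zero_of_mul h0
  have n2 := left_ne_zero_of_mul (right_ne_zero_of_mul h0)
  have n3 := right_ne_zero_of_mul (right_ne_zero_of_mul h0)
  refine ⟨?_, n3⟩
  apply Nat.eq_of_mul_eq_mul_left (Nat.pos_of_ne_zero (mul_ne_zero n1 n2))
  rw [← mul_assoc] at eg
  rw [eg]; ring
end grp
section H90
variable {E L : Type*} [Field E] [Field L] [Algebra E L] [FiniteDimensional E L]

lemma H90 (hc : ∀ a b : L ≃ₐ[E] L, a * b = b * a) (H : Subgroup (L ≃ₐ[E] L)) (τ : L ≃ₐ[E] L)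
    (d : ℕ) (hcov : ∀ g : L ≃ₐ[E] L, ∃ i : ℕ, ∃ h ∈ H, g = τ ^ i * h)
    (hd : ∀ i j : ℕ, ∀ h ∈ H, ∀ h' ∈ H, τ ^ i * h = τ ^ j * h' → i ≡ j [MOD d])
    (v : Lˣ) (hv : ∀ h ∈ H, h • v = v) (hN : ∏ j ∈ Finset.range d, τ ^ j • v = 1) :
    ∃ z : Lˣ, (∀ h ∈ H, h • z = z) ∧ τ • z / z = v := by
  let c : ℕ → Lˣ := fun n => ∏ j ∈ Finset.range n, τ ^ j • v
  have hcadd : ∀ n k, c (n + k) = τ ^ n • c k * c n := by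
    intro n k
    simp only [c, Finset.prod_range_add, Finset.smul_prod', smul_smul, ← pow_add]
    rw [mul_comm]
  have hper : Function.Periodic c d := by
    intro n
    rw [hcadd, show c d = 1 from hN, smul_one, one_mul]
  have hmod : ∀ {i j}, i ≡ j [MOD d] → c i = c j := by
    intro i j hij
    rw [← hper.map_mod_nat i, ← hper.map_mod_nat j, hij]
  have hcH : ∀ n, ∀ h ∈ H, h • c n = c n := by
    intro n h hh
    simp only [c, Finset.smul_prod', smul_smul]
    refine Finset.prod_congr rfl fun j _ => ?_
    rw [hc h, mul_smul, hv h hh]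
  choose i h hh hg using hcov
  obtain ⟨z, hz⟩ := groupCohomology.isMulCoboundary₁_of_isMulCocycle₁_of_aut_to_units
    (fun g => c (i g)) (by
      intro a b
      have : i (a * b) ≡ i a + i b [MOD d] := by
        apply hd _ _ _ (hh (a * b)) (h a * h b) (H.mul_mem (hh a) (hh b))
        rw [← hg (a * b), pow_add]
        conv_lhs => rw [hg a, hg b]
        rw [mul_assoc, mul_assoc, ← mul_assoc (h a), hc (h a), mul_assoc]
      simp only
      rw [hmod this, hcadd]
      congr 1
      conv_rhs => rw [hg a, mul_smul, hcH _ _ (hh a)])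
  refine ⟨z, fun g hgH => ?_, ?_⟩
  · have := hz g
    have h0 : i g ≡ 0 [MOD d] := hd _ _ _ (hh g) g hgH (by rw [← hg]; simp)
    simp only [hmod h0] at this
    simpa [c, div_eq_one] using this
  · rw [hz τ]
    have h0 : i τ ≡ 1 [MOD d] := hd _ _ _ (hh τ) 1 H.one_mem (by rw [← hg]; simp)
    simp only [hmod h0, c, Finset.prod_range_one, pow_zero, one_smul]
end H90
end LCF

set_option linter.style.haveILetI false
set_option linter.unusedSectionVars false
namespace LCF
variable (p : ℕ) [Fact p.Prime]
variable {F : Type*} [Field F] [Algebra ℚ_[p] F] [FiniteDimensional ℚ_[p] F]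
variable {K : Type*} [Field K] [Algebra ℚ_[p] K] [FiniteDimensional ℚ_[p] K]

lemma nv_linear_bd (l : K →ₗ[ℚ_[p]] F) : ∃ D, 0 ≤ D ∧ ∀ x, nv p F (l x) ≤ D * nv p K x := by
  letI := spectralNorm.normedField ℚ_[p] F
  letI : NormedSpace ℚ_[p] F := spectralNorm.normedSpace ℚ_[p] F
  letI := spectralNorm.normedField ℚ_[p] K
  letI : NormedSpace ℚ_[p] K := spectralNorm.normedSpace ℚ_[p] K
  let L := LinearMap.toContinuousLinearMap l
  exact ⟨‖L‖, norm_nonneg _, fun x => L.le_opNorm x⟩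

variable [Algebra F K] [IsScalarTower ℚ_[p] F K] [FiniteDimensional F K] [IsGalois F K]

lemma repr_aut (g h : K ≃ₐ[F] K) (x : K) :
    (IsGalois.normalBasis F K).repr (g x) (g * h) = (IsGalois.normalBasis F K).repr x h := by
  classical
  set b := IsGalois.normalBasis F K
  have hx : g x = ∑ k, b.repr x k • b (g * k) := by
    conv_lhs => rw [← b.sum_repr x]
    rw [map_sum]
    refine Finset.sum_congr rfl fun k _ => ?_
    rw [map_smul]
    congr 1
    rw [IsGalois.normalBasis_apply (K := F) (L := K) k, IsGalois.normalBasis_apply (K := F) (L := K) (g * k)]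
    rfl
  rw [hx, map_sum, Finsupp.finsetSum_apply, Finset.sum_eq_single h]
  · simp
  · intro k _ hk
    simp [hk]
  · simp

lemma exists_w : ∃ w : K → ℝ, AN p w ∧ (∀ (g : K ≃ₐ[F] K) x, w (g x) = w x) ∧
    (∀ x, (∀ g : K ≃ₐ[F] K, g x = x) → ∃ y, w y ≤ w x ∧ ∑ g : K ≃ₐ[F] K, g y = x) ∧
    (∀ σ : K ≃ₐ[F] K, (∀ g, g ∈ Subgroup.zpowers σ) → ∀ x, ∃ y t, w y ≤ w x ∧
      w t ≤ w (∑ g : K ≃ₐ[F] K, g x) ∧ x = t + (σ y - y)) := by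
  classical
  set b := IsGalois.normalBasis F K with hb
  set θ := b 1 with hθ
  have hbθ : ∀ g, b g = g θ := fun g => by
    rw [hθ, hb]; exact IsGalois.normalBasis_apply g
  let w0 : K → ℝ := fun x => (Finset.univ : Finset (K ≃ₐ[F] K)).sup' Finset.univ_nonempty
    (fun g => nv p F (b.repr x g))
  have hw0 : ∀ x c, w0 x ≤ c ↔ ∀ g, nv p F (b.repr x g) ≤ c := fun x c => by
    simp only [w0]
    rw [Finset.sup'_le_iff]; simp
  have hle0 : ∀ x g, nv p F (b.repr x g) ≤ w0 x := fun x => (hw0 x _).1 le_rfl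
  have hnn0 : ∀ x, 0 ≤ w0 x := fun x => (nv_nonneg p _).trans (hle0 x 1)
  obtain ⟨B, hB0, hB1, hB2⟩ : ∃ B : ℝ, 0 < B ∧ nv p K θ ≤ B ∧ ∀ g h : K ≃ₐ[F] K, w0 (b g * b h) ≤ B := by
    refine ⟨1 + nv p K θ + ∑ g, ∑ h, w0 (b g * b h), ?_, ?_, ?_⟩
    · have := nv_nonneg p θ
      have : 0 ≤ ∑ g, ∑ h, w0 (b g * b h) :=
        Finset.sum_nonneg fun _ _ => Finset.sum_nonneg fun _ _ => hnn0 _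
      linarith
    · have : 0 ≤ ∑ g, ∑ h, w0 (b g * b h) :=
        Finset.sum_nonneg fun _ _ => Finset.sum_nonneg fun _ _ => hnn0 _
      linarith
    · intro g h
      have h1 : w0 (b g * b h) ≤ ∑ h, w0 (b g * b h) :=
        Finset.single_le_sum (f := fun h => w0 (b g * b h)) (fun _ _ => hnn0 _) (Finset.mem_univ h)
      have h2 : ∑ h, w0 (b g * b h) ≤ ∑ g, ∑ h, w0 (b g * b h) :=
        Finset.single_le_sum (f := fun g => ∑ h, w0 (b g * b h))
          (fun _ _ => Finset.sum_nonneg fun _ _ => hnn0 _) (Finset.mem_univ g)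
      have := nv_nonneg p θ
      linarith
  have hinv0 : ∀ (g : K ≃ₐ[F] K) x, w0 (g x) ≤ w0 x := by
    intro g x
    rw [hw0]
    intro h
    have := repr_aut (F := F) (K := K) g (g⁻¹ * h) x
    rw [mul_inv_cancel_left] at this
    rw [hb, this]
    exact hle0 _ _
  have hrep : ∀ (g h : K ≃ₐ[F] K) x, b.repr (g x) h = b.repr x (g⁻¹ * h) := by
    intro g h x
    have := repr_aut (F := F) (K := K) g (g⁻¹ * h) x
    rwa [mul_inv_cancel_left] at this
  have hsmulθ : ∀ c : F, w0 (c • θ) = nv p F c := by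
    intro c
    apply le_antisymm
    · rw [hw0]
      intro g
      rw [hθ, map_smul, Module.Basis.repr_self, Finsupp.smul_apply, Finsupp.single_apply]
      split_ifs
      · simp
      · simpa using nv_nonneg p c
    · have := hle0 (c • θ) 1
      simpa [hθ] using this
  have hfix : ∀ x, (∀ g : K ≃ₐ[F] K, g x = x) → ∀ g, b.repr x g = b.repr x 1 := by
    intro x hx g
    have := hrep g g x
    rw [hx] at this
    simpa using this
  have hconst : ∀ x, (∀ g, b.repr x g = b.repr x 1) → w0 x = nv p F (b.repr x 1) := by
    intro x hx
    apply le_antisymm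
    · rw [hw0]; intro g; rw [hx]
    · exact hle0 _ _
  refine ⟨fun x => B * w0 x, ⟨?_, ?_, ?_, ?_, ?_⟩, ?_, ?_, ?_⟩
  · intro x y
    rw [← mul_max_of_nonneg _ _ hB0.le]
    gcongr
    rw [hw0]
    intro g
    rw [map_add, Finsupp.add_apply]
    exact (nv_add_le p _ _).trans (max_le_max (hle0 _ _) (hle0 _ _))
  · intro x
    simp only [w0, map_neg, Finsupp.neg_apply, nv_neg]
  · intro x y
    have hxy : x * y = ∑ g, ∑ h, (b.repr x g * b.repr y h) • (b g * b h) := by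
      conv_lhs => rw [← b.sum_repr x, ← b.sum_repr y]
      rw [Finset.sum_mul_sum]
      refine Finset.sum_congr rfl fun g _ => Finset.sum_congr rfl fun h _ => ?_
      rw [smul_mul_smul_comm]
    have : w0 (x * y) ≤ w0 x * w0 y * B := by
      rw [hw0]
      intro k
      rw [hxy]
      simp only [map_sum, map_smul, Finsupp.finsetSum_apply, Finsupp.smul_apply, smul_eq_mul]
      have hc : 0 ≤ w0 x * w0 y * B := by have := hnn0 x; have := hnn0 y; positivity
      refine nv_sum_le p _ _ hc fun g _ => nv_sum_le p _ _ hc fun h _ => ?_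
      rw [map_mul, map_mul]
      have h1 := hnn0 x
      have h2 := hnn0 y
      have h3 := nv_nonneg p (b.repr x g)
      have h4 := nv_nonneg p (b.repr y h)
      have h5 := nv_nonneg p (b.repr (b g * b h) k)
      have := hle0 x g
      have := hle0 y h
      have := (hle0 (b g * b h) k).trans (hB2 g h)
      gcongr
    have h1 : B * w0 (x * y) ≤ B * (w0 x * w0 y * B) := by gcongr
    calc _ ≤ _ := h1
      _ = _ := by ring
  · intro x
    conv_lhs => rw [← b.sum_repr x]
    have := hnn0 x
    refine nv_sum_le p _ _ (by positivity) fun g _ => ?_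
    rw [Algebra.smul_def, map_mul, nv_algebraMap, hbθ, nv_aut, mul_comm]
    have := nv_nonneg p θ
    have := hle0 x g
    have := nv_nonneg p (b.repr x g)
    gcongr
  · have : ∀ g, ∃ D, 0 ≤ D ∧ ∀ x, nv p F (b.repr x g) ≤ D * nv p K x := fun g =>
      nv_linear_bd p ((b.coord g).restrictScalars ℚ_[p])
    choose D hD0 hD using this
    refine ⟨B * ∑ g, D g, mul_nonneg hB0.le (Finset.sum_nonneg fun _ _ => hD0 _), fun x => ?_⟩
    rw [mul_assoc]
    refine mul_le_mul_of_nonneg_left ?_ hB0.le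
    rw [hw0]
    intro g
    refine (hD g x).trans (mul_le_mul_of_nonneg_right ?_ (nv_nonneg p _))
    exact Finset.single_le_sum (f := D) (fun _ _ => hD0 _) (Finset.mem_univ g)
  · intro g x
    simp only
    congr 1
    refine le_antisymm (hinv0 g x) ?_
    have := hinv0 g⁻¹ (g x)
    rwa [← AlgEquiv.mul_apply, inv_mul_cancel, AlgEquiv.one_apply] at this
  · intro x hx
    refine ⟨b.repr x 1 • θ, ?_, ?_⟩
    · simp only
      rw [hsmulθ, hconst x (hfix x hx)]
    · conv_rhs => rw [← b.sum_repr x]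
      refine Finset.sum_congr rfl fun g _ => ?_
      rw [map_smul, hfix x hx g, hbθ]
  · intro σ hσ x
    set s := ∑ g, b.repr x g with hs
    have htr : ∀ h, b.repr (∑ g : K ≃ₐ[F] K, g x) h = s := by
      intro h
      rw [map_sum, Finsupp.finsetSum_apply]
      simp_rw [hrep]
      rw [hs]
      exact Fintype.sum_bijective (fun g => g⁻¹ * h)
        ((Equiv.inv _).trans (Equiv.mulRight h)).bijective _ _ (fun g => rfl)
    have hwt : w0 (s • θ) = w0 (∑ g : K ≃ₐ[F] K, g x) := by
      rw [hsmulθ, hconst _ (fun g => by rw [htr, htr]), htr]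
    set x0 := x - s • θ with hx0
    let c : (K ≃ₐ[F] K) → F := fun g => b.repr x0 g
    have hcs : ∑ g, c g = 0 := by
      simp only [c, hx0, map_sub, map_smul, hθ, Finsupp.sub_apply, Finset.sum_sub_distrib, ← hs,
        Module.Basis.repr_self, Finsupp.smul_apply, Finsupp.single_apply]
      simp
    have hcle : ∀ g, nv p F (c g) ≤ w0 x := by
      intro g
      simp only [c, hx0, map_sub, Finsupp.sub_apply]
      refine (nv_sub_le p _ _).trans (max_le (hle0 _ _) ((hle0 _ _).trans ?_))
      rw [hsmulθ]
      exact nv_sum_le p _ _ (hnn0 x) fun g _ => hle0 _ _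
    let D : ℕ → F := fun i => - ∑ j ∈ Finset.range (i + 1), c (σ ^ j)
    have hDle : ∀ i, nv p F (D i) ≤ w0 x := fun i => by
      simp only [D, nv_neg]
      exact nv_sum_le p _ _ (hnn0 x) fun g _ => hcle _
    have hsum0 : ∑ j ∈ Finset.range (orderOf σ), c (σ ^ j) = 0 := by
      rw [← hcs, ← IsCyclic.image_range_orderOf hσ, Finset.sum_image]
      intro i hi j hj hij
      exact pow_injOn_Iio_orderOf (by simpa using hi) (by simpa using hj) hij
    have hper : Function.Periodic D (orderOf σ) := by
      intro i
      simp only [D]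
      rw [show i + orderOf σ + 1 = orderOf σ + (i + 1) by ring, Finset.sum_range_add, hsum0, zero_add]
      simp [pow_add, pow_orderOf_eq_one]
    choose idx hidx using fun g => mem_powers_iff_mem_zpowers.2 (hσ g)
    have hidx' : ∀ g, σ ^ idx g = g := hidx
    have key : ∀ h, D (idx h) - D (idx (σ * h)) = c (σ * h) := by
      intro h
      have : idx (σ * h) ≡ idx h + 1 [MOD orderOf σ] := by
        rw [← pow_eq_pow_iff_modEq, hidx', pow_succ', hidx']
      have h2 : D (idx (σ * h)) = D (idx h + 1) := by
        rw [← hper.map_mod_nat, this, hper.map_mod_nat]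
      rw [h2]
      simp only [D]
      rw [Finset.sum_range_succ _ (idx h + 1), pow_succ', hidx']
      ring
    refine ⟨b.equivFun.symm fun g => D (idx g), s • θ, ?_, ?_, ?_⟩
    · simp only
      gcongr
      rw [hw0]
      intro g
      have : b.repr (b.equivFun.symm fun g => D (idx g)) g = D (idx g) := by
        have := congrFun (b.equivFun.apply_symm_apply fun g => D (idx g)) g
        rwa [b.equivFun_apply] at this
      rw [this]
      exact hDle _
    · simp only
      rw [hwt]
    · rw [← sub_eq_iff_eq_add', ← hx0]
      apply b.repr.injective
      ext g
      have hr : ∀ g, b.repr (b.equivFun.symm fun g => D (idx g)) g = D (idx g) := fun g => by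
        have := congrFun (b.equivFun.apply_symm_apply fun g => D (idx g)) g
        rwa [b.equivFun_apply] at this
      rw [map_sub b.repr (σ _), Finsupp.sub_apply, hrep, hr, hr]
      have := key (σ⁻¹ * g)
      rw [mul_inv_cancel_left] at this
      rw [this]
end LCF

set_option linter.style.haveILetI false
set_option linter.unusedSectionVars false
namespace LCF
variable (p : ℕ) [Fact p.Prime]
section aux
lemma relIndex_ne_zero_of_cover {G X : Type*} [CommGroup G] (V U : Subgroup G) (S : Set X)
    (hS : S.Finite) (R : G → X → Prop) (h1 : ∀ u ∈ U, ∃ s ∈ S, R u s)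
    (h2 : ∀ u ∈ U, ∀ u' ∈ U, ∀ s, R u s → R u' s → u⁻¹ * u' ∈ V) : V.relIndex U ≠ 0 := by
  haveI : Finite S := hS
  have : Finite (U ⧸ V.subgroupOf U) := by
    choose s hs hR using fun u : U => h1 u u.2
    refine Finite.of_injective (fun q : U ⧸ V.subgroupOf U => (⟨s q.out, hs _⟩ : S)) ?_
    intro q q' hq
    have hq' : s q.out = s q'.out := congrArg Subtype.val hq
    rw [← q.out_eq', ← q'.out_eq', QuotientGroup.eq, Subgroup.mem_subgroupOf]
    exact h2 _ q.out.2 _ q'.out.2 _ (hR q.out) (hq' ▸ hR q'.out)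
  exact Subgroup.index_ne_zero_of_finite
variable {K : Type*} [Field K] [Algebra ℚ_[p] K] [FiniteDimensional ℚ_[p] K]
variable {p} {w : K → ℝ}

lemma AN.div_close (hw : AN p w) {a b : K} {r s : ℝ} (hs : 0 ≤ s) (hr : r < 1)
    (hb : w (b - 1) ≤ r) (hab : w (a - b) ≤ s) : w (a / b - 1) ≤ s := by
  have h1 := hw.nv_eq_one hr hb
  have hb0 : b ≠ 0 := by rintro rfl; simp at h1
  have : a / b - 1 = (a - b) + (a - b) * (b⁻¹ - 1) := by field_simp; ring
  rw [this]
  refine (hw.add _ _).trans (max_le hab ((hw.mul _ _).trans ?_))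
  have := hw.inv_mem hr hb
  have := hw.nonneg (a - b)
  have := hw.nonneg (b⁻¹ - 1)
  nlinarith

lemma AN.prod_close (hw : AN p w) {ι : Type*} (s : Finset ι) (f : ι → K) {r : ℝ} (h0 : 0 ≤ r)
    (hr : r < 1) (h : ∀ i ∈ s, w (f i) ≤ r) :
    w (∏ i ∈ s, (1 + f i) - 1 - ∑ i ∈ s, f i) ≤ r * r := by
  classical
  induction s using Finset.induction_on with
  | empty => simp [hw.zero]; positivity
  | insert a s ha ih =>
    rw [Finset.prod_insert ha, Finset.sum_insert ha]
    have ih' := ih fun i hi => h i (by simp [hi])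
    have hs := hw.sum_le s f h0 fun i hi => h i (by simp [hi])
    have ha' := h a (by simp)
    set P := ∏ i ∈ s, (1 + f i)
    set S := ∑ i ∈ s, f i
    have hP : w (P - 1) ≤ r := by
      have : P - 1 = (P - 1 - S) + S := by ring
      rw [this]
      refine (hw.add _ _).trans (max_le (ih'.trans ?_) hs)
      nlinarith
    have : (1 + f a) * P - 1 - (f a + S) = (P - 1 - S) + f a * (P - 1) := by ring
    rw [this]
    refine (hw.add _ _).trans (max_le ih' ((hw.mul _ _).trans ?_))
    have := hw.nonneg (P - 1)
    gcongr

lemma AN.unit (hw : AN p w) {y : K} {r : ℝ} (hr : r < 1) (hy : w y ≤ r) :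
    ∃ b : Kˣ, (b : K) = 1 + y := by
  have h1 := hw.nv_eq_one (u := 1 + y) hr (by simpa using hy)
  have hb0 : 1 + y ≠ 0 := by intro h; simp [h] at h1
  exact ⟨Units.mk0 _ hb0, rfl⟩

/-- subgroup of close-to-one units -/
def AN.sgp (hw : AN p w) : Subgroup Kˣ where
  carrier := {u | w ((u : K) - 1) ≤ 1 / 2}
  one_mem' := by simp [hw.zero]
  mul_mem' := by
    intro a b ha hb
    simp only [Set.mem_ofPred_eq, Units.val_mul] at *
    exact hw.mul_mem (by norm_num) (by norm_num) ha hb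
  inv_mem' := by
    intro a ha
    simp only [Set.mem_ofPred_eq, Units.val_inv_eq_inv_val] at *
    exact hw.inv_mem (by norm_num) ha

lemma AN.mem_sgp (hw : AN p w) {u : Kˣ} : u ∈ hw.sgp ↔ w ((u : K) - 1) ≤ 1 / 2 := Iff.rfl

lemma AN.sgp_le (hw : AN p w) : hw.sgp ≤ uni p K := by
  intro u hu
  rw [mem_uni]
  exact hw.nv_eq_one (by norm_num) hu

lemma AN.sgp_fin (hw : AN p w) : hw.sgp.relIndex (uni p K) ≠ 0 := by
  obtain ⟨D, hD0, hD⟩ := hw.bd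
  obtain ⟨S, hS, hS2⟩ := nv_tb p (F := K) (1 / (2 * (D + 1))) (by positivity)
  refine relIndex_ne_zero_of_cover _ _ S hS (fun u s => nv p K ((u : K) - s) < 1 / (2 * (D + 1)))
    (fun u hu => hS2 u ((mem_uni p).1 hu).le) ?_
  intro u hu v hv s hus hvs
  rw [hw.mem_sgp]
  refine (hD _).trans ?_
  have e : ((u⁻¹ * v : Kˣ) : K) - 1 = ((v : K) - s - (u - s)) / u := by
    have := u.ne_zero
    push_cast
    field_simp
    ring
  rw [e, map_div₀, (mem_uni p).1 hu, div_one]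
  have : nv p K ((v : K) - s - (u - s)) ≤ 1 / (2 * (D + 1)) :=
    (nv_sub_le p _ _).trans (max_le hvs.le hus.le)
  calc D * _ ≤ D * (1 / (2 * (D + 1))) := by gcongr
    _ ≤ 1 / 2 := by
      rw [mul_one_div, div_le_div_iff₀ (by positivity) (by positivity)]; linarith
end aux

section cyc
variable (F : Type*) [Field F] [Algebra ℚ_[p] F] [FiniteDimensional ℚ_[p] F]
variable (K : Type*) [Field K] [Algebra ℚ_[p] K] [FiniteDimensional ℚ_[p] K]
variable [Algebra F K] [IsScalarTower ℚ_[p] F K] [FiniteDimensional F K] [IsGalois F K]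

lemma smul_val (g : K ≃ₐ[F] K) (u : Kˣ) : ((g • u : Kˣ) : K) = g (u : K) := rfl

lemma smul_mem_uni {g : K ≃ₐ[F] K} {u : Kˣ} : g • u ∈ uni p K ↔ u ∈ uni p K := by
  rw [mem_uni, mem_uni, smul_val, nv_aut]

lemma inc_nm (u : Kˣ) : inc F K (nm F K u) = ∏ g : K ≃ₐ[F] K, g • u := by
  ext
  simp only [inc_val, nm_val, Units.coe_prod, smul_val]
  rw [Algebra.norm_eq_prod_automorphisms]

lemma inc_inj : Function.Injective (inc F K) := by
  intro a b h
  ext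
  apply (algebraMap F K).injective
  simpa using congrArg Units.val h

lemma mem_range_inc {u : Kˣ} : u ∈ (inc F K).range ↔ ∀ g : K ≃ₐ[F] K, g • u = u := by
  constructor
  · rintro ⟨x, rfl⟩ g
    ext
    simp
  · intro h
    obtain ⟨x, hx⟩ := (IsGalois.mem_range_algebraMap_iff_fixed (F := F) (u : K)).2 fun g =>
      congrArg Units.val (h g)
    have hx0 : x ≠ 0 := by rintro rfl; simp at hx; exact u.ne_zero hx.symm
    exact ⟨Units.mk0 x hx0, by ext; simpa using hx⟩

lemma nm_smul (g : K ≃ₐ[F] K) (u : Kˣ) : nm F K (g • u) = nm F K u := by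
  ext; simp [Algebra.norm_eq_of_algEquiv]

theorem cyc_index (σ : K ≃ₐ[F] K) (hσ : ∀ g, g ∈ Subgroup.zpowers σ) :
    ((uni p K).map (nm F K)).relIndex (uni p F) = eI p F K := by
  classical
  obtain ⟨w, hw, hinv, hN, hH⟩ := exists_w p (F := F) (K := K)
  let f : Kˣ →* Kˣ := (inc F K).comp (nm F K)
  let g : Kˣ →* Kˣ := (MulDistribMulAction.toMonoidHom Kˣ σ) / MonoidHom.id Kˣ
  have hg : ∀ u, g u = σ • u / u := fun u => rfl
  have hf : ∀ u, f u = ∏ h : K ≃ₐ[F] K, h • u := fun u => inc_nm F K u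
  have hfv : ∀ u, ((f u : Kˣ) : K) = ∏ h : K ≃ₐ[F] K, h (u : K) := fun u => by
    rw [hf, Units.coe_prod]; rfl
  have hgk : ∀ u, u ∈ g.ker ↔ σ • u = u := fun u => by rw [MonoidHom.mem_ker, hg, div_eq_one]
  have hkerg : g.ker = (inc F K).range := by
    ext u
    rw [hgk, mem_range_inc]
    refine ⟨fun h τ => ?_, fun h => h σ⟩
    have : σ ∈ MulAction.stabilizer (K ≃ₐ[F] K) u := h
    exact (Subgroup.zpowers_le.2 this) (hσ τ)
  have hkerf : f.ker = (nm F K).ker := by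
    ext u
    rw [MonoidHom.mem_ker, MonoidHom.mem_ker]
    exact (map_eq_one_iff _ (inc_inj F K))
  have hfg : ∀ x, f (g x) = 1 := by
    intro x
    rw [← MonoidHom.mem_ker, hkerf, MonoidHom.mem_ker, hg, map_div, nm_smul, div_self']
  have hgf : ∀ x, g (f x) = 1 := by
    intro x
    rw [← MonoidHom.mem_ker, hkerg]; exact ⟨_, rfl⟩
  set U := uni p K with hU
  set V := hw.sgp with hV
  have hUf : U.map f ≤ U := by
    rintro _ ⟨x, hx, rfl⟩
    exact (inc_mem_uni p).2 ((nm_mem_uni p).2 hx)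
  have hgU : ∀ x, g x ∈ U := by
    intro x
    rw [mem_uni, hg, Units.val_div_eq_div_val, map_div₀, smul_val, nv_aut]
    exact div_self (nv_units_pos p x).ne'
  have hUg : U.map g ≤ U := by
    rintro _ ⟨x, hx, rfl⟩
    exact hgU x
  have hpf : ∀ r, 0 < r → r ≤ (1/2 : ℝ) → ∀ u : Kˣ, w (u - 1) ≤ r → w (f u - 1) ≤ r := by
    intro r h0 hr u hu
    have := hw.prod_close Finset.univ (fun h : K ≃ₐ[F] K => h ((u : K) - 1)) h0.le
      (by linarith) (fun h _ => by rw [hinv]; exact hu)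
    simp only [map_sub, map_one, add_sub_cancel] at this
    rw [← hfv] at this
    have h2 := hw.sum_le Finset.univ (fun h : K ≃ₐ[F] K => h (u : K) - 1) h0.le (fun h _ => by
      rw [← map_one h, ← map_sub, hinv]; exact hu)
    have e : ((f u : Kˣ) : K) - 1 = (f u - 1 - ∑ h : K ≃ₐ[F] K, (h (u : K) - 1)) +
      ∑ h : K ≃ₐ[F] K, (h (u : K) - 1) := by ring
    rw [e]
    refine (hw.add _ _).trans (max_le (this.trans ?_) h2)
    nlinarith
  have hpg : ∀ r, 0 < r → r ≤ (1/2 : ℝ) → ∀ u : Kˣ, w (u - 1) ≤ r → w (g u - 1) ≤ r := by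
    intro r h0 hr u hu
    rw [hg, Units.val_div_eq_div_val, smul_val]
    refine hw.div_mem h0.le (by linarith) ?_ hu
    rw [← map_one σ, ← map_sub, hinv]; exact hu
  have hVf : V ⊓ f.ker = V.map g := by
    apply le_antisymm
    · rintro a ⟨haV, haf⟩
      refine hw.approx g f.ker hfg (1/2) (by norm_num) (by norm_num) hpg ?_ a haf haV
      intro r h0 hr a haf har
      obtain ⟨y, t, hy, ht, hxy⟩ := hH σ hσ ((a : K) - 1)
      have htr := hw.prod_close Finset.univ (fun h : K ≃ₐ[F] K => h ((a : K) - 1)) h0.le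
        (by linarith) (fun h _ => by rw [hinv]; exact har)
      have e1 : ∏ h : K ≃ₐ[F] K, (1 + h ((a : K) - 1)) = 1 := by
        simp only [map_sub, map_one, add_sub_cancel]
        rw [← hfv, show f a = 1 from haf]; rfl
      rw [e1, sub_self, zero_sub, hw.neg] at htr
      obtain ⟨b, hb⟩ := hw.unit (y := y) (r := 1/2) (by norm_num) ((hy.trans har).trans hr)
      have hb1 : w ((b : K) - 1) ≤ r := by rw [hb, add_sub_cancel_left]; exact hy.trans har
      refine ⟨b, hb1, ?_⟩
      have hsb : w (σ (b : K) - 1) ≤ r := by rw [← map_one σ, ← map_sub, hinv]; exact hb1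
      have e2 : ((a / g b : Kˣ) : K) - 1 = (a * b) / σ (b : K) - 1 := by
        rw [hg, div_div_eq_mul_div, Units.val_div_eq_div_val, Units.val_mul, smul_val]
      rw [e2]
      refine hw.div_close (by positivity) (by linarith : r < 1) hsb ?_
      have e3 : (a : K) * b - σ (b : K) = t + (a - 1) * y := by
        have h1 : (a : K) = 1 + (t + (σ y - y)) := by rw [← hxy]; ring
        rw [hb, map_add, map_one]
        linear_combination h1
      rw [e3]
      refine (hw.add _ _).trans (max_le ((ht.trans htr).trans (by gcongr))
        ((hw.mul _ _).trans ?_))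
      have := hw.nonneg y
      have := hy.trans har
      have h6 : w ((a : K) - 1) * w y ≤ r * r := by gcongr
      refine h6.trans (by gcongr)
    · rintro _ ⟨x, hx, rfl⟩
      exact ⟨hpg _ (by norm_num) le_rfl _ hx, hfg x⟩
  have hVg : V ⊓ g.ker = V.map f := by
    apply le_antisymm
    · rintro a ⟨haV, haf⟩
      refine hw.approx f g.ker hgf (1/2) (by norm_num) (by norm_num) hpf ?_ a haf haV
      intro r h0 hr a hag har
      rw [hkerg, mem_range_inc] at hag
      obtain ⟨y, hy, hyx⟩ := hN ((a : K) - 1) (fun h => by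
        rw [map_sub, map_one, ← smul_val, hag])
      obtain ⟨b, hb⟩ := hw.unit (y := y) (r := 1/2) (by norm_num) ((hy.trans har).trans hr)
      have hb1 : w ((b : K) - 1) ≤ r := by rw [hb, add_sub_cancel_left]; exact hy.trans har
      refine ⟨b, hb1, ?_⟩
      rw [Units.val_div_eq_div_val]
      refine hw.div_close (by positivity) (by linarith : r < 1) (hpf r h0 hr b hb1) ?_
      have htr := hw.prod_close Finset.univ (fun h : K ≃ₐ[F] K => h y) h0.le
        (by linarith) (fun h _ => by rw [hinv]; exact hy.trans har)
      rw [hyx] at htr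
      have e1 : ∏ h : K ≃ₐ[F] K, (1 + h y) = f b := by
        rw [hfv, hb]; simp
      rw [e1, sub_sub_sub_cancel_right, ← hw.neg, neg_sub] at htr
      exact htr.trans (by gcongr)
    · rintro _ ⟨x, hx, rfl⟩
      exact ⟨hpf _ (by norm_num) le_rfl _ hx, hgf x⟩
  have main := (herbrand f g hfg hgf hw.sgp_le hUf hUg hVf hVg hw.sgp_fin).1
  have hL : (U.map f).relIndex (U ⊓ g.ker) = ((uni p K).map (nm F K)).relIndex (uni p F) := by
    have e1 : U.map f = ((uni p K).map (nm F K)).map (inc F K) := by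
      rw [Subgroup.map_map]
    have e2 : U ⊓ g.ker = (uni p F).map (inc F K) := by
      rw [hkerg]
      ext u
      constructor
      · rintro ⟨hu, x, rfl⟩
        exact ⟨x, (inc_mem_uni p).1 hu, rfl⟩
      · rintro ⟨x, hx, rfl⟩
        exact ⟨(inc_mem_uni p).2 hx, x, rfl⟩
    rw [e1, e2, Subgroup.relIndex_map_map_of_injective _ _ (inc_inj F K)]
  have hkf : U ⊓ f.ker = (⊤ : Subgroup Kˣ).map g := by
    apply le_antisymm
    · rintro v ⟨-, hv⟩
      obtain ⟨z, -, hz⟩ := H90 (E := F) (L := K) (fun a b => by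
          obtain ⟨i, rfl⟩ := hσ a
          obtain ⟨j, rfl⟩ := hσ b
          simp only [← zpow_add, add_comm]) ⊥ σ (orderOf σ) (fun h => by
          obtain ⟨i, hi⟩ := mem_powers_iff_mem_zpowers.2 (hσ h)
          exact ⟨i, 1, Subgroup.one_mem _, by simpa using hi.symm⟩)
        (by
          rintro i j h hh h' hh' heq
          rw [Subgroup.mem_bot] at hh hh'
          subst hh hh'
          simpa [pow_eq_pow_iff_modEq] using heq) v (by
          rintro h hh
          rw [Subgroup.mem_bot] at hh
          rw [hh, one_smul]) (by
          have : f v = 1 := hv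
          rw [hf, ← IsCyclic.image_range_orderOf hσ, Finset.prod_image] at this
          · exact this
          intro i hi j hj hij
          exact pow_injOn_Iio_orderOf (by simpa using hi) (by simpa using hj) hij)
      exact ⟨z, trivial, hz⟩
    · rintro _ ⟨x, -, rfl⟩
      exact ⟨hgU x, hfg x⟩
  have hR : (U.map g).relIndex (U ⊓ f.ker) = eI p F K := by
    rw [hkf, Subgroup.relIndex_map_map, hkerg, eI]
    have e1 : gam p F = ((inc F K).range).map (nvU p K) := by
      ext x
      constructor
      · rintro ⟨y, rfl⟩
        exact ⟨inc F K y, ⟨y, rfl⟩, by ext; simp [nv_algebraMap]⟩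
      · rintro ⟨_, ⟨y, rfl⟩, rfl⟩
        exact ⟨y, by ext; simp [nv_algebraMap]⟩
    have e2 : gam p K = (⊤ : Subgroup Kˣ).map (nvU p K) := MonoidHom.range_eq_map _
    rw [e1, e2, Subgroup.relIndex_map_map, hU, uni, sup_comm]
    simp
  rw [← hL, main, hR]
end cyc
end LCF

set_option linter.style.haveILetI false
set_option linter.unusedSectionVars false
namespace LCF
variable (p : ℕ) [Fact p.Prime]
lemma exists_cyc_quot {G : Type*} [Group G] [Finite G] (hc : ∀ a b : G, a * b = b * a) {σ : G}
    (hne : σ ≠ 1) : ∃ (H : Subgroup G) (τ : G) (d : ℕ),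
    (∀ g : G, ∃ i : ℕ, i < d ∧ ∃ h ∈ H, g = τ ^ i * h) ∧
    (∀ i j : ℕ, ∀ h ∈ H, ∀ h' ∈ H, τ ^ i * h = τ ^ j * h' → i ≡ j [MOD d]) ∧
    Function.Bijective (fun x : Fin d × H => τ ^ (x.1 : ℕ) * (x.2 : G)) ∧
    Nat.card G = d * Nat.card H ∧
    ∀ j : ℕ, ∀ h ∈ H, σ = τ ^ j * h → ¬ d ∣ j := by
  letI : CommGroup (G) := { mul_comm := hc }
  obtain ⟨χ, hχ⟩ := CommGroup.exists_apply_ne_one_of_hasEnoughRootsOfUnity (G) ℂ hne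
  let H := χ.ker
  haveI : Finite χ.range := Finite.of_surjective _ χ.rangeRestrict_surjective
  haveI : IsCyclic χ.range := inferInstance
  obtain ⟨⟨_, τ, rfl⟩, hτ⟩ := IsCyclic.exists_generator (α := χ.range)
  have hfo : IsOfFinOrder (χ τ) := MonoidHom.isOfFinOrder χ (isOfFinOrder_of_finite τ)
  set d := orderOf (χ τ) with hd
  have hd0 : 0 < d := by
    rw [hd]; exact hfo.orderOf_pos
  have hcov : ∀ g : G, ∃ i : ℕ, i < d ∧ ∃ h ∈ H, g = τ ^ i * h := by
    intro g
    obtain ⟨k, hk⟩ := hτ ⟨χ g, g, rfl⟩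
    have hk' : χ τ ^ k = χ g := congrArg Subtype.val hk
    have : χ g ∈ Submonoid.powers (χ τ) :=
      (hfo.mem_powers_iff_mem_zpowers).2 ⟨k, hk'⟩
    obtain ⟨i, hi⟩ := this
    refine ⟨i % d, Nat.mod_lt _ hd0, (τ ^ (i % d))⁻¹ * g, ?_, by simp⟩
    simp only [H, MonoidHom.mem_ker, map_mul, map_inv, map_pow]
    rw [hd, pow_mod_orderOf, ← hi]; simp
  have hdm : ∀ i j : ℕ, ∀ h ∈ H, ∀ h' ∈ H, τ ^ i * h = τ ^ j * h' → i ≡ j [MOD d] := by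
    intro i j h hh h' hh' heq
    have := congrArg χ heq
    rw [map_mul, map_mul, MonoidHom.mem_ker.1 hh, MonoidHom.mem_ker.1 hh'] at this
    simpa [pow_eq_pow_iff_modEq] using this
  have hbij : Function.Bijective (fun x : Fin d × H => τ ^ (x.1 : ℕ) * (x.2 : G)) := by
    constructor
    · rintro ⟨i, h⟩ ⟨j, h'⟩ heq
      simp only at heq
      have hij := hdm _ _ _ h.2 _ h'.2 heq
      have : i = j := Fin.ext (Nat.ModEq.eq_of_lt_of_lt hij i.2 j.2)
      subst this
      have := mul_left_cancel heq
      exact Prod.ext rfl (Subtype.ext this)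
    · intro g
      obtain ⟨i, hi, h, hh, rfl⟩ := hcov g
      exact ⟨(⟨i, hi⟩, ⟨h, hh⟩), rfl⟩
  have hcard : Nat.card (G) = d * Nat.card H := by
    rw [← Nat.card_eq_of_bijective _ hbij, Nat.card_prod, Nat.card_fin]
  refine ⟨H, τ, d, hcov, hdm, hbij, hcard, fun j h hh hσ hdj => hχ ?_⟩
  rw [hσ, map_mul, MonoidHom.mem_ker.1 hh, map_pow, mul_one]
  exact orderOf_dvd_iff_pow_eq_one.1 hdj

variable (E : Type*) [Field E] [Algebra ℚ_[p] E] [FiniteDimensional ℚ_[p] E]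
variable (L : Type*) [Field L] [Algebra ℚ_[p] L] [FiniteDimensional ℚ_[p] L]
variable [Algebra E L] [IsScalarTower ℚ_[p] E L]

lemma eI_dvd_of_pow (π : Lˣ) (hgen : ∀ x : Lˣ, ∃ k : ℤ, nv p L (x : L) = nv p L (π : L) ^ k)
    (k : ℕ) (hk : nvU p L π ^ k ∈ gam p E) : eI p E L ∣ k := by
  rw [eI, Subgroup.relIndex, Subgroup.index]
  set Q := gam p L ⧸ (gam p E).subgroupOf (gam p L)
  let x : gam p L := ⟨nvU p L π, ⟨π, rfl⟩⟩
  have hx : ∀ q : Q, q ∈ Subgroup.zpowers (x : Q) := by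
    intro q
    induction q using QuotientGroup.induction_on with
    | H z =>
      obtain ⟨_, y, rfl⟩ := z
      obtain ⟨k, hk⟩ := hgen y
      refine ⟨k, ?_⟩
      simp only [← QuotientGroup.mk_zpow]
      congr 1
      ext
      simp [x, hk]
  rw [← orderOf_eq_card_of_forall_mem_zpowers hx]
  apply orderOf_dvd_of_pow_eq_one
  rw [← QuotientGroup.mk_pow, QuotientGroup.eq_one_iff, Subgroup.mem_subgroupOf]
  exact hk

variable [FiniteDimensional E L] [IsGalois E L]

theorem key (hc : ∀ a b : L ≃ₐ[E] L, a * b = b * a) (φ : Lˣ →* Lˣ)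
    (hφn : ∀ x, nv p L ((φ x : Lˣ) : L) = nv p L (x : L))
    (hφc : ∀ (g : L ≃ₐ[E] L) x, φ (g • x) = g • φ x) (σ : L ≃ₐ[E] L) (π π' : Lˣ)
    (hπ' : φ π' = π') (hπ : φ π = σ • π)
    (hgen : ∀ x : Lˣ, ∃ k : ℤ, nv p L (x : L) = nv p L (π : L) ^ k)
    (hnm : nm E L π = nm E L π') (he : eI p E L = Module.finrank E L) : σ = 1 := by
  classical
  by_contra hne
  obtain ⟨H, τ, d, hcov, hdm, hbij, hcard, hnd⟩ := exists_cyc_quot hc hne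
  let NH : Lˣ → Lˣ := fun x => ∏ h : H, (h : L ≃ₐ[E] L) • x
  have hNHfix : ∀ x, ∀ h ∈ H, h • NH x = NH x := by
    intro x h hh
    simp only [NH, Finset.smul_prod', smul_smul]
    exact Fintype.prod_equiv (Equiv.mulLeft (⟨h, hh⟩ : H)) _ _
      (fun k => by rw [Equiv.coe_mulLeft, Subgroup.coe_mul])
  have hNHd : ∀ x, ∏ j ∈ Finset.range d, τ ^ j • NH x = inc E L (nm E L x) := by
    intro x
    rw [inc_nm, ← Fin.prod_univ_eq_prod_range (fun j => τ ^ j • NH x) d]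
    simp only [NH, Finset.smul_prod', smul_smul]
    rw [← Finset.prod_product', Finset.univ_product_univ]
    exact Fintype.prod_bijective _ hbij _ _ (fun k => rfl)
  have hφNH : ∀ x, φ (NH x) = NH (φ x) := by
    intro x
    simp only [NH, map_prod, hφc]
  have hgNH : ∀ (g : L ≃ₐ[E] L) x, NH (g • x) = g • NH x := by
    intro g x
    simp only [NH, Finset.smul_prod', smul_smul, hc g]
  obtain ⟨z, hzH, hz⟩ := H90 hc H τ d (fun g => by
      obtain ⟨i, -, h⟩ := hcov g; exact ⟨i, h⟩) hdm (NH π / NH π')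
    (fun h hh => by rw [smul_div', hNHfix _ h hh, hNHfix _ h hh])
    (by simp only [smul_div', Finset.prod_div_distrib, hNHd, hnm, div_self'])
  obtain ⟨j, -, h, hh, hσ⟩ := hcov σ
  set P := ∏ i ∈ Finset.range j, τ ^ i • NH π with hP
  have hPτ : τ • P / P = τ ^ j • NH π / NH π := by
    have := Finset.prod_range_div (fun i => τ ^ i • NH π) j
    simp only [pow_zero, one_smul] at this
    rw [← this, Finset.prod_div_distrib, hP, Finset.smul_prod']
    simp only [smul_smul, pow_succ']
  have h1 : φ (NH π) = τ ^ j • NH π := by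
    rw [hφNH, hπ, hgNH, hσ, mul_smul, hNHfix _ h hh]
  have h2 : φ (NH π') = NH π' := by rw [hφNH, hπ']
  have h3 : τ • (φ z / z) / (φ z / z) = τ • P / P := by
    rw [hPτ]
    have e : φ (τ • z / z) / (τ • z / z) = τ ^ j • NH π / NH π := by
      rw [hz, map_div, h1, h2, div_div_div_cancel_right]
    rw [← e, map_div, hφc, smul_div', div_div_div_comm]
  set Q := (φ z / z) / P with hQ
  have hQτ : τ • Q = Q := by
    rw [hQ, smul_div']
    rw [div_eq_div_iff_mul_eq_mul] at h3 ⊢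
    rw [h3]; exact mul_comm _ _
  have hQH : ∀ h ∈ H, h • Q = Q := by
    intro h hh
    rw [hQ, smul_div', smul_div', ← hφc, hzH h hh, hP, Finset.smul_prod']
    congr 1
    refine Finset.prod_congr rfl fun i _ => ?_
    rw [smul_smul, hc h, mul_smul, hNHfix _ h hh]
  have hQE : Q ∈ (inc E L).range := by
    rw [mem_range_inc]
    intro g
    obtain ⟨i, -, k, hk, rfl⟩ := hcov g
    rw [mul_smul, hQH k hk]
    have : τ ∈ MulAction.stabilizer (L ≃ₐ[E] L) Q := hQτ
    exact Subgroup.pow_mem _ this i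
  have hnvg : ∀ (g : L ≃ₐ[E] L) x, nvU p L (g • x) = nvU p L x := by
    intro g x; ext; rw [nvU_val, nvU_val, smul_val, nv_aut]
  have hnvP : nvU p L P = nvU p L π ^ (Nat.card H * j) := by
    simp only [hP, NH, map_prod, Finset.smul_prod', hnvg, Finset.prod_const, Finset.card_univ,
      Finset.card_range, Nat.card_eq_fintype_card, pow_mul]
  have hdvd : eI p E L ∣ Nat.card H * j := by
    apply eI_dvd_of_pow p E L π hgen
    rw [← hnvP]
    obtain ⟨x, hx⟩ := hQE
    refine ⟨x⁻¹, ?_⟩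
    have e1 : nvU p E x⁻¹ = nvU p L (inc E L x)⁻¹ := by
      ext; simp [nv_algebraMap]
    have e2 : nvU p L (φ z) = nvU p L z := by ext; exact hφn z
    rw [e1, hx, hQ, inv_div, map_div, map_div, e2, div_self', div_one]
  rw [he, ← IsGalois.card_aut_eq_finrank, hcard, mul_comm] at hdvd
  have hdj : d ∣ j := Nat.dvd_of_mul_dvd_mul_left Nat.card_pos hdvd
  exact hnd j h hh hσ hdj
end LCF

set_option linter.style.haveILetI false
set_option linter.unusedSectionVars false
namespace LCF
variable (p : ℕ) [Fact p.Prime]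
section res
variable (K : Type*) [Field K] [Algebra ℚ_[p] K] [FiniteDimensional ℚ_[p] K]

def O : ValuationSubring K where
  carrier := {x | nv p K x ≤ 1}
  mul_mem' {a b} ha hb := by
    simp only [Set.mem_ofPred_eq, map_mul] at *
    exact mul_le_one₀ ha (nv_nonneg p b) hb
  one_mem' := by simp
  add_mem' {a b} ha hb := (nv_add_le p a b).trans (max_le ha hb)
  zero_mem' := by simp
  neg_mem' {a} ha := by simpa [nv_neg] using ha
  mem_or_inv_mem' x := by
    simp only [Set.mem_ofPred_eq, map_inv₀]
    rcases le_total (nv p K x) 1 with h | h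
    · left; exact h
    · right; exact inv_le_one_of_one_le₀ h

variable {K}
lemma mem_O {x : K} : x ∈ O p K ↔ nv p K x ≤ 1 := Iff.rfl
variable (K)

abbrev R : Type _ := IsLocalRing.ResidueField (O p K)
noncomputable abbrev rd : O p K →+* R p K := IsLocalRing.residue (O p K)
variable {K}
lemma rd_eq_zero {x : O p K} : rd p K x = 0 ↔ nv p K (x : K) < 1 := by
  rw [IsLocalRing.residue_eq_zero_iff, IsLocalRing.mem_maximalIdeal, mem_nonunits_iff]
  constructor
  · intro h
    refine lt_of_le_of_ne x.2 fun h1 => h ?_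
    have hx : (x : K) ≠ 0 := by
      intro h0; rw [h0] at h1; simp at h1
    refine IsUnit.of_mul_eq_one (⟨(x : K)⁻¹, ?_⟩ : O p K) ?_
    · rw [mem_O, map_inv₀, h1, inv_one]
    · ext; simp [hx]
  · rintro h ⟨u, rfl⟩
    have h2 : nv p K ((u⁻¹ : (O p K)ˣ) : O p K) ≤ 1 := ((u⁻¹ : (O p K)ˣ) : O p K).2
    have h3 : nv p K ((u : O p K) : K) * nv p K ((u⁻¹ : (O p K)ˣ) : O p K) = 1 := by
      rw [← map_mul, ← MulMemClass.coe_mul, Units.mul_inv]; simp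
    have h4 := nv_nonneg p (((u⁻¹ : (O p K)ˣ) : O p K) : K)
    nlinarith [nv_nonneg p ((u : O p K) : K)]

lemma rd_eq {x y : O p K} : rd p K x = rd p K y ↔ nv p K ((x : K) - y) < 1 := by
  rw [← sub_eq_zero, ← map_sub, rd_eq_zero]; rfl

lemma rd_ne_zero {x : O p K} : rd p K x ≠ 0 ↔ nv p K (x : K) = 1 := by
  rw [Ne, rd_eq_zero, not_lt]
  exact ⟨fun h => le_antisymm x.2 h, fun h => h.ge⟩

lemma rd_surj : Function.Surjective (rd p K) := IsLocalRing.residue_surjective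

instance : Finite (R p K) := by
  obtain ⟨S, hS, h⟩ := nv_tb p (F := K) 1 one_pos
  haveI := hS.to_subtype
  have : ∀ k : R p K, ∃ s : S, ∃ x : O p K, rd p K x = k ∧ nv p K ((x : K) - s) < 1 := by
    intro k
    obtain ⟨x, rfl⟩ := rd_surj p k
    obtain ⟨s, hs, hx⟩ := h x x.2
    exact ⟨⟨s, hs⟩, x, rfl, hx⟩
  choose f x hx hf using this
  refine Finite.of_injective f fun a b hab => ?_
  rw [← hx a, ← hx b, rd_eq]
  have h1 := hf a
  have h2 := hf b
  rw [hab] at h1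
  have := nv_sub_le p ((x a : K) - f b) ((x b : K) - f b)
  rw [sub_sub_sub_cancel_right] at this
  exact this.trans_lt (max_lt h1 h2)

lemma rd_natCast_p : (p : R p K) = 0 := by
  rw [← map_natCast (rd p K), rd_eq_zero]
  exact_mod_cast nv_p_lt p (F := K)

instance : CharP (R p K) p :=
  (CharP.charP_iff_prime_eq_zero Fact.out).2 (rd_natCast_p p)
end res

section act
variable {F : Type*} [Field F] [Algebra ℚ_[p] F] [FiniteDimensional ℚ_[p] F]
variable {K : Type*} [Field K] [Algebra ℚ_[p] K] [FiniteDimensional ℚ_[p] K]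
variable [Algebra F K] [IsScalarTower ℚ_[p] F K]

instance actO : MulSemiringAction (K ≃ₐ[F] K) (O p K) where
  smul g x := ⟨g x, by rw [mem_O, nv_aut]; exact x.2⟩
  one_smul x := rfl
  mul_smul g h x := rfl
  smul_zero g := Subtype.ext (map_zero g)
  smul_add g x y := Subtype.ext (map_add g _ _)
  smul_one g := Subtype.ext (map_one g)
  smul_mul g x y := Subtype.ext (map_mul g _ _)

lemma actO_val (g : K ≃ₐ[F] K) (x : O p K) : ((g • x : O p K) : K) = g x := rfl

lemma rd_smul (g : K ≃ₐ[F] K) (x : O p K) : rd p K (g • x) = g • rd p K x :=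
  IsLocalRing.ResidueField.residue_smul _ g x

def inert (g : K ≃ₐ[F] K) : Prop := ∀ x, nv p K x ≤ 1 → nv p K (g x - x) < 1

lemma inert_iff (g : K ≃ₐ[F] K) : inert p g ↔ ∀ k : R p K, g • k = k := by
  constructor
  · intro h k
    obtain ⟨x, rfl⟩ := rd_surj p k
    rw [← rd_smul, rd_eq]; exact h x x.2
  · intro h x hx
    have := h (rd p K ⟨x, hx⟩)
    rwa [← rd_smul, rd_eq] at this

lemma trS [FiniteDimensional F K] (S : Subgroup (K ≃ₐ[F] K)) [Fintype S] (hS : ∀ s ∈ S, inert p s → s = 1) (y : Kˣ) :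
    ∃ t, nv p K t ≤ 1 ∧ nv p K (∑ s : S, s.1 (y * t)) = nv p K (y : K) := by
  classical
  have hco : ∀ s : S, nv p K (s.1 (y : K) / y) = 1 := by
    intro s
    rw [map_div₀, nv_aut, div_self (nv_units_pos p y).ne']
  obtain ⟨a, ha⟩ : ∃ a : S → O p K, ∀ s, (a s : K) = s.1 (y : K) / y :=
    ⟨fun s => ⟨s.1 (y : K) / y, (hco s).le⟩, fun s => rfl⟩
  let f : S → (R p K →* R p K) := fun s =>
    (MulSemiringAction.toRingHom (K ≃ₐ[F] K) (R p K) s.1).toMonoidHom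
  have hfv : ∀ s k, f s k = s.1 • k := fun s k => rfl
  have hinj : Function.Injective f := by
    intro s t hst
    have : (t.1)⁻¹ * s.1 = 1 := by
      apply hS _ (S.mul_mem (S.inv_mem t.2) s.2)
      rw [inert_iff]
      intro k
      have := DFunLike.congr_fun hst k
      rw [hfv, hfv] at this
      rw [mul_smul, this, inv_smul_smul]
    rw [inv_mul_eq_one] at this
    exact Subtype.ext this.symm
  have hli := (linearIndependent_monoidHom (R p K) (R p K)).comp f hinj
  rw [Fintype.linearIndependent_iff] at hli
  have hne : ∃ k : R p K, ∑ s : S, rd p K (a s) * (s.1 • k) ≠ 0 := by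
    by_contra hcon
    push Not at hcon
    have := hli (fun s => rd p K (a s)) (by
      funext k
      simpa [hfv] using hcon k) 1
    have h1 : rd p K (a 1) ≠ 0 := by
      rw [rd_ne_zero, ha]; exact hco 1
    exact h1 this
  obtain ⟨k, hk⟩ := hne
  obtain ⟨t, rfl⟩ := rd_surj p k
  refine ⟨t, t.2, ?_⟩
  have hk2 : ∑ s : S, rd p K (a s) * (s.1 • rd p K t) = rd p K (∑ s : S, a s * (s.1 • t)) := by
    rw [map_sum]
    exact Finset.sum_congr rfl fun s _ => by rw [map_mul, rd_smul]
  rw [hk2, rd_ne_zero] at hk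
  have : ∑ s : S, s.1 (y * t : K) = y * ((∑ s : S, a s * (s.1 • t) : O p K) : K) := by
    have e : ((∑ s : S, a s * (s.1 • t) : O p K) : K) = ∑ s : S, (s.1 (y : K) / y) * s.1 (t : K) := by
      rw [AddSubmonoidClass.coe_finset_sum]
      exact Finset.sum_congr rfl fun s _ => by rw [MulMemClass.coe_mul, ha, actO_val]
    rw [e, Finset.mul_sum]
    refine Finset.sum_congr rfl fun s _ => ?_
    rw [map_mul]
    field_simp [y.ne_zero]
  rw [this, map_mul, hk, mul_one]

lemma fix_unif [FiniteDimensional F K] (S : Subgroup (K ≃ₐ[F] K)) (hS : ∀ s ∈ S, inert p s → s = 1) (y : Kˣ) :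
    ∃ x : Kˣ, (∀ s ∈ S, s • x = x) ∧ nv p K (x : K) = nv p K (y : K) := by
  classical
  haveI : Fintype S := Fintype.ofFinite S
  obtain ⟨t, -, ht⟩ := trS p S hS y
  have h0 : ∑ s : S, s.1 (y * t : K) ≠ 0 := by
    intro h0; rw [h0, map_zero] at ht; exact (nv_units_pos p y).ne ht
  refine ⟨Units.mk0 _ h0, fun s hs => ?_, ht⟩
  ext
  change s (∑ s : S, s.1 (y * t : K)) = ∑ s : S, s.1 (y * t : K)
  rw [map_sum]
  exact Fintype.sum_equiv (Equiv.mulLeft (⟨s, hs⟩ : S)) _ _ fun x => rfl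

variable [FiniteDimensional F K] [IsGalois F K]

lemma eI_one_of_inert (h : ∀ s : K ≃ₐ[F] K, inert p s → s = 1) : eI p F K = 1 := by
  rw [eI, Subgroup.relIndex_eq_one]
  rintro _ ⟨y, rfl⟩
  obtain ⟨x, hx, hxy⟩ := fix_unif p (⊤ : Subgroup (K ≃ₐ[F] K)) (fun s _ => h s) y
  obtain ⟨c, rfl⟩ := (mem_range_inc F K).2 fun g => hx g trivial
  refine ⟨c, ?_⟩
  ext
  rw [nvU_val, nvU_val, ← hxy, inc_val, nv_algebraMap]

/-- fixed residues descend -/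
lemma fix_res (h : ∀ s : K ≃ₐ[F] K, inert p s → s = 1) (z : K) (hz : nv p K z ≤ 1)
    (hfix : ∀ s : K ≃ₐ[F] K, nv p K (s z - z) < 1) :
    ∃ c : F, nv p F c ≤ 1 ∧ nv p K (z - algebraMap F K c) < 1 := by
  classical
  obtain ⟨t, ht1, ht⟩ := trS p (⊤ : Subgroup (K ≃ₐ[F] K)) (fun s _ => h s) 1
  have hsum : ∀ x : K, ∑ s : (⊤ : Subgroup (K ≃ₐ[F] K)), s.1 x = algebraMap F K (Algebra.trace F K x) := by
    intro x
    rw [trace_eq_sum_automorphisms]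
    exact Fintype.sum_equiv Subgroup.topEquiv.toEquiv _ _ fun s => rfl
  rw [hsum] at ht
  simp only [Units.val_one, one_mul, map_one] at ht
  have ht' : nv p F (Algebra.trace F K t) = 1 := by rwa [nv_algebraMap] at ht
  have ht0 : algebraMap F K (Algebra.trace F K t) ≠ 0 := by
    intro h0; rw [h0] at ht; simp at ht
  have key : nv p K (z * algebraMap F K (Algebra.trace F K t)
      - algebraMap F K (Algebra.trace F K (z * t))) < 1 := by
    rw [← hsum, ← hsum, Finset.mul_sum, ← Finset.sum_sub_distrib]
    have : ∀ s ∈ (Finset.univ : Finset (⊤ : Subgroup (K ≃ₐ[F] K))),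
        nv p K (z * s.1 t - s.1 (z * t)) < 1 := by
      intro s _
      rw [map_mul, ← sub_mul, map_mul, nv_aut, nv_sub_comm]
      nlinarith [hfix s.1, nv_nonneg p t, nv_nonneg p (s.1 z - z)]
    obtain ⟨s0, -, hs0⟩ := Finset.exists_max_image Finset.univ
      (fun s : (⊤ : Subgroup (K ≃ₐ[F] K)) => nv p K (z * s.1 t - s.1 (z * t))) ⟨1, by simp⟩
    exact (nv_sum_le p _ _ (nv_nonneg p _) hs0).trans_lt (this s0 (by simp))
  have e : z - algebraMap F K (Algebra.trace F K (z*t) / Algebra.trace F K t)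
      = (z * algebraMap F K (Algebra.trace F K t)
      - algebraMap F K (Algebra.trace F K (z * t))) / algebraMap F K (Algebra.trace F K t) := by
    rw [map_div₀]; field_simp
  have hlt : nv p K (z - algebraMap F K (Algebra.trace F K (z*t) / Algebra.trace F K t)) < 1 := by
    rw [e, map_div₀, ht, div_one]; exact key
  refine ⟨_, ?_, hlt⟩
  have := nv_sub_le p z (z - algebraMap F K (Algebra.trace F K (z*t) / Algebra.trace F K t))
  rw [sub_sub_cancel, nv_algebraMap] at this
  exact this.trans (max_le hz hlt.le)
end act
end LCF

set_option linter.style.haveILetI false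
set_option linter.unusedSectionVars false
namespace LCF
variable (p : ℕ) [Fact p.Prime]
section act
variable {F : Type*} [Field F] [Algebra ℚ_[p] F] [FiniteDimensional ℚ_[p] F]
variable {K : Type*} [Field K] [Algebra ℚ_[p] K] [FiniteDimensional ℚ_[p] K]
variable [Algebra F K] [IsScalarTower ℚ_[p] F K]

lemma root_one {η : K} {N : ℕ} (hN : ¬ p ∣ N) (hηN : η ^ N = 1) (hηlt : nv p K (η - 1) < 1) :
    η = 1 := by
  have hN0 : N ≠ 0 := by rintro rfl; exact hN (dvd_zero p)
  have hη1 : nv p K η = 1 := by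
    have : nv p K η ^ N = 1 := by rw [← map_pow, hηN, map_one]
    exact (pow_eq_one_iff_of_nonneg (nv_nonneg p _) hN0).1 this
  by_contra hne
  have hηne : η - 1 ≠ 0 := sub_ne_zero.2 hne
  have hsum : ∑ i ∈ Finset.range N, η ^ i = 0 := by
    have := geom_sum_mul η N
    rw [hηN, sub_self] at this
    exact (mul_eq_zero.1 this).resolve_right hηne
  have hr : rd p K ⟨η, hη1.le⟩ = 1 := by
    rw [← map_one (rd p K), rd_eq]; exact hηlt
  have h2 : (N : R p K) = 0 := by
    have e : (∑ i ∈ Finset.range N, (⟨η, hη1.le⟩ : O p K) ^ i) = 0 := by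
      apply Subtype.ext
      rw [AddSubmonoidClass.coe_finsetSum]
      simpa using hsum
    have := congrArg (rd p K) e
    rw [map_sum, map_zero] at this
    simpa [hr] using this
  exact hN ((CharP.cast_eq_zero_iff (R p K) p N).1 h2)

lemma inert_root {σ : K ≃ₐ[F] K} (h : inert p σ) {ζ : K} {N : ℕ} (hN : ¬ p ∣ N) (hζ : ζ ^ N = 1) :
    σ ζ = ζ := by
  have hN0 : N ≠ 0 := by rintro rfl; exact hN (dvd_zero p)
  have hζ0 : ζ ≠ 0 := by rintro rfl; rw [zero_pow hN0] at hζ; exact zero_ne_one hζ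
  have hnv : nv p K ζ = 1 := by
    have : nv p K ζ ^ N = 1 := by rw [← map_pow, hζ, map_one]
    exact (pow_eq_one_iff_of_nonneg (nv_nonneg p _) hN0).1 this
  have hηN : (σ ζ / ζ) ^ N = 1 := by rw [div_pow, ← map_pow, hζ, map_one, div_one]
  have hηlt : nv p K (σ ζ / ζ - 1) < 1 := by
    have : σ ζ / ζ - 1 = (σ ζ - ζ) / ζ := by field_simp
    rw [this, map_div₀, hnv, div_one]; exact h ζ hnv.le
  exact (div_eq_one_iff_eq hζ0).1 (root_one p hN hηN hηlt)

variable [FiniteDimensional F K] [IsGalois F K]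

lemma inert_eq_one (he : eI p F K = 1) {σ : K ≃ₐ[F] K} (h : inert p σ) : σ = 1 := by
  have hg := gam_eq_of_eI p F K he
  obtain ⟨π, hπ1, hπ⟩ := exists_unif p (F := F)
  set c := nv p F (π : F) with hc
  have hc0 : 0 < c := nv_units_pos p π
  have hdisc : ∀ x : K, nv p K x < 1 → nv p K x ≤ c := by
    intro x hx
    by_cases h0 : x = 0
    · rw [h0, map_zero]; exact hc0.le
    have : nvU p K (Units.mk0 x h0) ∈ gam p F := by rw [hg]; exact ⟨_, rfl⟩
    obtain ⟨y, hy⟩ := this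
    have hy' : nv p F (y : F) = nv p K x := by
      have := congrArg Units.val hy
      simpa using this
    obtain ⟨k, hk⟩ := hπ y
    rw [← hy', hk]
    rw [← hy', hk] at hx
    have : 0 < k := by
      by_contra hk0
      push Not at hk0
      have := one_le_zpow_of_nonpos₀ hc0 hπ1.le hk0
      linarith
    calc c ^ k ≤ c ^ (1 : ℤ) := zpow_le_zpow_right_of_le_one₀ hc0 hπ1.le (by omega)
      _ = c := zpow_one c
  have hπK : nv p K (algebraMap F K π) = c := nv_algebraMap p _
  have hπ0 : algebraMap F K (π : F) ≠ 0 := by simp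
  set Q := Nat.card (R p K) with hQ
  haveI : Fintype (R p K) := Fintype.ofFinite _
  have hQ' : Fintype.card (R p K) = Q := by rw [hQ, Nat.card_eq_fintype_card]
  have hP : ∀ k : ℕ, ∀ z : K, nv p K z ≤ 1 → nv p K (σ z - z) ≤ c ^ k := by
    intro k
    induction k with
    | zero => intro z hz; rw [pow_zero]; exact (h z hz).le
    | succ k ih =>
      intro z hz
      have h1 : nv p K (z - z ^ Q) < 1 := by
        have := FiniteField.pow_card (rd p K ⟨z, hz⟩)
        rw [hQ', ← map_pow, eq_comm, rd_eq] at this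
        exact this
      set y := (z - z ^ Q) / algebraMap F K (π : F) with hy
      have hy1 : nv p K y ≤ 1 := by
        rw [hy, map_div₀, hπK]
        exact div_le_one_of_le₀ (hdisc _ h1) hc0.le
      have hz' : z = z ^ Q + algebraMap F K (π : F) * y := by
        rw [hy]; field_simp; ring
      have hσz : σ z - z = (σ z - z) * (∑ i ∈ Finset.range Q, σ z ^ i * z ^ (Q - 1 - i))
          + algebraMap F K (π : F) * (σ y - y) := by
        rw [mul_comm (σ z - z), Commute.geom_sum₂_mul (Commute.all _ _)]
        conv_lhs => rw [hz']
        rw [map_add, map_mul, map_pow, AlgEquiv.commutes]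
        ring
      rw [hσz]
      refine (nv_add_le p _ _).trans (max_le ?_ ?_)
      · rw [map_mul, pow_succ]
        refine mul_le_mul (ih z hz) (hdisc _ ?_) (nv_nonneg p _) (by positivity)
        have hσ1 : nv p K (σ z) ≤ 1 := by rwa [nv_aut]
        have e : rd p K ⟨σ z, hσ1⟩ = rd p K ⟨z, hz⟩ := by rw [rd_eq]; exact h z hz
        have e2 : rd p K (∑ i ∈ Finset.range Q, (⟨σ z, hσ1⟩ : O p K) ^ i * ⟨z, hz⟩ ^ (Q - 1 - i)) = 0 := by
          rw [map_sum]
          have : ∀ i ∈ Finset.range Q, rd p K ((⟨σ z, hσ1⟩ : O p K) ^ i * ⟨z, hz⟩ ^ (Q - 1 - i))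
              = rd p K ⟨z, hz⟩ ^ (Q - 1) := by
            intro i hi
            rw [Finset.mem_range] at hi
            rw [map_mul, map_pow, map_pow, e, ← pow_add]
            congr 1; omega
          rw [Finset.sum_congr rfl this, Finset.sum_const, Finset.card_range, nsmul_eq_mul,
            ← hQ', FiniteField.cast_card_eq_zero, zero_mul]
        rw [rd_eq_zero, AddSubmonoidClass.coe_finsetSum] at e2
        exact e2
      · rw [map_mul, hπK, pow_succ, mul_comm]
        exact mul_le_mul_of_nonneg_right (ih y hy1) hc0.le
  have hO : ∀ z : K, nv p K z ≤ 1 → σ z = z := by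
    intro z hz
    have : nv p K (σ z - z) ≤ 0 := by
      refine ge_of_tendsto' (tendsto_pow_atTop_nhds_zero_of_lt_one hc0.le hπ1) fun k => hP k z hz
    have := le_antisymm this (nv_nonneg p _)
    rw [map_eq_zero, sub_eq_zero] at this
    exact this
  ext z
  rw [AlgEquiv.one_apply]
  rcases le_total (nv p K z) 1 with h1 | h1
  · exact hO z h1
  · have := hO z⁻¹ (by rw [map_inv₀]; exact inv_le_one_of_one_le₀ h1)
    rw [map_inv₀, inv_inj] at this
    exact this

lemma card_res (h : ∀ s : K ≃ₐ[F] K, inert p s → s = 1) :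
    Nat.card (R p K) = Nat.card (R p F) ^ Module.finrank F K := by
  classical
  haveI : Fintype (R p K) := Fintype.ofFinite _
  haveI : FaithfulSMul (K ≃ₐ[F] K) (R p K) := by
    refine ⟨fun {s t} hst => ?_⟩
    have : t⁻¹ * s = 1 := by
      apply h
      rw [inert_iff]
      intro k
      rw [mul_smul, hst, inv_smul_smul]
    rw [inv_mul_eq_one] at this
    exact this.symm
  have h1 := FixedPoints.finrank_eq_card (K ≃ₐ[F] K) (R p K)
  have h2 := Module.card_eq_pow_finrank (K := FixedPoints.subfield (K ≃ₐ[F] K) (R p K)) (V := R p K)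
  rw [← Nat.card_eq_fintype_card, ← Nat.card_eq_fintype_card, h1, ← Nat.card_eq_fintype_card,
    IsGalois.card_aut_eq_finrank] at h2
  rw [h2]
  congr 1
  symm
  choose l hl using rd_surj p (K := F)
  let j : O p F → O p K := fun x => ⟨algebraMap F K x, by rw [mem_O, nv_algebraMap]; exact x.2⟩
  have hjr : ∀ x y, rd p K (j x) = rd p K (j y) ↔ rd p F x = rd p F y := by
    intro x y
    rw [rd_eq, rd_eq, ← nv_algebraMap p (F := F) (K := K), map_sub (algebraMap F K)]
  have hjf : ∀ x (g : K ≃ₐ[F] K), g • rd p K (j x) = rd p K (j x) := by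
    intro x g
    rw [← rd_smul]
    congr 1
    apply Subtype.ext
    exact g.commutes _
  let f : R p F → FixedPoints.subfield (K ≃ₐ[F] K) (R p K) := fun k => ⟨rd p K (j (l k)), hjf _⟩
  refine Nat.card_eq_of_bijective f ⟨fun a b hab => ?_, fun k => ?_⟩
  · have := congrArg Subtype.val hab
    rw [hjr, hl, hl] at this
    exact this
  · obtain ⟨k, hk⟩ := k
    obtain ⟨z, rfl⟩ := rd_surj p k
    obtain ⟨c, hc1, hc⟩ := fix_res p h z z.2 (fun s => by
      have := hk s
      rw [← rd_smul, rd_eq] at this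
      exact this)
    refine ⟨rd p F ⟨c, hc1⟩, Subtype.ext ?_⟩
    change rd p K (j (l _)) = rd p K z
    rw [(hjr _ _).2 (hl _), eq_comm, rd_eq]
    exact hc
end act
end LCF

set_option linter.style.haveILetI false
set_option linter.unusedSectionVars false
namespace LCF
variable (p : ℕ) [Fact p.Prime]
section tower
lemma lift_aut {F K : Type*} [Field F] [Field K] [Algebra F K] [Normal F K]
    (M : IntermediateField F K) [Normal F M] (s : M ≃ₐ[F] M) :
    ∃ g : K ≃ₐ[F] K, ∀ x : M, ((s x : M) : K) = g x := by
  obtain ⟨g, rfl⟩ := AlgEquiv.restrictNormalHom_surjective (F := F) (K₁ := M) K s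
  exact ⟨g, fun x => AlgEquiv.restrictNormal_commutes g M x⟩

lemma exists_step {F K : Type*} [Field F] [Field K] [Algebra F K] [FiniteDimensional F K]
    [IsGalois F K] (hc : ∀ s t : K ≃ₐ[F] K, s * t = t * s) (h : 1 < Module.finrank F K) :
    ∃ M : IntermediateField F K, IsGalois F M ∧ (∀ s t : M ≃ₐ[F] M, s * t = t * s) ∧
      (Module.finrank M K).Prime := by
  classical
  rw [← IsGalois.card_aut_eq_finrank] at h
  obtain ⟨l, hl, hd⟩ := Nat.exists_prime_and_dvd h.ne'
  haveI : Fact l.Prime := ⟨hl⟩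
  obtain ⟨g, hg⟩ := exists_prime_orderOf_dvd_card' (G := K ≃ₐ[F] K) l hd
  let H := Subgroup.zpowers g
  haveI : H.Normal := ⟨fun n hn x => by rw [hc x n, mul_inv_cancel_right]; exact hn⟩
  haveI : IsGalois F (IntermediateField.fixedField H) := IsGalois.of_fixedField_normal_subgroup H
  refine ⟨IntermediateField.fixedField H, inferInstance, fun s t => ?_, ?_⟩
  · obtain ⟨a, ha⟩ := lift_aut _ s
    obtain ⟨b, hb⟩ := lift_aut _ t
    ext x
    rw [AlgEquiv.mul_apply, AlgEquiv.mul_apply, ha, hb, hb, ha]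
    exact DFunLike.congr_fun (hc a b) (x : K)
  · rw [IntermediateField.finrank_fixedField_eq_card, Nat.card_zpowers, hg]
    exact hl

lemma nm_nm (F M K : Type*) [Field F] [Field M] [Field K] [Algebra F M] [Algebra M K] [Algebra F K]
    [IsScalarTower F M K] [FiniteDimensional F M] [FiniteDimensional M K] :
    (nm F M).comp (nm M K) = nm F K := by
  ext x
  simp [Algebra.norm_norm]

lemma relIndex_map_dvd {G G' : Type*} [CommGroup G] [CommGroup G'] (f : G →* G') {V U : Subgroup G}
    (h : V ≤ U) : (V.map f).relIndex (U.map f) ∣ V.relIndex U :=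
  Dvd.intro _ (relIndex_split f h).symm

variable {F : Type*} [Field F] [Algebra ℚ_[p] F] [FiniteDimensional ℚ_[p] F]

section
variable {K : Type*} [Field K] [Algebra ℚ_[p] K] [FiniteDimensional ℚ_[p] K]
variable [Algebra F K] [IsScalarTower ℚ_[p] F K] [FiniteDimensional F K] [IsGalois F K]

lemma cyc_index_prime (h : (Module.finrank F K).Prime) :
    ((uni p K).map (nm F K)).relIndex (uni p F) = eI p F K := by
  haveI : Fact (Module.finrank F K).Prime := ⟨h⟩
  haveI : IsCyclic (K ≃ₐ[F] K) := isCyclic_of_prime_card (p := Module.finrank F K)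
    (IsGalois.card_aut_eq_finrank F K)
  obtain ⟨σ, hσ⟩ := IsCyclic.exists_generator (α := K ≃ₐ[F] K)
  exact cyc_index p F K σ hσ

lemma map_nm_le : (uni p K).map (nm F K) ≤ uni p F := by
  rintro _ ⟨x, hx, rfl⟩
  exact (nm_mem_uni p).2 hx
end

universe v
lemma upper_aux (n : ℕ) : ∀ (K : Type v) [Field K] [Algebra ℚ_[p] K] [FiniteDimensional ℚ_[p] K]
    [Algebra F K] [IsScalarTower ℚ_[p] F K] [FiniteDimensional F K] [IsGalois F K]
    (_ : ∀ s t : K ≃ₐ[F] K, s * t = t * s) (_ : Module.finrank F K = n),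
    ((uni p K).map (nm F K)).relIndex (uni p F) ∣ eI p F K := by
  induction n using Nat.strong_induction_on with
  | _ n ih =>
    intro K _ _ _ _ _ _ _ hc hn
    by_cases h1 : 1 < Module.finrank F K
    · obtain ⟨M, hM, hcM, hp⟩ := exists_step hc h1
      haveI : FiniteDimensional ℚ_[p] M := FiniteDimensional.trans ℚ_[p] F M
      haveI : IsScalarTower ℚ_[p] M K := IsScalarTower.of_algebraMap_eq fun x => rfl
      have hmul := Module.finrank_mul_finrank F M K
      have hlt : Module.finrank F M < n := by
        rw [← hn, ← hmul]
        exact lt_mul_of_one_lt_right Module.finrank_pos hp.one_lt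
      have i1 := ih _ hlt M hcM rfl
      have i2 := cyc_index_prime p (F := M) (K := K) hp
      rw [← eI_mul p F M K, ← i2]
      have e : (uni p K).map (nm F K) = ((uni p K).map (nm M K)).map (nm F M) := by
        rw [Subgroup.map_map, nm_nm]
      rw [e, ← Subgroup.relIndex_mul_relIndex _ _ _ (Subgroup.map_mono (map_nm_le p))
        (map_nm_le p (F := F) (K := M)), mul_comm]
      exact mul_dvd_mul i1 (relIndex_map_dvd _ (map_nm_le p))
    · have h1' : Module.finrank F K = 1 := le_antisymm (not_lt.1 h1) Module.finrank_pos
      have h2 : Nat.card (K ≃ₐ[F] K) = 1 := by rw [IsGalois.card_aut_eq_finrank, h1']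
      rw [cyc_index p F K 1]
      intro g
      have := (Nat.card_eq_one_iff_unique.1 h2).1
      rw [Subsingleton.elim g 1]; exact Subgroup.one_mem _

lemma tr_aux (n : ℕ) : ∀ (K : Type v) [Field K] [Algebra ℚ_[p] K] [FiniteDimensional ℚ_[p] K]
    [Algebra F K] [IsScalarTower ℚ_[p] F K] [FiniteDimensional F K] [IsGalois F K]
    (_ : ∀ s t : K ≃ₐ[F] K, s * t = t * s) (_ : Module.finrank F K = n)
    (_ : ∀ s : K ≃ₐ[F] K, inert p s),
    eI p F K = Module.finrank F K := by
  induction n using Nat.strong_induction_on with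
  | _ n ih =>
    intro K _ _ _ _ _ _ _ hc hn hin
    by_cases h1 : 1 < Module.finrank F K
    · obtain ⟨M, hM, hcM, hp⟩ := exists_step hc h1
      haveI : FiniteDimensional ℚ_[p] M := FiniteDimensional.trans ℚ_[p] F M
      haveI : IsScalarTower ℚ_[p] M K := IsScalarTower.of_algebraMap_eq fun x => rfl
      have hmul := Module.finrank_mul_finrank F M K
      have hlt : Module.finrank F M < n := by
        rw [← hn, ← hmul]
        exact lt_mul_of_one_lt_right Module.finrank_pos hp.one_lt
      have i1 := ih _ hlt M hcM rfl (by
        intro s x hx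
        obtain ⟨g, hg⟩ := lift_aut M s
        have := hin g (x : K) (by
          have := nv_algebraMap p (K := K) x
          rw [← this] at hx; exact hx)
        rw [← hg] at this
        rw [← nv_algebraMap p (K := K)]
        exact this)
      rw [← eI_mul p F M K, i1, ← hmul]
      congr 1
      refine ((Nat.dvd_prime hp).1 (eI_dvd p M K)).resolve_left fun h => ?_
      have hone : ∀ s : K ≃ₐ[M] K, s = 1 := fun s =>
        inert_eq_one p h (fun x hx => hin (s.restrictScalars F) x hx)
      have h2 : Nat.card (K ≃ₐ[M] K) = 1 :=
        Nat.card_eq_one_iff_unique.2 ⟨⟨fun a b => by rw [hone a, hone b]⟩, ⟨1⟩⟩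
      rw [IsGalois.card_aut_eq_finrank] at h2
      exact hp.one_lt.ne' h2
    · have h1' : Module.finrank F K = 1 := le_antisymm (not_lt.1 h1) Module.finrank_pos
      have := eI_dvd p F K
      rw [h1'] at this ⊢
      exact Nat.dvd_one.1 this

variable {K : Type*} [Field K] [Algebra ℚ_[p] K] [FiniteDimensional ℚ_[p] K]
variable [Algebra F K] [IsScalarTower ℚ_[p] F K] [FiniteDimensional F K] [IsGalois F K]
lemma upper (hc : ∀ s t : K ≃ₐ[F] K, s * t = t * s) :
    ((uni p K).map (nm F K)).relIndex (uni p F) ∣ eI p F K := upper_aux p _ K hc rfl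

lemma eI_tr (hc : ∀ s t : K ≃ₐ[F] K, s * t = t * s) (hin : ∀ s : K ≃ₐ[F] K, inert p s) :
    eI p F K = Module.finrank F K := tr_aux p _ K hc rfl hin
end tower
end LCF

set_option linter.style.haveILetI false
set_option linter.unusedSectionVars false
namespace LCF
variable (p : ℕ) [Fact p.Prime]
section lower
variable {F : Type*} [Field F] [Algebra ℚ_[p] F] [FiniteDimensional ℚ_[p] F]
variable {L : Type*} [Field L] [Algebra ℚ_[p] L] [FiniteDimensional ℚ_[p] L]
variable [Algebra F L] [IsScalarTower ℚ_[p] F L] [FiniteDimensional F L] [IsGalois F L]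

set_option maxHeartbeats 1000000 in
lemma lower (hc : ∀ s t : L ≃ₐ[F] L, s * t = t * s) (E : IntermediateField F L)
    (hI : ∀ s : L ≃ₐ[F] L, inert p s ↔ s ∈ E.fixingSubgroup)
    (hm : ∀ g : L ≃ₐ[F] L, g ^ Module.finrank F E = 1) (φ : L ≃ₐ[F] L)
    (hφ : ∀ k : ℤ, φ ^ k ∈ E.fixingSubgroup → (Module.finrank F E : ℤ) ∣ k) :
    Module.finrank E L ≤ ((uni p L).map (nm F L)).relIndex (uni p F) := by
  classical
  haveI : FiniteDimensional ℚ_[p] E := FiniteDimensional.trans ℚ_[p] F E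
  haveI : IsScalarTower ℚ_[p] E L := IsScalarTower.of_algebraMap_eq fun x => rfl
  set m := Module.finrank F E with hmdef
  have hm0 : 0 < m := Module.finrank_pos
  let r : (L ≃ₐ[E] L) →* (L ≃ₐ[F] L) :=
    { toFun := AlgEquiv.restrictScalars F, map_one' := rfl, map_mul' := fun _ _ => rfl }
  have hr : ∀ (h : L ≃ₐ[E] L) (u : Lˣ), h • u = r h • u := fun h u => rfl
  have hrinj : Function.Injective r := AlgEquiv.restrictScalars_injective F
  have hrI : ∀ h, r h ∈ E.fixingSubgroup := by
    intro h
    rw [IntermediateField.mem_fixingSubgroup_iff]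
    intro x hx
    exact h.commutes ⟨x, hx⟩
  have hIr : ∀ s ∈ E.fixingSubgroup, ∃ h, r h = s := fun s hs =>
    ⟨IntermediateField.fixingSubgroupEquiv E ⟨s, hs⟩, rfl⟩
  have hcE : ∀ s t : L ≃ₐ[E] L, s * t = t * s := by
    intro s t; apply hrinj; rw [map_mul, map_mul, hc]
  have hinE : ∀ s : L ≃ₐ[E] L, inert p s := by
    intro s x hx
    exact (hI (r s)).2 (hrI s) x hx
  have heE : eI p E L = Module.finrank E L := eI_tr p hcE hinE
  have hmulz : ∀ (τ : L ≃ₐ[E] L) (k : ℤ), (φ * r τ) ^ k = φ ^ k * r τ ^ k := fun τ k =>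
    Commute.mul_zpow (hc _ _) k
  have hdvd : ∀ (τ : L ≃ₐ[E] L) (k : ℤ), (φ * r τ) ^ k ∈ E.fixingSubgroup → (m : ℤ) ∣ k := by
    intro τ k hk
    apply hφ
    rw [hmulz] at hk
    have := Subgroup.mul_mem _ hk (Subgroup.inv_mem _ (Subgroup.zpow_mem _ (hrI τ) k))
    rwa [mul_inv_cancel_right] at this
  -- bijection
  have hbij : ∀ τ : L ≃ₐ[E] L, Function.Bijective
      (fun x : Fin m × (L ≃ₐ[E] L) => (φ * r τ) ^ (x.1 : ℕ) * r x.2) := by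
    intro τ
    rw [Fintype.bijective_iff_injective_and_card]
    constructor
    · rintro ⟨i, a⟩ ⟨j, b⟩ hab
      dsimp only at hab
      have h1 : (φ * r τ) ^ ((i : ℤ) - (j : ℤ)) ∈ E.fixingSubgroup := by
        rw [zpow_sub, zpow_natCast, zpow_natCast]
        have : (φ * r τ) ^ (i : ℕ) * ((φ * r τ) ^ (j : ℕ))⁻¹ = r (b * a⁻¹) := by
          rw [map_mul, map_inv, mul_inv_eq_iff_eq_mul, hc (r b * (r a)⁻¹), ← mul_assoc, ← hab,
            mul_inv_cancel_right]
        rw [this]; exact hrI _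
      have h2 := hdvd τ _ h1
      have h3 : i = j := by
        have hi := i.2
        have hj := j.2
        obtain ⟨k, hk⟩ := h2
        have : k = 0 := by
          by_contra hk0
          rcases lt_or_gt_of_ne hk0 with h | h <;> nlinarith
        rw [this] at hk
        exact Fin.ext (by omega)
      subst h3
      rw [mul_right_inj] at hab
      rw [hrinj hab]
    · rw [Fintype.card_prod, Fintype.card_fin, ← Nat.card_eq_fintype_card, ← Nat.card_eq_fintype_card,
        IsGalois.card_aut_eq_finrank, IsGalois.card_aut_eq_finrank, hmdef,
        Module.finrank_mul_finrank F E L]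
  obtain ⟨ϖ, -, hϖ⟩ := exists_unif p (F := L)
  have hex : ∀ τ : L ≃ₐ[E] L, ∃ x : Lˣ, (φ * r τ) • x = x ∧ nv p L (x : L) = nv p L (ϖ : L) := by
    intro τ
    obtain ⟨x, hx, hxv⟩ := fix_unif p (Subgroup.zpowers (φ * r τ)) (by
      rintro _ ⟨k, rfl⟩ hk
      obtain ⟨j, hj⟩ := hdvd τ k ((hI _).1 hk)
      dsimp only
      rw [hj, zpow_mul, zpow_natCast, hm, one_zpow]) ϖ
    exact ⟨x, hx _ (Subgroup.mem_zpowers _), hxv⟩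
  choose π hπ hπv using hex
  have hc' : ∀ τ, ∃ c : Fˣ, inc F L c = inc E L (nm E L (π τ)) := by
    intro τ
    apply (mem_range_inc F L).2
    intro g
    obtain ⟨⟨i, a⟩, rfl⟩ := (hbij τ).2 g
    dsimp only
    have h1 : r a • inc E L (nm E L (π τ)) = inc E L (nm E L (π τ)) := by
      rw [← hr]; exact (mem_range_inc E L).1 ⟨_, rfl⟩ a
    have h2 : (φ * r τ) • inc E L (nm E L (π τ)) = inc E L (nm E L (π τ)) := by
      rw [inc_nm, Finset.smul_prod']
      refine Finset.prod_congr rfl fun g _ => ?_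
      rw [hr, smul_smul, hc, mul_smul, hπ]
    have h3 : (φ * r τ) ∈ MulAction.stabilizer (L ≃ₐ[F] L) (inc E L (nm E L (π τ))) := h2
    rw [mul_smul, h1]
    exact Subgroup.pow_mem _ h3 i
  choose c hcc using hc'
  have hcv : ∀ τ, nv p F (c τ : F) = nv p E (nm E L (π τ) : E) := by
    intro τ
    have h1 := congrArg Units.val (hcc τ)
    rw [inc_val, inc_val] at h1
    have h2 := congrArg (nv p L) h1
    rw [nv_algebraMap p (F := F) (K := L), nv_algebraMap p (F := E) (K := L)] at h2
    exact h2
  have hcv' : ∀ τ, nv p F (c τ : F) = nv p L (ϖ : L) ^ Module.finrank E L := by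
    intro τ; rw [hcv, nm_val, nv_norm, hπv]
  have hcu : ∀ σ τ, c σ / c τ ∈ uni p F := by
    intro σ τ
    rw [mem_uni, Units.val_div_eq_div_val, map_div₀, hcv', hcv', div_self]
    exact pow_ne_zero _ (nv_units_pos p ϖ).ne'
  have hmain : ∀ σ τ, c σ / c τ ∈ (uni p L).map (nm F L) → σ = τ := by
    rintro σ τ ⟨u, -, hu⟩
    set ψ := φ * r τ with hψ
    let u' : Lˣ := ∏ j : Fin m, ψ ^ (j : ℕ) • u
    have hu' : ψ • u' = u' := by
      have hm' : ψ ^ m = 1 := hm ψ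
      have e1 : u' = ∏ j ∈ Finset.range m, ψ ^ j • u := (Finset.prod_range fun j => ψ ^ j • u).symm
      rw [e1, Finset.smul_prod']
      have e2 := Finset.prod_range_succ' (fun j => ψ ^ j • u) m
      rw [Finset.prod_range_succ, hm', pow_zero] at e2
      have e3 := mul_right_cancel e2
      rw [e3]
      exact Finset.prod_congr rfl fun j _ => by rw [smul_smul, pow_succ']
    have hnu : inc F L (nm F L u) = inc E L (nm E L u') := by
      rw [inc_nm, inc_nm, ← (hbij τ).prod_comp, Fintype.prod_prod_type_right]
      refine Finset.prod_congr rfl fun a _ => ?_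
      rw [hr, Finset.smul_prod']
      refine Finset.prod_congr rfl fun i _ => ?_
      rw [smul_smul, hc]
    have hnn : nm E L (π σ) = nm E L (π τ * u') := by
      apply inc_inj E L
      rw [map_mul, map_mul, ← hcc, ← hcc, ← hnu, hu, ← map_mul, mul_div_cancel]
    have := key p E L hcE (MulDistribMulAction.toMonoidHom Lˣ ψ)
      (fun x => nv_aut p ψ (x : L)) (fun g x => by
        change ψ • g • x = g • ψ • x
        rw [hr, hr, smul_smul, smul_smul, hc]) (σ⁻¹ * τ) (π σ) (π τ * u') (by
        change ψ • (π τ * u') = _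
        rw [smul_mul', hπ, hu']) (by
        change ψ • π σ = _
        rw [hr, map_mul, map_inv]
        conv_lhs => rw [hψ, ← mul_inv_cancel_left (r σ) (r τ), ← mul_assoc, hc, mul_smul, hπ]) (by
        rw [hπv]; exact hϖ) hnn heE
    rw [inv_mul_eq_one] at this
    exact this
  have hne : ((uni p L).map (nm F L)).relIndex (uni p F) ≠ 0 := fun h0 => by
    have := upper p (F := F) (K := L) hc
    rw [h0, zero_dvd_iff] at this
    exact (eI_pos p F L).ne' this
  rw [Subgroup.relIndex] at hne ⊢
  haveI : Finite (uni p F ⧸ ((uni p L).map (nm F L)).subgroupOf (uni p F)) :=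
    Nat.finite_of_card_ne_zero hne
  rw [← IsGalois.card_aut_eq_finrank, Subgroup.index]
  refine Nat.card_le_card_of_injective
    (fun σ => ((⟨c σ / c 1, hcu σ 1⟩ : uni p F) : uni p F ⧸ ((uni p L).map (nm F L)).subgroupOf (uni p F))) ?_
  intro σ τ h
  symm
  apply hmain
  dsimp only at h
  rw [QuotientGroup.eq, Subgroup.mem_subgroupOf] at h
  have e : c τ / c σ = (c σ / c 1)⁻¹ * (c τ / c 1) := by
    rw [inv_div, mul_comm, div_mul_div_cancel]
  rw [e]; exact h
end lower
end LCF

set_option linter.style.haveILetI false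
set_option linter.unusedSectionVars false
namespace LCF
variable (p : ℕ) [Fact p.Prime]

universe v
lemma exists_L (K : Type v) [Field K] [CharZero K] (N : ℕ) [NeZero N] :
    ∃ (L : Type v) (_ : Field L) (_ : Algebra K L), FiniteDimensional K L ∧
      Polynomial.IsSplittingField K L (Polynomial.X ^ N - 1) ∧
      ∃ ζ : L, IsPrimitiveRoot ζ N ∧ Algebra.adjoin K {ζ} = ⊤ := by
  haveI : NeZero (N : K) := ⟨Nat.cast_ne_zero.2 (NeZero.ne N)⟩
  refine ⟨CyclotomicField N K, inferInstance, inferInstance,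
    IsCyclotomicExtension.finiteDimensional {N} K _,
    IsCyclotomicExtension.isSplittingField_X_pow_sub_one N K _,
    IsCyclotomicExtension.zeta N K _, IsCyclotomicExtension.zeta_spec N K _, ?_⟩
  exact IsCyclotomicExtension.adjoin_primitive_root_eq_top (IsCyclotomicExtension.zeta_spec N K _)

lemma ringAut_cyclic (k : Type*) [Field k] [Finite k] [CharP k p] {T : Type*} [Group T]
    (ρ : T →* RingAut k) : IsCyclic ρ.range := by
  letI : Algebra (ZMod p) k := ZMod.algebra k p
  have h : ∀ (f : RingAut k) (x : ZMod p), f (algebraMap (ZMod p) k x) = algebraMap (ZMod p) k x := by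
    intro f x
    exact RingHom.congr_fun (Subsingleton.elim ((f : k →+* k).comp (algebraMap (ZMod p) k))
      (algebraMap (ZMod p) k)) x
  let j : RingAut k →* (k ≃ₐ[ZMod p] k) :=
    { toFun := fun f => AlgEquiv.ofRingEquiv (f := f) (h f)
      map_one' := rfl
      map_mul' := fun _ _ => rfl }
  have hj : Function.Injective j := by
    intro f g hfg
    apply RingEquiv.ext
    intro x
    exact DFunLike.congr_fun hfg x
  exact isCyclic_of_injective (j.comp ρ.range.subtype) (hj.comp Subtype.val_injective)

section
variable {F : Type*} [Field F] [Algebra ℚ_[p] F] [FiniteDimensional ℚ_[p] F]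
variable {K : Type*} [Field K] [Algebra ℚ_[p] K] [FiniteDimensional ℚ_[p] K]
variable {L : Type*} [Field L] [Algebra ℚ_[p] L] [FiniteDimensional ℚ_[p] L]
variable [Algebra F K] [IsScalarTower ℚ_[p] F K] [FiniteDimensional F K] [IsGalois F K]
variable [Algebra F L] [IsScalarTower ℚ_[p] F L] [FiniteDimensional F L] [IsGalois F L]
variable [Algebra K L] [IsScalarTower ℚ_[p] K L] [FiniteDimensional K L] [IsGalois K L]
variable [IsScalarTower F K L]

lemma ext_gen {ζ : L} (hgen : Algebra.adjoin K {ζ} = ⊤) {s t : L ≃ₐ[F] L}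
    (h1 : ∀ x : K, s (algebraMap K L x) = t (algebraMap K L x)) (h2 : s ζ = t ζ) : s = t := by
  ext x
  have hx : x ∈ Algebra.adjoin K {ζ} := by rw [hgen]; trivial
  induction hx using Algebra.adjoin_induction with
  | mem x hx => rw [Set.mem_singleton_iff] at hx; rw [hx, h2]
  | algebraMap r => exact h1 r
  | add x y _ _ hx hy => rw [map_add, map_add, hx, hy]
  | mul x y _ _ hx hy => rw [map_mul, map_mul, hx, hy]

lemma comm_L (hc : ∀ s t : K ≃ₐ[F] K, s * t = t * s) {ζ : L} {N : ℕ} [NeZero N]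
    (hζ : IsPrimitiveRoot ζ N)
    (hgen : Algebra.adjoin K {ζ} = ⊤) (s t : L ≃ₐ[F] L) : s * t = t * s := by
  have hpow : ∀ s : L ≃ₐ[F] L, ∃ i : ℕ, s ζ = ζ ^ i := by
    intro s
    obtain ⟨i, -, hi⟩ := hζ.eq_pow_of_pow_eq_one (ξ := s ζ)
      (by rw [← map_pow, hζ.pow_eq_one, map_one])
    exact ⟨i, hi.symm⟩
  refine ext_gen hgen (fun x => ?_) ?_
  · rw [AlgEquiv.mul_apply, AlgEquiv.mul_apply, ← AlgEquiv.restrictNormal_commutes t K,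
      ← AlgEquiv.restrictNormal_commutes s K, ← AlgEquiv.restrictNormal_commutes s K,
      ← AlgEquiv.restrictNormal_commutes t K]
    congr 1
    exact DFunLike.congr_fun (hc (s.restrictNormal K) (t.restrictNormal K)) x
  · obtain ⟨i, hi⟩ := hpow s
    obtain ⟨j, hj⟩ := hpow t
    rw [AlgEquiv.mul_apply, AlgEquiv.mul_apply, hi, hj, map_pow, map_pow, hi, hj, ← pow_mul,
      ← pow_mul, mul_comm]

set_option maxHeartbeats 1000000 in
lemma index_L (hc : ∀ s t : K ≃ₐ[F] K, s * t = t * s) {ζ : L} {N : ℕ} [NeZero N]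
    (hζ : IsPrimitiveRoot ζ N) (hgen : Algebra.adjoin K {ζ} = ⊤) (hN : ¬ p ∣ N)
    (hn : ∀ m, N ∣ Nat.card (R p F) ^ m - 1 → Module.finrank F K ∣ m) :
    ((uni p L).map (nm F L)).relIndex (uni p F) = eI p F L := by
  classical
  have hcL := comm_L hc hζ hgen
  let E : IntermediateField F L := IntermediateField.adjoin F {ζ}
  have hζE : ζ ∈ E := IntermediateField.mem_adjoin_simple_self F ζ
  haveI : FiniteDimensional ℚ_[p] E := FiniteDimensional.trans ℚ_[p] F E
  haveI : IsScalarTower ℚ_[p] E L := IsScalarTower.of_algebraMap_eq fun x => rfl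
  haveI : IsGalois F E := by
    haveI : E.fixingSubgroup.Normal :=
      ⟨fun n hn x => by rw [hcL x n, mul_inv_cancel_right]; exact hn⟩
    have := IsGalois.of_fixedField_normal_subgroup E.fixingSubgroup
    rwa [IsGalois.fixedField_fixingSubgroup] at this
  set m := Module.finrank F E with hmdef
  have hfixE : ∀ s : L ≃ₐ[F] L, s ζ = ζ → s ∈ E.fixingSubgroup := by
    intro s hs
    rw [IntermediateField.mem_fixingSubgroup_iff]
    have : E ≤ IntermediateField.fixedField (Subgroup.zpowers s) := by
      rw [IntermediateField.adjoin_le_iff, Set.singleton_subset_iff]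
      rintro ⟨g, hg⟩
      have h1 : s ∈ MulAction.stabilizer (L ≃ₐ[F] L) ζ := hs
      exact (Subgroup.zpowers_le.2 h1) hg
    intro x hx
    exact (this hx) ⟨s, Subgroup.mem_zpowers s⟩
  have hEin : ∀ s : E ≃ₐ[F] E, inert p s → s = 1 := by
    intro s hs
    have h1 : s ⟨ζ, hζE⟩ = ⟨ζ, hζE⟩ := inert_root p hs hN (by
      apply Subtype.ext; exact hζ.pow_eq_one)
    obtain ⟨g, hg⟩ := lift_aut E s
    have h2 := hfixE g (by rw [← hg ⟨ζ, hζE⟩, h1])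
    rw [IntermediateField.mem_fixingSubgroup_iff] at h2
    ext x
    rw [hg, AlgEquiv.one_apply]
    exact h2 x x.2
  have hcard := card_res p hEin
  have heE : eI p F E = 1 := eI_one_of_inert p hEin
  have hNdvd : N ∣ Nat.card (R p F) ^ m - 1 := by
    rw [← hcard]
    have hN0 := NeZero.ne N
    have hnv : nv p L ζ = 1 := by
      have : nv p L ζ ^ N = 1 := by rw [← map_pow, hζ.pow_eq_one, map_one]
      exact (pow_eq_one_iff_of_nonneg (nv_nonneg p _) hN0).1 this
    have hnvE : nv p E ⟨ζ, hζE⟩ = 1 := by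
      rw [← nv_algebraMap p (F := E) (K := L)]; exact hnv
    haveI : Fintype (R p E) := Fintype.ofFinite _
    have h1 := FiniteField.pow_card_sub_one_eq_one (rd p E ⟨⟨ζ, hζE⟩, hnvE.le⟩)
      ((rd_ne_zero p).2 hnvE)
    rw [← map_pow, ← map_one (rd p E), rd_eq, ← Nat.card_eq_fintype_card] at h1
    have h2 := root_one p (K := L) (η := ζ ^ (Nat.card (R p E) - 1)) hN
      (by rw [← pow_mul, mul_comm, pow_mul, hζ.pow_eq_one, one_pow]) (by
        rw [← nv_algebraMap p (F := E) (K := L)] at h1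
        exact h1)
    exact hζ.dvd_of_pow_eq_one _ h2
  have hnm := hn m hNdvd
  have hexp : ∀ g : L ≃ₐ[F] L, g ^ m = 1 := by
    intro g
    refine ext_gen hgen (fun x => ?_) ?_
    · have h1 : (AlgEquiv.restrictNormalHom K g) ^ m = 1 := by
        obtain ⟨k, hk⟩ := hnm
        rw [hk, pow_mul, ← IsGalois.card_aut_eq_finrank, pow_card_eq_one', one_pow]
      rw [← AlgEquiv.restrictNormal_commutes (g ^ m) K]
      have h2 : (g ^ m).restrictNormal K = 1 := by
        rw [← h1, ← map_pow]; rfl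
      rw [h2]; rfl
    · have h1 : (AlgEquiv.restrictNormalHom E g) ^ m = 1 := by
        rw [hmdef, ← IsGalois.card_aut_eq_finrank, pow_card_eq_one']
      have h2 : (g ^ m).restrictNormal E = 1 := by
        rw [← h1, ← map_pow]; rfl
      have h3 := AlgEquiv.restrictNormal_commutes (g ^ m) E ⟨ζ, hζE⟩
      rw [h2] at h3
      exact h3.symm
  -- the residue action
  let ρ := MulSemiringAction.toRingAut (L ≃ₐ[F] L) (R p L)
  have hρ : ∀ s, s ∈ ρ.ker ↔ inert p s := by
    intro s
    rw [MonoidHom.mem_ker, inert_iff]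
    constructor
    · intro h k
      exact RingEquiv.congr_fun h k
    · intro h
      exact RingEquiv.ext h
  have hJI : ρ.ker ≤ E.fixingSubgroup := by
    intro s hs
    exact hfixE s (inert_root p ((hρ s).1 hs) hN hζ.pow_eq_one)
  haveI : IsCyclic ρ.range := ringAut_cyclic p (R p L) ρ
  obtain ⟨⟨_, φ, rfl⟩, hφ⟩ := IsCyclic.exists_generator (α := ρ.range)
  have hord : orderOf (ρ φ) = Nat.card ρ.range := by
    rw [← orderOf_eq_card_of_forall_mem_zpowers hφ, ← Subgroup.orderOf_coe]
  have hle : Nat.card ρ.range ∣ m := by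
    rw [← hord, orderOf_dvd_iff_pow_eq_one, ← map_pow, hexp, map_one]
  have hm0 : 0 < m := Module.finrank_pos
  have hcT : Nat.card ρ.ker * Nat.card ρ.range = m * Nat.card E.fixingSubgroup := by
    rw [← Subgroup.index_ker, Subgroup.card_mul_index, IsGalois.card_fixingSubgroup_eq_finrank,
      IsGalois.card_aut_eq_finrank, hmdef, Module.finrank_mul_finrank]
  have hJle : Nat.card ρ.ker ≤ Nat.card E.fixingSubgroup := Subgroup.card_le_of_le hJI
  have hrle : Nat.card ρ.range ≤ m := Nat.le_of_dvd hm0 hle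
  have hIpos : 0 < Nat.card E.fixingSubgroup := Nat.card_pos
  have hrm : Nat.card ρ.range = m := by
    apply le_antisymm hrle
    by_contra hlt
    push Not at hlt
    nlinarith
  have hJc : Nat.card E.fixingSubgroup ≤ Nat.card ρ.ker := by
    rw [hrm, mul_comm] at hcT
    exact (Nat.eq_of_mul_eq_mul_left hm0 hcT).ge
  have hJ : ρ.ker = E.fixingSubgroup := Subgroup.eq_of_le_of_card_ge hJI hJc
  have hlow := lower p hcL E (fun s => by rw [← hJ, hρ]) hexp φ (fun k hk => by
    rw [← hJ, MonoidHom.mem_ker, map_zpow, ← orderOf_dvd_iff_zpow_eq_one, hord, hrm] at hk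
    exact hk)
  have hup := upper p hcL
  have hdv := eI_dvd p E L
  have hmul := eI_mul p F E L
  rw [heE, one_mul] at hmul
  rw [hmul] at hdv
  refine le_antisymm (Nat.le_of_dvd (eI_pos p F L) hup) ?_
  exact (Nat.le_of_dvd Module.finrank_pos hdv).trans hlow

lemma index_K_of_L (hc : ∀ s t : K ≃ₐ[F] K, s * t = t * s) {ζ : L} {N : ℕ} [NeZero N]
    (hζ : IsPrimitiveRoot ζ N) (hgen : Algebra.adjoin K {ζ} = ⊤) (hN : ¬ p ∣ N)
    (hn : ∀ m, N ∣ Nat.card (R p F) ^ m - 1 → Module.finrank F K ∣ m) :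
    ((uni p K).map (nm F K)).relIndex (uni p F) = eI p F K := by
  have h1 := index_L p hc hζ hgen hN hn
  have hin : ∀ s : L ≃ₐ[K] L, inert p s → s = 1 := by
    intro s hs
    have := inert_root p hs hN hζ.pow_eq_one
    exact ext_gen (F := K) hgen (fun x => by rw [AlgEquiv.commutes, AlgEquiv.commutes]) this
  have h2 : eI p K L = 1 := eI_one_of_inert p hin
  have hcL := comm_L hc hζ hgen
  have h3 := upper p (F := K) (K := L) (fun s t => by
    apply AlgEquiv.restrictScalars_injective F
    exact hcL (s.restrictScalars F) (t.restrictScalars F))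
  rw [h2, Nat.dvd_one, Subgroup.relIndex_eq_one] at h3
  have h4 : (uni p L).map (nm K L) = uni p K := le_antisymm (map_nm_le p) h3
  rw [← nm_nm F K L, ← Subgroup.map_map, h4, ← eI_mul p F K L, h2, mul_one] at h1
  exact h1
end

section
variable {F : Type*} [Field F] [Algebra ℚ_[p] F] [FiniteDimensional ℚ_[p] F]
variable {K : Type v} [Field K] [Algebra ℚ_[p] K] [FiniteDimensional ℚ_[p] K]
variable [Algebra F K] [IsScalarTower ℚ_[p] F K] [FiniteDimensional F K] [IsGalois F K]

theorem index_K (hc : ∀ s t : K ≃ₐ[F] K, s * t = t * s) :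
    ((uni p K).map (nm F K)).relIndex (uni p F) = eI p F K := by
  haveI : Fintype (R p F) := Fintype.ofFinite _
  haveI : CharZero F := charZero_of_injective_algebraMap (algebraMap ℚ_[p] F).injective
  haveI : CharZero K := charZero_of_injective_algebraMap (algebraMap ℚ_[p] K).injective
  set q := Nat.card (R p F) with hq
  set n := Module.finrank F K with hn
  have hn0 : 0 < n := Module.finrank_pos
  have hq1 : 1 < q := Finite.one_lt_card
  have hpq : p ∣ q := by
    rw [← CharP.cast_eq_zero_iff (R p F) p, hq, Nat.card_eq_fintype_card, Nat.cast_card_eq_zero]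
  have hqn : 1 < q ^ n := Nat.one_lt_pow hn0.ne' hq1
  have hN : ¬ p ∣ q ^ n - 1 := by
    intro h
    have h2 : p ∣ q ^ n := dvd_pow hpq hn0.ne'
    have h3 := (Nat.dvd_sub_iff_right hqn.le h2).1 h
    exact (Fact.out : p.Prime).one_lt.ne' (Nat.dvd_one.1 h3)
  haveI : NeZero (q ^ n - 1) := ⟨by omega⟩
  obtain ⟨L, _, _, hfd, hsp, ζ, hζ, hgen⟩ := exists_L K (q ^ n - 1)
  letI : Algebra F L := ((algebraMap K L).comp (algebraMap F K)).toAlgebra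
  letI : Algebra ℚ_[p] L := ((algebraMap K L).comp (algebraMap ℚ_[p] K)).toAlgebra
  haveI : IsScalarTower F K L := IsScalarTower.of_algebraMap_eq fun x => rfl
  haveI : IsScalarTower ℚ_[p] K L := IsScalarTower.of_algebraMap_eq fun x => rfl
  haveI : IsScalarTower ℚ_[p] F L := IsScalarTower.of_algebraMap_eq fun x => by
    change algebraMap K L (algebraMap ℚ_[p] K x) = algebraMap K L (algebraMap F K _)
    rw [IsScalarTower.algebraMap_apply ℚ_[p] F K]
  haveI : FiniteDimensional F L := FiniteDimensional.trans F K L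
  haveI : FiniteDimensional ℚ_[p] L := FiniteDimensional.trans ℚ_[p] K L
  haveI : Normal F L := by
    obtain ⟨f, hf0, hf⟩ : ∃ f : Polynomial F, f ≠ 0 ∧ Polynomial.IsSplittingField F K f := by
      obtain ⟨f, hf⟩ := Normal.exists_isSplittingField F K
      by_cases h0 : f = 0
      · refine ⟨1, one_ne_zero, ?_, ?_⟩
        · simp
        · have := hf.adjoin_rootSet
          rw [h0, Polynomial.rootSet_zero] at this
          rw [Polynomial.rootSet_one, this]
      · exact ⟨f, h0, hf⟩
    haveI : Polynomial.IsSplittingField K L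
        ((Polynomial.X ^ (q ^ n - 1) - 1 : Polynomial F).map (algebraMap F K)) := by
      simpa using hsp
    haveI := Polynomial.IsSplittingField.mul (F := F) (K := K) (L := L) f
      (Polynomial.X ^ (q ^ n - 1) - 1) hf0 (Polynomial.X_pow_sub_C_ne_zero (by omega) 1)
    exact Normal.of_isSplittingField (f * (Polynomial.X ^ (q ^ n - 1) - 1))
  haveI : IsGalois F L := {}
  haveI : IsGalois K L := IsGalois.tower_top_of_isGalois F K L
  refine index_K_of_L p (L := L) hc hζ hgen hN (fun m hm => ?_)
  have h1 := Nat.pow_sub_one_gcd_pow_sub_one q n m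
  rw [Nat.gcd_eq_left hm] at h1
  have h2 : q ^ n = q ^ (n.gcd m) := by
    have := Nat.one_le_pow (n.gcd m) q (by omega)
    omega
  have h3 := Nat.pow_right_injective hq1 h2
  exact Nat.gcd_eq_left_iff_dvd.1 h3.symm
end
end LCF

set_option linter.style.haveILetI false
set_option linter.unusedSectionVars false
namespace LCF
variable (p : ℕ) [Fact p.Prime]
section
variable {F : Type*} [Field F] [Algebra ℚ_[p] F] [FiniteDimensional ℚ_[p] F]

lemma one_add_pow (x : F) (hx : nv p F x ≤ 1) (e : ℕ) :
    ∃ y, nv p F y ≤ 1 ∧ (1 + x) ^ e = 1 + e * x + x ^ 2 * y := by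
  induction e with
  | zero => exact ⟨0, by simp, by simp⟩
  | succ e ih =>
    obtain ⟨y, hy, h⟩ := ih
    refine ⟨e + y + x * y, ?_, ?_⟩
    · have h1 : (e : F) ∈ O p F := nv_natCast_le p e
      have h2 : y ∈ O p F := hy
      have h3 : x ∈ O p F := hx
      exact add_mem (add_mem h1 h2) (mul_mem h3 h2)
    · rw [pow_succ, h]; push_cast; ring

lemma an_nv : AN p (fun x : F => nv p F x) where
  add := nv_add_le p
  neg := nv_neg p
  mul x y := (map_mul _ x y).le
  le x := le_rfl
  bd := ⟨1, zero_le_one, fun x => (one_mul _).ge⟩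

lemma exists_root {e : ℕ} (he : ¬ p ∣ e) (a : Fˣ) (ha : nv p F ((a : F) - 1) < 1) :
    ∃ b : Fˣ, b ∈ uni p F ∧ b ^ e = a := by
  have hne := nv_natCast_eq_one p (F := F) he
  have he0 : (e : F) ≠ 0 := by intro h; rw [h] at hne; simp at hne
  set ρ := max (nv p F ((a : F) - 1)) (1 / 2) with hρdef
  have h0 : 0 < ρ := lt_of_lt_of_le (by norm_num) (le_max_right _ _)
  have hρ : ρ < 1 := max_lt ha (by norm_num)
  obtain ⟨b, hb, hba⟩ := (an_nv p (F := F)).approx (powMonoidHom e) ⊤ (fun _ => trivial) ρ h0 hρ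
    (by
      intro r hr0 hr u hu
      have h1 := (an_nv p (F := F)).nv_eq_one (hr.trans_lt hρ) hu
      change nv p F (((u ^ e : Fˣ) : F) - 1) ≤ r
      rw [Units.val_pow_eq_pow_val, ← geom_sum_mul, map_mul]
      have : nv p F (∑ i ∈ Finset.range e, (u : F) ^ i) ≤ 1 :=
        nv_sum_le p _ _ zero_le_one fun i _ => by rw [map_pow, h1, one_pow]
      calc _ ≤ 1 * r := mul_le_mul this hu (nv_nonneg p _) zero_le_one
        _ = r := one_mul r)
    (by
      intro r hr0 hr a _ ha
      set x := ((a : F) - 1) / e with hx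
      have hxv : nv p F x ≤ r := by rw [hx, map_div₀, hne, div_one]; exact ha
      have hb1 : nv p F ((1 + x) - 1) ≤ r := by rw [add_sub_cancel_left]; exact hxv
      have hbv := (an_nv p (F := F)).nv_eq_one (hr.trans_lt hρ) hb1
      have hb0 : 1 + x ≠ 0 := by intro h; rw [h] at hbv; simp at hbv
      refine ⟨Units.mk0 _ hb0, hb1, ?_⟩
      obtain ⟨y, hy, hxy⟩ := one_add_pow p x (hxv.trans (hr.trans hρ.le)) e
      have e1 : ((a / powMonoidHom e (Units.mk0 _ hb0) : Fˣ) : F) - 1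
          = -(x ^ 2 * y) / (1 + x) ^ e := by
        have : (a : F) = 1 + e * x := by rw [hx]; field_simp; ring
        have h3 : ((a / powMonoidHom e (Units.mk0 _ hb0) : Fˣ) : F) = a / (1 + x) ^ e := by
          simp
        rw [h3, div_sub_one (pow_ne_zero _ hb0)]
        congr 1
        rw [hxy, this]; ring
      rw [e1, map_div₀, nv_neg, map_pow, hbv, one_pow, div_one, map_mul, map_pow]
      have := nv_nonneg p x
      calc nv p F x ^ 2 * nv p F y ≤ nv p F x ^ 2 * 1 := by gcongr
        _ = nv p F x * nv p F x := by ring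
        _ ≤ r * ρ := mul_le_mul hxv (hxv.trans hr) this hr0.le)
    a trivial (le_max_left _ _)
  refine ⟨b, ?_, hba⟩
  rw [mem_uni]
  exact (an_nv p (F := F)).nv_eq_one hρ hb

lemma cyclic_quot {e : ℕ} (he : ¬ p ∣ e) (W : Subgroup Fˣ) (hW : (W.subgroupOf (uni p F)).index = e) :
    IsCyclic (uni p F ⧸ W.subgroupOf (uni p F)) := by
  haveI : Fintype (R p F) := Fintype.ofFinite _
  obtain ⟨g, hg⟩ := IsCyclic.exists_generator (α := (R p F)ˣ)
  obtain ⟨c, hc⟩ := rd_surj p (g : R p F)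
  have hcv : nv p F (c : F) = 1 := by
    rw [← rd_ne_zero, hc]; exact g.ne_zero
  have hc0 : (c : F) ≠ 0 := by intro h; rw [h] at hcv; simp at hcv
  let γ : uni p F := ⟨Units.mk0 (c : F) hc0, by rw [mem_uni]; exact hcv⟩
  refine ⟨⟨(γ : uni p F ⧸ W.subgroupOf (uni p F)), fun x => ?_⟩⟩
  obtain ⟨u, rfl⟩ := QuotientGroup.mk_surjective x
  have huv : nv p F ((u : Fˣ) : F) = 1 := (mem_uni p).1 u.2
  have hr0 : rd p F ⟨((u : Fˣ) : F), huv.le⟩ ≠ 0 := (rd_ne_zero p).2 huv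
  obtain ⟨k, hk⟩ := (isOfFinOrder_of_finite g).mem_powers_iff_mem_zpowers.2 (hg (Units.mk0 _ hr0))
  have hk' : rd p F (c ^ k) = rd p F ⟨((u : Fˣ) : F), huv.le⟩ := by
    rw [map_pow, hc]
    exact congrArg Units.val hk
  rw [rd_eq] at hk'
  have h1 : nv p F ((((u⁻¹ * γ ^ k : uni p F) : Fˣ) : F) - 1) < 1 := by
    have e1 : (((u⁻¹ * γ ^ k : uni p F) : Fˣ) : F) - 1 = ((c : F) ^ k - ((u : Fˣ) : F)) / ((u : Fˣ) : F) := by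
      have : (((u⁻¹ * γ ^ k : uni p F) : Fˣ) : F) = ((u : Fˣ) : F)⁻¹ * (c : F) ^ k := by
        simp [γ]
      rw [this]; field_simp
    rw [e1, map_div₀, huv, div_one]
    exact hk'
  obtain ⟨b, hbu, hb⟩ := exists_root p he _ h1
  refine ⟨(k : ℤ), ?_⟩
  dsimp only
  rw [zpow_natCast, ← QuotientGroup.mk_pow, eq_comm, QuotientGroup.eq]
  have h2 : u⁻¹ * γ ^ k = (⟨b, hbu⟩ : uni p F) ^ e := by
    apply Subtype.ext; rw [← hb]; rfl
  rw [h2, ← QuotientGroup.eq_one_iff, QuotientGroup.mk_pow, ← hW]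
  exact pow_card_eq_one'
end

section
variable {F : Type*} [Field F] [Algebra ℚ_[p] F] [FiniteDimensional ℚ_[p] F]
    [Algebra ℤ_[p] F] [IsScalarTower ℤ_[p] ℚ_[p] F]

lemma mem_uni_iff_integral (x : Fˣ) :
    x ∈ uni p F ↔ IsIntegral ℤ_[p] (x : F) ∧ IsIntegral ℤ_[p] ((x⁻¹ : Fˣ) : F) := by
  rw [mem_uni, isIntegral_iff, isIntegral_iff, Units.val_inv_eq_inv_val, map_inv₀]
  constructor
  · intro h; rw [h]; simp
  · rintro ⟨h1, h2⟩
    exact le_antisymm h1 ((inv_le_one₀ (nv_units_pos p x)).1 h2)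

lemma mem_uni_iff_ord (ord : Fˣ → ℤ) (hmul : ∀ x y : Fˣ, ord (x * y) = ord x + ord y)
    (hint : ∀ x : Fˣ, IsIntegral ℤ_[p] ((x : Fˣ) : F) ↔ 0 ≤ ord x) (x : Fˣ) :
    x ∈ uni p F ↔ ord x = 0 := by
  have h1 : ord 1 = 0 := by have := hmul 1 1; rw [mul_one] at this; omega
  have h2 : ord x⁻¹ = - ord x := by
    have := hmul x x⁻¹; rw [mul_inv_cancel, h1] at this; omega
  rw [mem_uni_iff_integral, hint, hint, h2]
  omega

variable {K : Type*} [Field K] [Algebra ℚ_[p] K] [FiniteDimensional ℚ_[p] K]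
    [Algebra ℤ_[p] K] [IsScalarTower ℤ_[p] ℚ_[p] K]
variable [Algebra F K] [IsScalarTower ℚ_[p] F K]

lemma eI_eq (ordF : Fˣ → ℤ)
    (hordF_surj : Function.Surjective ordF)
    (ordK : Kˣ → ℤ) (hordK_mul : ∀ x y : Kˣ, ordK (x * y) = ordK x + ordK y)
    (hordK_surj : Function.Surjective ordK)
    (hordK_int : ∀ x : Kˣ, IsIntegral ℤ_[p] ((x : Kˣ) : K) ↔ 0 ≤ ordK x)
    (e : ℕ) (he : ∀ x : Fˣ, ordK (inc F K x) = e * ordF x) : eI p F K = e := by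
  let f : Kˣ →* Multiplicative ℤ := MonoidHom.mk' (fun x => Multiplicative.ofAdd (ordK x))
    (fun x y => by rw [hordK_mul, ofAdd_add])
  have hf : ∀ x, f x = Multiplicative.ofAdd (ordK x) := fun x => rfl
  have hu := mem_uni_iff_ord p ordK hordK_mul hordK_int
  have hfs : Function.Surjective f := fun y => by
    obtain ⟨x, hx⟩ := hordK_surj y.toAdd
    exact ⟨x, by rw [hf, hx]; rfl⟩
  have hker : ∀ x, x ∈ uni p K ↔ f x = 1 := by
    intro x; rw [hu, hf, ← ofAdd_zero, Multiplicative.ofAdd.injective.eq_iff]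
  have e1 : (gam p F).comap (nvU p K) = (AddSubgroup.zmultiples (e : ℤ)).toSubgroup.comap f := by
    ext x
    have hF : ∀ y : Fˣ, nvU p F y = nvU p K (inc F K y) := by
      intro y; ext; rw [nvU_val, nvU_val, inc_val, nv_algebraMap]
    have hR : x ∈ (AddSubgroup.zmultiples (e : ℤ)).toSubgroup.comap f ↔ ∃ k : ℤ, k * e = ordK x := by
      change ordK x ∈ AddSubgroup.zmultiples (e : ℤ) ↔ _
      rw [AddSubgroup.mem_zmultiples_iff]
      simp only [smul_eq_mul]
    have hq : ∀ y : Fˣ, nvU p F y = nvU p K x ↔ ordK (inc F K y) = ordK x := by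
      intro y
      have : nvU p F y = nvU p K x ↔ (inc F K y)⁻¹ * x ∈ uni p K := by
        rw [hF, uni, MonoidHom.mem_ker, map_mul, map_inv, inv_mul_eq_one]
      rw [this, hker, map_mul, map_inv, inv_mul_eq_one, hf, hf,
        Multiplicative.ofAdd.injective.eq_iff]
    rw [hR]
    constructor
    · rintro ⟨y, hy⟩
      rw [hq, he] at hy
      exact ⟨ordF y, by rw [mul_comm]; exact hy⟩
    · rintro ⟨k, hk⟩
      obtain ⟨y, rfl⟩ := hordF_surj k
      refine ⟨y, ?_⟩
      rw [hq, he, mul_comm]; exact hk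
  rw [eI]
  change (gam p F).relIndex (nvU p K).range = e
  rw [← Subgroup.index_comap, e1, Subgroup.index_comap, MonoidHom.range_eq_top.2 hfs,
    Subgroup.relIndex_top_right, AddSubgroup.index_toSubgroup, Int.index_zmultiples]
  simp
end
end LCF

/-- Let `F` be a finite extension of `ℚ_p` and `K/F` a finite abelian
extension. Then `𝒪_F^× ∩ N_{K/F}(K^×)` has finite index in `𝒪_F^×`, equal to the ramification
index `e(K/F)`; if moreover `K/F` is tamely ramified (`p ∤ e(K/F)`), then
`𝒪_F^×/(𝒪_F^× ∩ N_{K/F}(K^×))` is cyclic.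

The normalized valuations `ord_F`, `ord_K` are characterized by being surjective homomorphisms
which are nonnegative exactly on the nonzero integers (= elements integral over `ℤ_p`), and the
ramification index `e` is characterized by `ord_K(x) = e·ord_F(x)` for `x ∈ F^×`, which is
equivalent to the usual definition `𝔪_F 𝒪_K = 𝔪_K^e`. -/
theorem stmt_2 (p : ℕ) [Fact p.Prime]
    (F : Type*) [Field F] [Algebra ℚ_[p] F] [FiniteDimensional ℚ_[p] F]
    [Algebra ℤ_[p] F] [IsScalarTower ℤ_[p] ℚ_[p] F]
    (K : Type*) [Field K] [Algebra F K] [FiniteDimensional F K] [IsGalois F K]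
    [Algebra ℚ_[p] K] [IsScalarTower ℚ_[p] F K]
    [Algebra ℤ_[p] K] [IsScalarTower ℤ_[p] ℚ_[p] K]
    (habelian : ∀ σ τ : K ≃ₐ[F] K, σ * τ = τ * σ)
    (ordF : Fˣ → ℤ) (hordF_mul : ∀ x y : Fˣ, ordF (x * y) = ordF x + ordF y)
    (hordF_surj : Function.Surjective ordF)
    (hordF_int : ∀ x : Fˣ, IsIntegral ℤ_[p] ((x : Fˣ) : F) ↔ 0 ≤ ordF x)
    (ordK : Kˣ → ℤ) (hordK_mul : ∀ x y : Kˣ, ordK (x * y) = ordK x + ordK y)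
    (hordK_surj : Function.Surjective ordK)
    (hordK_int : ∀ x : Kˣ, IsIntegral ℤ_[p] ((x : Kˣ) : K) ↔ 0 ≤ ordK x)
    (e : ℕ) (he : ∀ x : Fˣ, ordK (Units.map (algebraMap F K).toMonoidHom x) = e * ordF x) :
    ((Units.map (Algebra.norm F : K →* F)).range.subgroupOf (integerUnits ℤ_[p] F)).index = e ∧
    ((Units.map (Algebra.norm F : K →* F)).range.subgroupOf (integerUnits ℤ_[p] F)).index ≠ 0 ∧
    (¬ p ∣ e →
      IsCyclic (↥(integerUnits ℤ_[p] F) ⧸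
        (Units.map (Algebra.norm F : K →* F)).range.subgroupOf (integerUnits ℤ_[p] F))) := by
  haveI : FiniteDimensional ℚ_[p] K := FiniteDimensional.trans ℚ_[p] F K
  have hU : integerUnits ℤ_[p] F = LCF.uni p F := by
    ext x; exact (LCF.mem_uni_iff_integral p x).symm
  have heI : LCF.eI p F K = e :=
    LCF.eI_eq p ordF hordF_surj ordK hordK_mul hordK_surj hordK_int e he
  have hix : ((Units.map (Algebra.norm F : K →* F)).range.subgroupOf (LCF.uni p F)).index = e := by
    rw [← heI, ← LCF.index_K p habelian]
    change (LCF.nm F K).range.relIndex (LCF.uni p F) = _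
    rw [← Subgroup.inf_relIndex_right]
    congr 1
    ext x
    constructor
    · rintro ⟨⟨y, rfl⟩, hy⟩
      exact ⟨y, (LCF.nm_mem_uni p).1 hy, rfl⟩
    · rintro ⟨y, hy, rfl⟩
      exact ⟨⟨y, rfl⟩, (LCF.nm_mem_uni p).2 hy⟩
  rw [hU]
  refine ⟨hix, ?_, fun hp => LCF.cyclic_quot p hp _ hix⟩
  rw [hix, ← heI]
  exact (LCF.eI_pos p F K).ne'
end

section
/- Let K/F be a finite tamely ramified extension of p-adic fields, i.e. the residue characteristic p does not divide the ramification index e(K/F). Then every principal unit of F is the norm of a unit of K: 1 + 𝔪_F ⊆ N_{K/F}(𝒪_K^×). -/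
open Polynomial IsLocalRing

theorem aux_newton {A : Type*} [CommRing A] [IsLocalRing A] [IsAdicComplete (maximalIdeal A) A]
    (P : A[X]) (h0 : P.eval 0 ∈ maximalIdeal A) (h1 : IsUnit (P.derivative.eval 0)) :
    ∃ t ∈ maximalIdeal A, P.eval t = 0 := by
  have step : ∀ (k : ℕ) (t : A), t ∈ maximalIdeal A → P.eval t ∈ maximalIdeal A ^ (k+1) →
      ∃ t', t' ∈ maximalIdeal A ∧ P.eval t' ∈ maximalIdeal A ^ (k+2) ∧
        t' - t ∈ maximalIdeal A ^ (k+1) := by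
    intro k t ht hP
    have hu : IsUnit (P.derivative.eval t) := by
      have hd : P.derivative.eval t - P.derivative.eval 0 ∈ maximalIdeal A := by
        obtain ⟨c, hc⟩ := P.derivative.sub_dvd_eval_sub t 0
        rw [hc, sub_zero]
        exact Ideal.mul_mem_right _ _ ht
      by_contra hn
      have : P.derivative.eval 0 ∈ maximalIdeal A := by
        have := Ideal.sub_mem _ ((mem_maximalIdeal _).2 hn) hd
        simpa using this
      exact (mem_maximalIdeal _).1 this h1
    obtain ⟨u, hu⟩ := hu
    set h : A := - (P.eval t * (↑u⁻¹ : A)) with hh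
    have hmem : h ∈ maximalIdeal A ^ (k+1) :=
      neg_mem (Ideal.mul_mem_right _ _ hP)
    obtain ⟨c, hc⟩ := P.binomExpansion t h
    refine ⟨t + h, ?_, ?_, by simpa using hmem⟩
    · exact Ideal.add_mem _ ht (Ideal.pow_le_self (by omega) hmem)
    · rw [hc, ← hu]
      have : P.eval t + ↑u * h + c * h^2 = c * h^2 := by
        have : (u : A) * ↑u⁻¹ = 1 := u.mul_inv
        rw [hh]; linear_combination (- P.eval t) * this
      rw [this]
      refine Ideal.mul_mem_left _ _ ?_
      have := Ideal.pow_mem_pow hmem 2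
      rw [← pow_mul] at this
      exact Ideal.pow_le_pow_right (by omega) this
  choose! g hg1 hg2 hg3 using step
  let s : ℕ → A := fun n => Nat.rec 0 (fun k t => g k t) n
  have hs : ∀ n, s n ∈ maximalIdeal A ∧ P.eval (s n) ∈ maximalIdeal A ^ (n+1) := by
    intro n
    induction n with
    | zero => exact ⟨Ideal.zero_mem _, by simpa [s] using h0⟩
    | succ k ih => exact ⟨hg1 k _ ih.1 ih.2, hg2 k _ ih.1 ih.2⟩
  have hd : ∀ n, s (n+1) - s n ∈ maximalIdeal A ^ (n+1) := fun n => hg3 n _ (hs n).1 (hs n).2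
  have hc : ∀ {m n}, m ≤ n → s n - s m ∈ maximalIdeal A ^ m := by
    intro m n hmn
    induction n, hmn using Nat.le_induction with
    | base => simp
    | succ n hn ih =>
      have := Ideal.add_mem _ (Ideal.pow_le_pow_right (by omega : m ≤ n+1) (hd n)) ih
      simpa using this
  obtain ⟨L, hL⟩ := IsPrecomplete.prec (I := maximalIdeal A) inferInstance (f := s) (by
    intro m n hmn
    rw [SModEq.sub_mem]
    simpa using neg_mem (hc hmn))
  have hL' : ∀ n, L - s n ∈ maximalIdeal A ^ n := by
    intro n
    have := hL n
    rw [SModEq.sub_mem] at this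
    simpa using neg_mem this
  refine ⟨L, ?_, ?_⟩
  · have := Ideal.add_mem _ (Ideal.pow_le_self one_ne_zero (hL' 1)) (hs 1).1
    simpa using this
  · refine IsHausdorff.haus (I := maximalIdeal A) inferInstance _ fun n => ?_
    rw [SModEq.sub_mem]
    obtain ⟨c, hc⟩ := P.sub_dvd_eval_sub L (s n)
    have h1 : P.eval L - P.eval (s n) ∈ maximalIdeal A ^ n := by
      rw [hc]; exact Ideal.mul_mem_right _ _ (hL' n)
    have := Ideal.add_mem _ h1 (Ideal.pow_le_pow_right (Nat.le_succ n) (hs n).2)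
    simpa using this

theorem aux_trace {k V : Type*} [Field k] [Finite k] [CommRing V] [Algebra k V]
    [Module.Finite k V] (I : Ideal V) (hI : IsNilpotent I) [hm : I.IsMaximal] (e : ℕ)
    (hcard : Nat.card V = Nat.card (V ⧸ I) ^ e) (he : (e : k) ≠ 0) :
    ∃ z : V, Algebra.trace k V z ≠ 0 := by
  let : Field (V ⧸ I) := Ideal.Quotient.field I
  have : Finite V := Module.finite_of_finite k
  have : Finite (V ⧸ I) := Finite.of_surjective _ (Ideal.Quotient.mk_surjective (I := I))
  have : Algebra.IsSeparable k (V ⧸ I) := inferInstance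
  have : Algebra.FormallyEtale k (V ⧸ I) := Algebra.FormallyEtale.of_isSeparable _ _
  obtain ⟨s, -⟩ := Algebra.FormallySmooth.exists_lift (R := k) I hI (AlgHom.id k (V ⧸ I))
  let := s.toRingHom.toAlgebra
  have : IsScalarTower k (V ⧸ I) V := IsScalarTower.of_algebraMap_eq fun x => (s.commutes x).symm
  have : Module.Finite (V ⧸ I) V := Module.Finite.of_restrictScalars_finite k _ _
  have hdim : Module.finrank (V ⧸ I) V = e := by
    have h := Module.natCard_eq_pow_finrank (K := V ⧸ I) (V := V)
    rw [hcard] at h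
    exact (Nat.pow_right_injective (Finite.one_lt_card) h).symm
  obtain ⟨y, hy⟩ := Algebra.trace_surjective k (V ⧸ I) 1
  refine ⟨algebraMap (V ⧸ I) V y, ?_⟩
  rw [← Algebra.trace_trace (S := V ⧸ I), Algebra.trace_algebraMap, hdim, map_nsmul, hy]
  simpa using he

theorem aux_core {A B : Type*} [CommRing A] [CommRing B] [IsDomain B] [IsLocalRing A]
    [IsDiscreteValuationRing B] [Algebra A B] [Module.Finite A B] [Module.Free A B]
    [IsAdicComplete (maximalIdeal A) A] [Finite (A ⧸ maximalIdeal A)] (e : ℕ)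
    (hmap : (maximalIdeal A).map (algebraMap A B) = maximalIdeal B ^ e)
    (he : (e : A ⧸ maximalIdeal A) ≠ 0) (x : A) (hx : x - 1 ∈ maximalIdeal A) :
    ∃ y : B, IsUnit y ∧ Algebra.norm A y = x := by
  have he0 : e ≠ 0 := by rintro rfl; simp at he
  have hle : (maximalIdeal A).map (algebraMap A B) ≤ maximalIdeal B := by
    rw [hmap]; exact Ideal.pow_le_self he0
  let : Field (A ⧸ maximalIdeal A) := Ideal.Quotient.field _
  have hker : RingHom.ker (Ideal.Quotient.mk ((maximalIdeal A).map (algebraMap A B))) ≤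
    maximalIdeal B := by rwa [Ideal.mk_ker]
  let I : Ideal (B ⧸ (maximalIdeal A).map (algebraMap A B)) :=
    (maximalIdeal B).map (Ideal.Quotient.mk _)
  have hImax : I.IsMaximal :=
    Ideal.IsMaximal.map_of_surjective_of_ker_le Ideal.Quotient.mk_surjective hker
  have hInil : IsNilpotent I := by
    refine ⟨e, ?_⟩
    rw [← Ideal.map_pow, ← hmap, Ideal.map_quotient_self]; rfl
  have : Module.Finite (A ⧸ maximalIdeal A) (B ⧸ (maximalIdeal A).map (algebraMap A B)) :=
    Module.Finite.of_restrictScalars_finite A _ _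
  obtain ⟨z, hz⟩ := aux_trace (k := A ⧸ maximalIdeal A) I hInil e (by
    have h1 : Nat.card (_ ⧸ I) = Nat.card (B ⧸ maximalIdeal B) :=
      Nat.card_congr (DoubleQuot.quotQuotEquivQuotOfLE hle).toEquiv
    rw [h1]
    have h2 := cardQuot_pow_of_prime (P := maximalIdeal B) (i := e)
      (IsDiscreteValuationRing.not_a_field B)
    rw [← hmap] at h2
    exact h2) he
  obtain ⟨z, rfl⟩ := Ideal.Quotient.mk_surjective z
  rw [Algebra.trace_quotient_mk] at hz
  have hz' : IsUnit (Algebra.trace A B z) := by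
    by_contra hn
    exact hz (Ideal.Quotient.eq_zero_iff_mem.2 ((mem_maximalIdeal _).2 hn))
  classical
  let b := Module.Free.chooseBasis A B
  let M := Algebra.leftMulMatrix b z
  obtain ⟨t, ht, hPt⟩ := aux_newton
    ((1 + (X : A[X]) • M.map C).det - C x) (by
      have : (1 + (X : A[X]) • M.map C).det.eval 0 = 1 := by
        rw [Matrix.det_one_add_X_smul]; simp
      rw [eval_sub, this, eval_C]
      simpa using neg_mem hx) (by
      rw [derivative_sub, derivative_C, sub_zero, Matrix.derivative_det_one_add_X_smul]
      simpa [M, ← Algebra.trace_eq_matrix_trace] using hz')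
  have hnorm : Algebra.norm A (1 + t • z) = x := by
    rw [Algebra.norm_eq_matrix_det b, map_add, map_one, map_smul, Matrix.det_one_add_smul]
    rw [Matrix.det_one_add_X_smul] at hPt
    rw [← sub_eq_zero, ← hPt]
    simp [M]
  refine ⟨_, ?_, hnorm⟩
  by_contra hn
  have h1 : t • z ∈ maximalIdeal B := by
    rw [Algebra.smul_def]
    exact Ideal.mul_mem_right _ _ (hle (Ideal.mem_map_of_mem _ ht))
  have := Ideal.sub_mem _ ((mem_maximalIdeal _).2 hn) h1
  rw [add_sub_cancel_right] at this
  exact (Ideal.ne_top_iff_one _).1 (Ideal.IsPrime.ne_top inferInstance) this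

theorem aux_dvr {R L : Type*} [CommRing R] [Field L] [Algebra R L] (ord : Lˣ → ℤ)
    (hmul : ∀ x y : Lˣ, ord (x * y) = ord x + ord y)
    (hsurj : Function.Surjective ord)
    (hint : ∀ x : Lˣ, IsIntegral R (x : L) ↔ 0 ≤ ord x) :
    IsDiscreteValuationRing (integralClosure R L) ∧
    ∃ ϖ : integralClosure R L, Irreducible ϖ ∧
      (∃ u : Lˣ, (ϖ : L) = u ∧ ord u = 1) ∧
      ∀ (b : integralClosure R L) (u : Lˣ) (n : ℕ), (b : L) = u → ord u = n →
        Associated (ϖ ^ n) b := by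
  let φ : Lˣ →* Multiplicative ℤ := MonoidHom.mk' (fun x => Multiplicative.ofAdd (ord x)) (by
    intro a b; rw [hmul]; rfl)
  have hφ : ∀ x, ord x = Multiplicative.toAdd (φ x) := fun x => rfl
  have h1 : ord 1 = 0 := by rw [hφ, map_one]; rfl
  have hinv : ∀ x, ord x⁻¹ = - ord x := fun x => by rw [hφ, map_inv]; rfl
  have hpow : ∀ x (n : ℕ), ord (x ^ n) = n * ord x := fun x n => by
    rw [hφ, map_pow, toAdd_pow, hφ]; simp
  obtain ⟨π, hπ⟩ := hsurj 1
  let ϖ : integralClosure R L := ⟨π, (hint π).2 (by omega)⟩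
  have hass : ∀ (b : integralClosure R L) (u : Lˣ) (n : ℕ), (b : L) = u → ord u = n →
        Associated (ϖ ^ n) b := by
    intro b u n hb hu
    have hw : ord (u * (π ^ n)⁻¹) = 0 := by rw [hmul, hinv, hpow, hπ, hu]; ring
    have hw' : ord (u * (π ^ n)⁻¹)⁻¹ = 0 := by rw [hinv, hw]; rfl
    refine ⟨⟨⟨_, (hint _).2 hw.ge⟩, ⟨_, (hint _).2 hw'.ge⟩, ?_, ?_⟩, ?_⟩
    · exact Subtype.ext (Units.mul_inv (u * (π ^ n)⁻¹))
    · exact Subtype.ext (Units.inv_mul (u * (π ^ n)⁻¹))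
    · apply Subtype.ext
      change (π : L) ^ n * ((u * (π ^ n)⁻¹ : Lˣ) : L) = b
      rw [hb, ← Units.val_pow_eq_pow_val, ← Units.val_mul]
      congr 1
      rw [mul_comm, inv_mul_cancel_right]
  have hex : ∀ b : integralClosure R L, b ≠ 0 → ∃ (u : Lˣ) (n : ℕ), (b : L) = u ∧ ord u = n := by
    intro b hb
    have hb' : (b : L) ≠ 0 := fun h => hb (Subtype.ext h)
    have := (hint (Units.mk0 _ hb')).1 b.2
    exact ⟨Units.mk0 _ hb', (ord (Units.mk0 _ hb')).toNat, rfl, (Int.toNat_of_nonneg this).symm⟩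
  have hirr : Irreducible ϖ := by
    have hne : ϖ ≠ 0 := fun h => π.ne_zero (congrArg Subtype.val h)
    constructor
    · rintro ⟨v, hv⟩
      have h2 : (π : L) * ((v⁻¹ : (integralClosure R L)ˣ) : integralClosure R L) = 1 := by
        have : ϖ * ((v⁻¹ : (integralClosure R L)ˣ) : integralClosure R L) = 1 := by
          rw [← hv]; exact v.mul_inv
        exact congrArg Subtype.val this
      have h3 : ((π⁻¹ : Lˣ) : L) = ((v⁻¹ : (integralClosure R L)ˣ) : integralClosure R L) := by
        rw [Units.val_inv_eq_inv_val]; exact inv_eq_of_mul_eq_one_right h2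
      have h4 := (hint π⁻¹).1 (by rw [h3]; exact Subtype.property _)
      rw [hinv] at h4; omega
    · intro a b hab
      have ha : a ≠ 0 := by rintro rfl; simp [hne] at hab
      have hb : b ≠ 0 := by rintro rfl; simp [hne] at hab
      obtain ⟨u, n, hu, hn⟩ := hex a ha
      obtain ⟨v, m, hv, hm⟩ := hex b hb
      have : π = u * v := Units.ext (by
        rw [Units.val_mul, ← hu, ← hv]; exact congrArg Subtype.val hab)
      have h5 := hmul u v
      rw [← this, hπ, hn, hm] at h5
      rcases (by omega : n = 0 ∨ m = 0) with rfl | rfl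
      · left
        have := hass a u 0 hu hn
        rw [pow_zero] at this
        exact associated_one_iff_isUnit.1 this.symm
      · right
        have := hass b v 0 hv hm
        rw [pow_zero] at this
        exact associated_one_iff_isUnit.1 this.symm
  refine ⟨IsDiscreteValuationRing.ofHasUnitMulPowIrreducibleFactorization ⟨ϖ, hirr, ?_⟩,
    ϖ, hirr, ⟨π, rfl, hπ⟩, hass⟩
  intro b hb
  obtain ⟨u, n, hu, hn⟩ := hex b hb
  exact ⟨n, hass b u n hu hn⟩

theorem aux_precomplete {R M : Type*} [CommRing R] (I : Ideal R) [IsPrecomplete I R]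
    [AddCommGroup M] [Module R M] [Module.Finite R M] : IsPrecomplete I M := by
  rw [← AdicCompletion.of_surjective_iff]
  intro y
  obtain ⟨w, rfl⟩ := AdicCompletion.ofTensorProduct_surjective_of_finite I M y
  induction w using TensorProduct.induction_on with
  | zero => exact ⟨0, by simp⟩
  | add a b ha hb =>
    obtain ⟨a', ha⟩ := ha
    obtain ⟨b', hb⟩ := hb
    exact ⟨a' + b', by rw [map_add, map_add, ha, hb]⟩
  | tmul r x =>
    obtain ⟨s, rfl⟩ := AdicCompletion.of_surjective I R r
    refine ⟨s • x, ?_⟩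
    rw [AdicCompletion.ofTensorProduct_tmul]
    ext n
    rfl

theorem aux_complete {R A : Type*} [CommRing R] (I : Ideal R) [IsPrecomplete I R]
    [CommRing A] [IsNoetherianRing A] [IsLocalRing A] [Algebra R A] [Module.Finite R A]
    (hI : I.map (algebraMap R A) ≤ maximalIdeal A) (k : ℕ) (hk : k ≠ 0)
    (hk' : maximalIdeal A ^ k ≤ I.map (algebraMap R A)) :
    IsAdicComplete (maximalIdeal A) A := by
  have h1 : IsPrecomplete I A := aux_precomplete I
  have h2 : IsPrecomplete (I.map (algebraMap R A)) A :=
    (IsPrecomplete.map_algebraMap_iff (S := A)).2 h1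
  have h3 : IsPrecomplete (maximalIdeal A) A := by
    refine ⟨fun f hf => ?_⟩
    have hle : ∀ n, n ≤ k * n := fun n => Nat.le_mul_of_pos_left _ (Nat.pos_of_ne_zero hk)
    obtain ⟨L, hL⟩ := h2.prec (f := fun n => f (k * n)) (by
      intro m n hmn
      have := hf (Nat.mul_le_mul_left k hmn)
      rw [SModEq.sub_mem] at this ⊢
      simp only [smul_eq_mul, Ideal.mul_top] at this ⊢
      rw [pow_mul] at this
      exact Ideal.pow_right_mono hk' m this)
    refine ⟨L, fun n => ?_⟩
    refine (hf (hle n)).trans ?_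
    have := hL n
    rw [SModEq.sub_mem] at this ⊢
    simp only [smul_eq_mul, Ideal.mul_top] at this ⊢
    exact Ideal.pow_right_mono hI n this
  exact { toIsHausdorff := inferInstance, toIsPrecomplete := h3 }

/-- Let `K/F` be a finite tamely ramified extension of `p`-adic fields, i.e.
`p ∤ e(K/F)`. Then every principal unit of `F` is the norm of a unit of `K`:
`1 + 𝔪_F ⊆ N_{K/F}(𝒪_K^×)`. Here `𝒪_F` is the integral closure of `ℤ_p` in `F` (a local
ring), `𝔪_F` its maximal ideal, and the ramification index `e` is characterized via the
normalized valuations by `ord_K(x) = e·ord_F(x)` for `x ∈ F^×`. -/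
theorem stmt_5 (p : ℕ) [Fact p.Prime]
    (F : Type*) [Field F] [Algebra ℚ_[p] F] [FiniteDimensional ℚ_[p] F]
    [Algebra ℤ_[p] F] [IsScalarTower ℤ_[p] ℚ_[p] F]
    [IsLocalRing ↥(integralClosure ℤ_[p] F)]
    (K : Type*) [Field K] [Algebra F K] [FiniteDimensional F K]
    [Algebra ℚ_[p] K] [IsScalarTower ℚ_[p] F K]
    [Algebra ℤ_[p] K] [IsScalarTower ℤ_[p] ℚ_[p] K]
    (ordF : Fˣ → ℤ) (hordF_mul : ∀ x y : Fˣ, ordF (x * y) = ordF x + ordF y)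
    (hordF_surj : Function.Surjective ordF)
    (hordF_int : ∀ x : Fˣ, IsIntegral ℤ_[p] ((x : Fˣ) : F) ↔ 0 ≤ ordF x)
    (ordK : Kˣ → ℤ) (hordK_mul : ∀ x y : Kˣ, ordK (x * y) = ordK x + ordK y)
    (hordK_surj : Function.Surjective ordK)
    (hordK_int : ∀ x : Kˣ, IsIntegral ℤ_[p] ((x : Kˣ) : K) ↔ 0 ≤ ordK x)
    (e : ℕ) (he : ∀ x : Fˣ, ordK (Units.map (algebraMap F K).toMonoidHom x) = e * ordF x)
    (htame : ¬ p ∣ e) :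
    ∀ x : Fˣ, (∃ m ∈ IsLocalRing.maximalIdeal ↥(integralClosure ℤ_[p] F),
        ((x : Fˣ) : F) = 1 + (m : F)) →
      x ∈ Subgroup.map (Units.map (Algebra.norm F : K →* F)) (integerUnits ℤ_[p] K) := by
  rintro x ⟨m, hm, hxm⟩
  obtain ⟨hA, a, haI, ⟨ua, hua, hua1⟩, hass⟩ := aux_dvr ordF hordF_mul hordF_surj hordF_int
  obtain ⟨hB, b, hbI, ⟨ub, hub, hub1⟩, hassK⟩ := aux_dvr ordK hordK_mul hordK_surj hordK_int
  have hT : IsScalarTower ℤ_[p] F K := IsScalarTower.of_algebraMap_eq fun r => by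
    rw [IsScalarTower.algebraMap_apply ℤ_[p] ℚ_[p] K, IsScalarTower.algebraMap_apply ℚ_[p] F K,
      ← IsScalarTower.algebraMap_apply ℤ_[p] ℚ_[p] F]
  have hfd : FiniteDimensional ℚ_[p] K := FiniteDimensional.trans ℚ_[p] F K
  have hint : ∀ y : integralClosure ℤ_[p] F, IsIntegral ℤ_[p] (algebraMap F K y) :=
    fun y => y.2.algebraMap
  let alg : Algebra (integralClosure ℤ_[p] F) (integralClosure ℤ_[p] K) :=
    (((algebraMap F K).comp (algebraMap (integralClosure ℤ_[p] F) F)).codRestrict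
      (integralClosure ℤ_[p] K) hint).toAlgebra
  have t1 : IsScalarTower (integralClosure ℤ_[p] F) (integralClosure ℤ_[p] K) K :=
    IsScalarTower.of_algebraMap_eq fun y => rfl
  have t2 : IsScalarTower ℤ_[p] (integralClosure ℤ_[p] F) (integralClosure ℤ_[p] K) :=
    IsScalarTower.of_algebraMap_eq fun y => Subtype.ext
      (IsScalarTower.algebraMap_apply ℤ_[p] F K y)
  have f1 : Module.Finite ℤ_[p] (integralClosure ℤ_[p] F) := IsIntegralClosure.finite ℤ_[p] ℚ_[p] F _
  have f2 : Module.Finite ℤ_[p] (integralClosure ℤ_[p] K) := IsIntegralClosure.finite ℤ_[p] ℚ_[p] K _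
  have f3 : Module.Finite (integralClosure ℤ_[p] F) (integralClosure ℤ_[p] K) :=
    Module.Finite.of_restrictScalars_finite ℤ_[p] _ _
  have fr1 : IsFractionRing (integralClosure ℤ_[p] F) F :=
    integralClosure.isFractionRing_of_finite_extension ℚ_[p] F
  have inj : Function.Injective
      (algebraMap (integralClosure ℤ_[p] F) (integralClosure ℤ_[p] K)) := by
    intro y z h
    exact Subtype.ext ((algebraMap F K).injective (congrArg Subtype.val h))
  have tf : Module.IsTorsionFree (integralClosure ℤ_[p] F) (integralClosure ℤ_[p] K) := by
    have : FaithfulSMul (integralClosure ℤ_[p] F) (integralClosure ℤ_[p] K) :=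
      (faithfulSMul_iff_algebraMap_injective _ _).2 inj
    infer_instance
  have fr : Module.Free (integralClosure ℤ_[p] F) (integralClosure ℤ_[p] K) :=
    inferInstance
  have ic : IsIntegralClosure (integralClosure ℤ_[p] K) (integralClosure ℤ_[p] F) K :=
    IsIntegralClosure.tower_top (R := ℤ_[p])
  have loc := IsIntegralClosure.isLocalization (integralClosure ℤ_[p] F) F K
    (integralClosure ℤ_[p] K)
  have inj0 : Function.Injective (algebraMap ℤ_[p] (integralClosure ℤ_[p] F)) := by
    have : Function.Injective (algebraMap ℤ_[p] F) := by
      rw [IsScalarTower.algebraMap_eq ℤ_[p] ℚ_[p] F]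
      exact (algebraMap ℚ_[p] F).injective.comp (IsFractionRing.injective _ _)
    intro y z h
    exact this (congrArg Subtype.val h)
  have lh : IsLocalHom (algebraMap ℤ_[p] (integralClosure ℤ_[p] F)) :=
    have : FaithfulSMul ℤ_[p] (integralClosure ℤ_[p] F) :=
      (faithfulSMul_iff_algebraMap_injective _ _).2 inj0
    Algebra.IsIntegral.isLocalHom _ _
  have hle : (maximalIdeal ℤ_[p]).map (algebraMap ℤ_[p] (integralClosure ℤ_[p] F)) ≤
      maximalIdeal (integralClosure ℤ_[p] F) :=
    ((local_hom_TFAE (algebraMap ℤ_[p] (integralClosure ℤ_[p] F))).out 0 2).1 lh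
  have hres : Finite (integralClosure ℤ_[p] F ⧸ maximalIdeal (integralClosure ℤ_[p] F)) := by
    have : Finite (ResidueField ℤ_[p]) := Finite.of_equiv _ (PadicInt.residueField (p := p)).symm.toEquiv
    exact ResidueField.finite_of_finite (R := ℤ_[p]) (S := integralClosure ℤ_[p] F) this
  have hma : maximalIdeal (integralClosure ℤ_[p] F) = Ideal.span {a} := haI.maximalIdeal_eq
  have hmb : maximalIdeal (integralClosure ℤ_[p] K) = Ideal.span {b} := hbI.maximalIdeal_eq
  have hp0 : ((p : ℕ) : integralClosure ℤ_[p] F) ≠ 0 := by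
    rw [← map_natCast (algebraMap ℤ_[p] (integralClosure ℤ_[p] F)), Ne,
      map_eq_zero_iff _ inj0]
    exact_mod_cast (Fact.out : p.Prime).ne_zero
  have hpm : ((p : ℕ) : integralClosure ℤ_[p] F) ∈
      (maximalIdeal ℤ_[p]).map (algebraMap ℤ_[p] (integralClosure ℤ_[p] F)) := by
    rw [← map_natCast (algebraMap ℤ_[p] (integralClosure ℤ_[p] F))]
    refine Ideal.mem_map_of_mem _ ?_
    rw [PadicInt.maximalIdeal_eq_span_p]
    exact Ideal.mem_span_singleton_self _
  have hcomp : IsAdicComplete (maximalIdeal (integralClosure ℤ_[p] F))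
      (integralClosure ℤ_[p] F) := by
    obtain ⟨k, hk⟩ := IsDiscreteValuationRing.ideal_eq_span_pow_irreducible
      (s := (maximalIdeal ℤ_[p]).map (algebraMap ℤ_[p] (integralClosure ℤ_[p] F)))
      (fun h => hp0 (by rw [h] at hpm; simpa using hpm)) haI
    rw [← Ideal.span_singleton_pow, ← hma] at hk
    refine aux_complete (maximalIdeal ℤ_[p]) hle k ?_ hk.ge
    rintro rfl
    rw [hk, pow_zero, Ideal.one_eq_top] at hle
    exact Ideal.IsPrime.ne_top inferInstance (top_le_iff.1 hle)
  have hmap : (maximalIdeal (integralClosure ℤ_[p] F)).map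
      (algebraMap _ (integralClosure ℤ_[p] K)) = maximalIdeal (integralClosure ℤ_[p] K) ^ e := by
    rw [hma, hmb, Ideal.map_span, Set.image_singleton, Ideal.span_singleton_pow,
      Ideal.span_singleton_eq_span_singleton]
    refine (hassK _ (Units.map (algebraMap F K).toMonoidHom ua) e ?_ ?_).symm
    · change algebraMap F K a = algebraMap F K ua
      rw [hua]
    · rw [he, hua1, mul_one]
  have hech : (e : integralClosure ℤ_[p] F ⧸ maximalIdeal (integralClosure ℤ_[p] F)) ≠ 0 := by
    intro h
    have h1 : ((p : ℕ) : integralClosure ℤ_[p] F ⧸ maximalIdeal (integralClosure ℤ_[p] F)) = 0 := by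
      rw [← map_natCast (Ideal.Quotient.mk (maximalIdeal (integralClosure ℤ_[p] F)))]
      exact Ideal.Quotient.eq_zero_iff_mem.2 (hle hpm)
    have hc : IsCoprime (p : ℤ) (e : ℤ) := Nat.isCoprime_iff_coprime.2
      ((Nat.Prime.coprime_iff_not_dvd Fact.out).2 htame)
    obtain ⟨c, d, hcd⟩ := hc
    have := congrArg (Int.cast :
      ℤ → integralClosure ℤ_[p] F ⧸ maximalIdeal (integralClosure ℤ_[p] F)) hcd
    push_cast at this
    rw [h, h1, mul_zero, mul_zero, add_zero] at this
    have h2 : (1 : integralClosure ℤ_[p] F) ∈ maximalIdeal (integralClosure ℤ_[p] F) := by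
      rw [← Ideal.Quotient.eq_zero_iff_mem, map_one]
      exact this.symm
    exact (Ideal.ne_top_iff_one _).1 (Ideal.IsPrime.ne_top inferInstance) h2
  obtain ⟨y, ⟨v, rfl⟩, hy⟩ := aux_core e hmap hech (1 + m) (by simpa using hm)
  have hn := Algebra.norm_localization (Rₘ := F) (Sₘ := K) (integralClosure ℤ_[p] F)
    (nonZeroDivisors (integralClosure ℤ_[p] F)) (v : integralClosure ℤ_[p] K)
  refine ⟨Units.map (algebraMap (integralClosure ℤ_[p] K) K).toMonoidHom v, ⟨?_, ?_⟩, ?_⟩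
  · exact (v : integralClosure ℤ_[p] K).2
  · exact ((v⁻¹ : (integralClosure ℤ_[p] K)ˣ) : integralClosure ℤ_[p] K).2
  · apply Units.ext
    rw [hxm]
    refine hn.trans ?_
    rw [hy]
    rfl
end

section
/- Let K = ℚ(√7). Then 16 is an 8th power in the completion K_v for every place v of K: for every nonzero prime ideal 𝔭 of 𝒪_K = ℤ[√7], 16 is an 8th power in the 𝔭-adic completion K_𝔭, and 16 is an 8th power in ℝ (the completion at each of the two real places). Nevertheless, 16 is not an 8th power in K itself. -/
open IsDedekindDomain NumberField

lemma hensel_quad {F : Type*} [NormedField F] [CompleteSpace F] [IsUltrametricDist F]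
    (b c : F) (hb : ‖b‖ = 1) (hc : ‖c‖ < 1) : ∃ x : F, x ^ 2 + b * x + c = 0 := by
  have hb0 : b ≠ 0 := by
    rintro rfl
    simp at hb
  let f : F → F := fun x => -(x ^ 2 + c) / b
  let s : Set F := Metric.closedBall 0 ‖c‖
  have hs : IsComplete s := Metric.isClosed_closedBall.isComplete
  have hmaps : Set.MapsTo f s s := by
    intro x hx
    have hx' : ‖x‖ ≤ ‖c‖ := by simpa [s] using hx
    have h1 : ‖x ^ 2‖ ≤ ‖c‖ := by
      rw [norm_pow]
      nlinarith [norm_nonneg x, norm_nonneg c]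
    have h2 : ‖x ^ 2 + c‖ ≤ ‖c‖ :=
      (IsUltrametricDist.norm_add_le_max _ _).trans (max_le h1 le_rfl)
    simp only [s, f, Metric.mem_closedBall, dist_zero_right, norm_div, norm_neg, hb, div_one]
    exact h2
  have hcontr : ContractingWith ‖c‖₊ (hmaps.restrict f s s) := by
    refine ⟨by exact_mod_cast hc, ?_⟩
    refine LipschitzWith.of_dist_le_mul ?_
    rintro ⟨x, hx⟩ ⟨y, hy⟩
    have hx' : ‖x‖ ≤ ‖c‖ := by simpa [s] using hx
    have hy' : ‖y‖ ≤ ‖c‖ := by simpa [s] using hy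
    have h2 : ‖x + y‖ ≤ ‖c‖ :=
      (IsUltrametricDist.norm_add_le_max _ _).trans (max_le hx' hy')
    have h3 : f x - f y = -((x + y) * (x - y)) / b := by
      simp only [f]; field_simp; ring
    simp only [Subtype.dist_eq, Set.MapsTo.val_restrict_apply, dist_eq_norm]
    rw [h3, norm_div, norm_neg, hb, div_one, norm_mul]
    exact mul_le_mul_of_nonneg_right h2 (norm_nonneg _)
  obtain ⟨x, -, hx, -⟩ := hcontr.exists_fixedPoint' hs hmaps (x := 0) (by simp [s])
    (edist_ne_top _ _)
  refine ⟨x, ?_⟩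
  have : -(x ^ 2 + c) / b = x := hx
  rw [div_eq_iff hb0] at this
  linear_combination -this

lemma pow8 {F : Type*} [Field F] (h : IsSquare (-1 : F) ∨ IsSquare (2 : F) ∨ IsSquare (-2 : F)) :
    ∃ y : F, y ^ 8 = 16 := by
  rcases h with ⟨i, h⟩ | ⟨i, h⟩ | ⟨i, h⟩
  · refine ⟨i + 1, ?_⟩
    have : (i + 1) ^ 2 = 2 * i := by linear_combination -h
    calc (i + 1) ^ 8 = ((i + 1) ^ 2) ^ 4 := by ring
      _ = 16 * (i * i) ^ 2 := by rw [this]; ring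
      _ = 16 := by rw [← h]; ring
  · refine ⟨i, ?_⟩
    calc i ^ 8 = (i * i) ^ 4 := by ring
      _ = 16 := by rw [← h]; norm_num
  · refine ⟨i, ?_⟩
    calc i ^ 8 = (i * i) ^ 4 := by ring
      _ = 16 := by rw [← h]; norm_num

lemma pow8_conv {F : Type*} [Field F] (y : F) (hy : y ^ 8 = 16) :
    IsSquare (-1 : F) ∨ IsSquare (2 : F) ∨ IsSquare (-2 : F) := by
  have : (y ^ 2 - 2) * ((y ^ 2 + 2) * (((y + 1) ^ 2 + 1) * ((y - 1) ^ 2 + 1))) = 0 := by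
    linear_combination hy
  rcases mul_eq_zero.1 this with h | h
  · exact Or.inr (Or.inl ⟨y, by linear_combination -h⟩)
  rcases mul_eq_zero.1 h with h | h
  · exact Or.inr (Or.inr ⟨y, by linear_combination -h⟩)
  rcases mul_eq_zero.1 h with h | h
  · exact Or.inl ⟨y + 1, by linear_combination -h⟩
  · exact Or.inl ⟨y - 1, by linear_combination -h⟩

lemma finite_sq {k : Type*} [Field k] [Finite k] (h2 : (2 : k) ≠ 0) :
    IsSquare (-1 : k) ∨ IsSquare (2 : k) ∨ IsSquare (-2 : k) := by
  classical
  haveI := Fintype.ofFinite k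
  by_contra! h
  obtain ⟨ha, hb, hc⟩ := h
  have hchar : ringChar k ≠ 2 := by
    intro h
    apply h2
    have := ringChar.Nat.cast_ringChar (R := k)
    rw [h] at this
    exact_mod_cast this
  have h1 := quadraticChar_neg_one_iff_not_isSquare.2 ha
  have h2' := quadraticChar_neg_one_iff_not_isSquare.2 hb
  apply hc
  rw [← quadraticChar_one_iff_isSquare (neg_ne_zero.2 h2), ← neg_one_mul, map_mul, h1, h2']
  norm_num

lemma rat_nonsq (n : ℕ) (hn : ¬ IsSquare n) (q : ℚ) : q ^ 2 ≠ n := by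
  intro h
  apply hn
  rw [← Rat.isSquare_natCast_iff]
  exact ⟨q, by rw [← h]; ring⟩

lemma ns (n m : ℕ) (h1 : m * m < n) (h2 : n < (m + 1) * (m + 1)) : ¬ IsSquare n := by
  rintro ⟨r, rfl⟩
  have := Nat.mul_self_lt_mul_self_iff.1 h1
  have := Nat.mul_self_lt_mul_self_iff.1 h2
  omega

lemma not_sq (K : Type*) [Field K] [CharZero K] (θ : K) (hθ : θ ^ 2 = 7)
    (hgen : Algebra.adjoin ℚ {θ} = ⊤) (d : ℚ) (hd : d = -1 ∨ d = 2 ∨ d = -2) :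
    ¬ IsSquare (algebraMap ℚ K d) := by
  rintro ⟨y, hy⟩
  have key : ∀ y : K, ∃ a b : ℚ, y = a + b * θ := by
    intro y
    have hy : y ∈ Algebra.adjoin ℚ {θ} := by rw [hgen]; trivial
    induction hy using Algebra.adjoin_induction with
    | mem x hx => exact ⟨0, 1, by simp_all⟩
    | algebraMap r => exact ⟨r, 0, by simp⟩
    | add x y _ _ hx hy =>
      obtain ⟨a, b, rfl⟩ := hx
      obtain ⟨c, e, rfl⟩ := hy
      exact ⟨a + c, b + e, by push_cast; ring⟩
    | mul x y _ _ hx hy =>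
      obtain ⟨a, b, rfl⟩ := hx
      obtain ⟨c, e, rfl⟩ := hy
      exact ⟨a * c + 7 * b * e, a * e + b * c, by push_cast; linear_combination b * e * hθ⟩
  obtain ⟨a, b, rfl⟩ := key y
  have hy' : ((d - a ^ 2 - 7 * b ^ 2 : ℚ) : K) = ((2 * a * b : ℚ) : K) * θ := by
    have : algebraMap ℚ K d = (d : K) := by simp
    rw [this] at hy
    push_cast
    linear_combination hy + b ^ 2 * hθ
  have hab : a * b = 0 := by
    by_contra hab
    have h2 : ((d - a ^ 2 - 7 * b ^ 2) ^ 2 : ℚ) = (2 * a * b) ^ 2 * 7 := by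
      have : (((d - a ^ 2 - 7 * b ^ 2) ^ 2 : ℚ) : K) = (((2 * a * b) ^ 2 * 7 : ℚ) : K) := by
        rw [Rat.cast_pow, hy', mul_pow, hθ]; push_cast; ring
      exact_mod_cast this
    apply rat_nonsq 7 (ns 7 2 (by norm_num) (by norm_num)) ((d - a ^ 2 - 7 * b ^ 2) / (2 * a * b))
    have : (2 * a * b) ≠ 0 := by
      rw [mul_assoc]; exact mul_ne_zero two_ne_zero hab
    rw [div_pow, h2, mul_comm, mul_div_assoc, div_self (pow_ne_zero _ this)]
    norm_num
  have hz : d = a ^ 2 + 7 * b ^ 2 := by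
    have : ((d - a ^ 2 - 7 * b ^ 2 : ℚ) : K) = 0 := by
      rw [hy', mul_assoc, hab]; simp
    have : (d - a ^ 2 - 7 * b ^ 2 : ℚ) = 0 := by exact_mod_cast this
    linarith
  rcases hd with rfl | rfl | rfl
  · nlinarith [sq_nonneg a, sq_nonneg b]
  · rcases mul_eq_zero.1 hab with rfl | rfl
    · apply rat_nonsq 14 (ns 14 3 (by norm_num) (by norm_num)) (7 * b)
      push_cast
      linarith
    · apply rat_nonsq 2 (ns 2 1 (by norm_num) (by norm_num)) a
      push_cast
      linarith
  · nlinarith [sq_nonneg a, sq_nonneg b]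

lemma loc (K : Type*) [Field K] [NumberField K] (θ : K) (hθ : θ ^ 2 = 7)
    (v : HeightOneSpectrum (𝓞 K)) : ∃ y : v.adicCompletion K, y ^ 8 = 16 := by
  haveI : IsUltrametricDist (v.adicCompletion K) := inferInstance
  apply pow8
  let φ : K →+* v.adicCompletion K := FinitePlace.embedding v
  by_cases h2 : (2 : 𝓞 K) ∈ v.asIdeal
  · left
    have hn : ‖(2 : v.adicCompletion K)‖ < 1 := by
      have := (FinitePlace.norm_lt_one_iff_mem (K := K) v 2).2 h2
      have e : FinitePlace.embedding v (algebraMap (𝓞 K) K 2) = 2 :=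
        map_ofNat ((FinitePlace.embedding v).comp (algebraMap (𝓞 K) K)) 2
      rwa [e] at this
    obtain ⟨x, hx⟩ := hensel_quad (-1 : v.adicCompletion K) 2 (by simp) hn
    have hs : (2 * x - 1) ^ 2 = -7 := by linear_combination 4 * hx
    have ht : (φ θ) ^ 2 = 7 := by rw [← map_pow, hθ]; exact map_ofNat φ 7
    have h7 : (7 : v.adicCompletion K) ≠ 0 := by
      have e : φ 7 = 7 := map_ofNat φ 7
      rw [← e]
      simp
    refine ⟨(2 * x - 1) * φ θ / 7, ?_⟩
    field_simp
    linear_combination (-(φ θ) ^ 2) * hs + 7 * ht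
  · have e2 : Ideal.Quotient.mk v.asIdeal 2 = 2 := map_ofNat _ 2
    have f2 : φ (algebraMap (𝓞 K) K 2) = 2 := map_ofNat (φ.comp (algebraMap (𝓞 K) K)) 2
    letI := Ideal.Quotient.field v.asIdeal
    haveI : Finite (𝓞 K ⧸ v.asIdeal) := Ideal.finiteQuotientOfFreeOfNeBot _ v.ne_bot
    have h2' : (2 : 𝓞 K ⧸ v.asIdeal) ≠ 0 := by
      intro h
      apply h2
      rw [← Ideal.Quotient.eq_zero_iff_mem]
      exact e2.trans h
    have lift : ∀ d : 𝓞 K, d ∉ v.asIdeal → IsSquare (Ideal.Quotient.mk v.asIdeal d) →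
        IsSquare (φ (algebraMap _ K d)) := by
      rintro d hd ⟨r, hr⟩
      obtain ⟨a, rfl⟩ := Ideal.Quotient.mk_surjective r
      have hmem : a ^ 2 - d ∈ v.asIdeal := by
        rw [← Ideal.Quotient.eq_zero_iff_mem, map_sub, map_pow, hr]; ring
      have ha : a ∉ v.asIdeal := by
        intro ha
        apply hd
        have := v.asIdeal.sub_mem (v.asIdeal.mul_mem_left a ha) hmem
        convert this using 1
        ring
      have h2a : 2 * a ∉ v.asIdeal := fun h => (v.isPrime.mem_or_mem h).elim h2 ha
      obtain ⟨x, hx⟩ := hensel_quad (φ (algebraMap _ K (2 * a))) (φ (algebraMap _ K (a ^ 2 - d)))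
        ((FinitePlace.norm_eq_one_iff_notMem (K := K) v _).2 h2a)
        ((FinitePlace.norm_lt_one_iff_mem (K := K) v _).2 hmem)
      refine ⟨φ (algebraMap _ K a) + x, ?_⟩
      simp only [map_mul, map_sub, map_pow, map_ofNat] at hx
      linear_combination -hx
    have h1 : (-1 : 𝓞 K) ∉ v.asIdeal := fun h =>
      v.isPrime.ne_top ((Ideal.eq_top_iff_one _).2 (by simpa using v.asIdeal.neg_mem h))
    have h3 : (-2 : 𝓞 K) ∉ v.asIdeal := fun h => h2 (by simpa using v.asIdeal.neg_mem h)
    rcases finite_sq h2' with h | h | h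
    · left
      have := lift (-1) h1 (by rw [map_neg, map_one]; exact h)
      rwa [map_neg, map_neg, map_one, map_one] at this
    · right; left
      have := lift 2 h2 (by rw [e2]; exact h)
      rwa [f2] at this
    · right; right
      have := lift (-2) h3 (by rw [map_neg, e2]; exact h)
      rwa [map_neg, map_neg, f2] at this

/-- Let `K = ℚ(√7)` (a field over `ℚ` generated by `θ` with `θ² = 7`). Then
`16` is an 8th power in the completion of `K` at every place: in the `𝔭`-adic completion
`K_𝔭` for every nonzero prime ideal `𝔭` of `𝒪_K`, and in `ℝ` (the completion at each of the
two real places). Nevertheless, `16` is not an 8th power in `K` itself. -/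
theorem stmt_7 (K : Type*) [Field K] [NumberField K] (θ : K) (hθ : θ ^ 2 = 7)
    (hgen : Algebra.adjoin ℚ {θ} = ⊤) :
    (∀ v : HeightOneSpectrum (𝓞 K), ∃ y : v.adicCompletion K, y ^ 8 = 16) ∧
    (∃ y : ℝ, y ^ 8 = 16) ∧
    ¬ ∃ y : K, y ^ 8 = 16 := by
  refine ⟨loc K θ hθ, pow8 (Or.inr (Or.inl ⟨√2, by simp⟩)), ?_⟩
  rintro ⟨y, hy⟩
  rcases pow8_conv y hy with h | h | h
  · exact not_sq K θ hθ hgen (-1) (by simp) (by simpa using h)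
  · exact not_sq K θ hθ hgen 2 (by simp) (by simpa using h)
  · exact not_sq K θ hθ hgen (-2) (by simp) (by simpa using h)
end
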